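/- Let d ≥ 3, and adopt the shell setup: Q_{4N} ⊆ D ⊆ Z^d, 16 ≤ n < n+m ≤ N with m ≤ n/8, L the loop erasure of simple random walk from 0 stopped at its first exit from D, α the initial segment of L up to its first hit of ∂_i Q_n with endpoint x₀, and A the box Q(x₀ + (m/2)e₁, m/4) (suitably rotated if x₀ is not on the face H_n). Let X̃ be simple random walk started at x₀ conditioned on the event { τ_D < T⁺_α }, and let G̃_D denote its Green function in D. Then there is a constant c = c(d) > 0 such that G̃_D(x₀, z) ≥ c m^{2-d} for every z ∈ A. -/

import Mathlib

open MeasureTheory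
open scoped ENNReal Classical

namespace USFPaper

/-- Vertices of the nearest-neighbour integer lattice `ℤ^d`. -/
abbrev V (d : ℕ) := Fin d → ℤ

variable {d : ℕ}

/-- Nearest-neighbour adjacency in `ℤ^d`. -/
def adj (x y : V d) : Prop := (∑ i, |x i - y i|) = 1

/-- The cube `Q(x,r) = { y : ‖x - y‖_∞ ≤ r }`. -/
def cube (x : V d) (r : ℕ) : Set (V d) := { y | ∀ i, |y i - x i| ≤ (r : ℤ) }

/-- Inner boundary `∂ᵢA` of a set `A`. -/
def innerBdry (A : Set (V d)) : Set (V d) := { x | x ∈ A ∧ ∃ y, adj x y ∧ y ∉ A }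

/-- Euclidean distance on `ℤ^d`. -/
noncomputable def eudist (x y : V d) : ℝ := Real.sqrt (∑ i, ((x i : ℝ) - (y i : ℝ)) ^ 2)

/-- The `k`-th coordinate unit vector. -/
def unitVec (k : ℕ) : V d := fun i => if (i : ℕ) = k then 1 else 0

/-- `μ` is the law of simple random walk on `ℤ^d` started at `x`, as a probability
measure on path space: every nearest-neighbour cylinder of length `n` starting at `x`
has probability `(2d)⁻ⁿ`. -/
def IsSRWLaw (μ : Measure (ℕ → V d)) (x : V d) : Prop :=
  IsProbabilityMeasure μ ∧
  ∀ (n : ℕ) (γ : ℕ → V d), γ 0 = x → (∀ i < n, adj (γ i) (γ (i + 1))) →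
    μ { ω | ∀ i ≤ n, ω i = γ i } = (2 * (d : ℝ≥0∞))⁻¹ ^ n

/-- First exit time `τ_A` from `A`, valued in `ℕ∞` (`⊤` if the path never leaves `A`). -/
noncomputable def exitTimeE (A : Set (V d)) (ω : ℕ → V d) : ENat :=
  if h : ∃ j, ω j ∉ A then (Nat.find h : ENat) else ⊤

/-- First hitting time `T_A` of `A`, valued in `ℕ∞`. -/
noncomputable def hitTimeE (A : Set (V d)) (ω : ℕ → V d) : ENat :=
  if h : ∃ j, ω j ∈ A then (Nat.find h : ENat) else ⊤

/-- First positive hitting time `T⁺_A` of `A`, valued in `ℕ∞`. -/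
noncomputable def hitTimePosE (A : Set (V d)) (ω : ℕ → V d) : ENat :=
  if h : ∃ j, 1 ≤ j ∧ ω j ∈ A then (Nat.find h : ENat) else ⊤

/-- First exit time from `A` as a natural number (junk value `0` if the path never exits). -/
noncomputable def exitTime (A : Set (V d)) (ω : ℕ → V d) : ℕ := (exitTimeE A ω).toNat

/-- Index of the first hit of `A` (junk value `0` if `A` is never hit). -/
noncomputable def hitIdx (A : Set (V d)) (γ : ℕ → V d) : ℕ := (hitTimeE A γ).toNat

/-- First index `≥ t` at which the path lies in `A` (junk value `t`). -/
noncomputable def hitIdxFrom (A : Set (V d)) (t : ℕ) (γ : ℕ → V d) : ℕ :=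
  if h : ∃ j, t ≤ j ∧ γ j ∈ A then Nat.find h else t

/-- The path frozen at its first exit from `D`. -/
noncomputable def stopAt (D : Set (V d)) (ω : ℕ → V d) : ℕ → V d :=
  fun j => if (j : ENat) ≤ exitTimeE D ω then ω j else ω (exitTime D ω)

/-- Time of the last visit of the path to the point `ω t`, at or after time `t`
(junk value if there are infinitely many such visits). -/
noncomputable def lastVisit (ω : ℕ → V d) (t : ℕ) : ℕ := sSup { j | t ≤ j ∧ ω j = ω t }

/-- The times of the chronological loop erasure (last-exit decomposition). -/
noncomputable def leTime (ω : ℕ → V d) : ℕ → ℕ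
  | 0 => lastVisit ω 0
  | k + 1 => lastVisit ω (leTime ω k + 1)

/-- Chronological loop erasure of an (infinite, transient) path. -/
noncomputable def infLoopErase (ω : ℕ → V d) : ℕ → V d := fun k => ω (leTime ω k)

/-- The loop erasure `L` of the walk stopped at its first exit from `D`. -/
noncomputable def lerw (D : Set (V d)) (ω : ℕ → V d) : ℕ → V d := infLoopErase (stopAt D ω)

/-- The event `T_A > τ_D`: the walk does not visit `A` at any time up to (and
including) its first exit from `D`; if it never exits `D`, it never visits `A`. -/
def avoidBeforeExit (D A : Set (V d)) (ω : ℕ → V d) : Prop :=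
  ∀ j : ℕ, (j : ENat) ≤ exitTimeE D ω → ω j ∉ A

/-- The event `T⁺_A > τ_D` (visits of `A` at positive times only). -/
def avoidBeforeExitPos (D A : Set (V d)) (ω : ℕ → V d) : Prop :=
  ∀ j : ℕ, 1 ≤ j → (j : ENat) ≤ exitTimeE D ω → ω j ∉ A

/-- The right-hand face (in the first coordinate direction) of the cube `Q(x₀,m)`. -/
def rightFace (x₀ : V d) (m : ℕ) : Set (V d) :=
  { y | y ∈ cube x₀ m ∧ ∀ i : Fin d, (i : ℕ) = 0 → y i = x₀ i + (m : ℤ) }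


/-- The unit vector pointing towards the face of the cube `Q(0,n)` on which `x₀`
lies (the first coordinate realising `|x₀ i| = n`; junk value `0` if there is none). -/
noncomputable def faceDir (x₀ : V d) (n : ℕ) : V d :=
  if h : ∃ i : Fin d, |x₀ i| = (n : ℤ) then
    fun j => if j = Classical.choose h then (if 0 ≤ x₀ (Classical.choose h) then 1 else -1) else 0
  else 0

/-- The point `x₁ = x₀ + (m/2) e₁` (with `e₁` replaced by the unit vector pointing
towards the face of `Q(0,n)` containing `x₀`). -/
noncomputable def x1pt (x₀ : V d) (n m : ℕ) : V d := x₀ + ((m / 2 : ℕ) : ℤ) • faceDir x₀ n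

/-- The box `A = Q(x₁, m/4)`. -/
noncomputable def boxA (x₀ : V d) (n m : ℕ) : Set (V d) := cube (x1pt x₀ n m) (m / 4)

/-- A second unit direction, orthogonal to `faceDir x₀ n`, reflected according to the
sign of the corresponding coordinate of `x₀` (junk value `0` in degenerate cases). -/
noncomputable def sideDir (x₀ : V d) (n : ℕ) : V d :=
  if h : ∃ i : Fin d, |x₀ i| = (n : ℤ) then
    (if h2 : ∃ j : Fin d, j ≠ Classical.choose h then
      fun t => if t = Classical.choose h2 then (if x₀ (Classical.choose h2) ≤ 0 then 1 else -1) else 0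
    else 0)
  else 0

/-- The point `x₂ = x₁ + m e₂` (suitably rotated/reflected). -/
noncomputable def x2pt (x₀ : V d) (n m : ℕ) : V d := x1pt x₀ n m + (m : ℤ) • sideDir x₀ n

/-- `α`: the initial segment of the loop erasure `L = lerw D ω` up to its first hit
of `∂ᵢ Q(0,n)`, as a list. -/
noncomputable def alphaList (D : Set (V d)) (n : ℕ) (ω : ℕ → V d) : List (V d) :=
  (List.range (hitIdx (innerBdry (cube 0 n)) (lerw D ω) + 1)).map (lerw D ω)

/-- The endpoint `x₀` of a finite path (junk value `0` for the empty path). -/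
def endPt (a : List (V d)) : V d := (a.getLast?).getD 0

/-- `β`: the segment of the loop erasure `L = lerw D ω` from its first hit `x₀` of
`∂ᵢ Q(0,n)` up to its first subsequent hit of `∂ᵢ Q(x₀,m)`, as a list. -/
noncomputable def betaList (D : Set (V d)) (n m : ℕ) (ω : ℕ → V d) : List (V d) :=
  let γ := lerw D ω
  let k₁ := hitIdx (innerBdry (cube 0 n)) γ
  let k₂ := hitIdxFrom (innerBdry (cube (γ k₁) m)) k₁ γ
  (List.range (k₂ - k₁ + 1)).map fun i => γ (k₁ + i)

/-- `H_A(γ)`: the number of points of the path `γ` lying in the set `A`. -/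
noncomputable def hitCount (A : Set (V d)) (l : List (V d)) : ℕ :=
  (l.map fun v => if v ∈ A then 1 else 0).sum

/-- The number of visits of the path to `z` strictly before its first exit from `D`
(as an extended nonnegative real). -/
noncomputable def visitsBeforeExit (D : Set (V d)) (z : V d) (ω : ℕ → V d) : ℝ≥0∞ :=
  ∑' j : ℕ, if (j : ENat) < exitTimeE D ω ∧ ω j = z then 1 else 0

/-!
Let `K` be the set of points of `α`, let `q` be the probability of avoiding `K` up to the exit from
`D`, and let `G` be the Green function of the walk killed on `K` and outside `D`. Splitting at a
visit to `z` gives `G̃_D(x₀, z) ≥ G(x₀, z) q(z) / r`, where the average `r` of `q` over the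
neighbours of `x₀` is the probability of the conditioning event. So `r` has to be bounded above by a
multiple of `m ^ (d - 2) G(x₀, z) q(z)`.

In front of the face of `Q_n` carrying `x₀` both `q` and `G(x₀, ·)` are nonnegative and harmonic, so
Harnack's inequality allows `z` to be replaced by any point at distance of order `m` in front of the
face. Next, let `w` be the point at distance `m` straight ahead of `x₀`. Reflecting the walk in the
hyperplane through `w` parallel to the face shows that `q ≤ C q(w)` on a whole cube around `w`, the
part behind the face included; here transience is used, through a gambler's ruin bound for escaping
far away. Finally a Gaussian centred at `w` is subharmonic off a cube `B` around `w` of side of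
order `m`, and fails to be so on `B` by at most a multiple of `m ^ (-2)`. Comparing `q` with it, on
the walk killed on `K`, yields `r ≤ C m ^ (-2) q(w) ∑ y ∈ B, G(x₀, y)`, and the sum has of order
`m ^ d` comparable terms. For bounded `m` a straight path from `x₀` to `w` suffices.
-/

/-! ### Steps, heights, cubes and reflections -/

instance neZero_of_fact_three_le [h : Fact (3 ≤ d)] : NeZero d := ⟨by have := h.out; omega⟩

lemma dim_pos [NeZero d] : (0 : ℝ) < d := Nat.cast_pos.2 (NeZero.pos d)

lemma one_le_dim [NeZero d] : (1 : ℝ) ≤ d := Nat.one_le_cast.2 (NeZero.pos d)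

/-- The `2d` unit vectors `±eᵢ`, indexed by a coordinate and a sign. -/
def step (p : Fin d × ℤˣ) : V d := Pi.single p.1 (p.2 : ℤ)

/-- The signed coordinate of `x` in the direction of the unit vector `step p`. -/
def height (p : Fin d × ℤˣ) (x : V d) : ℤ := p.2 * x p.1

/-- The reflection of `x` in the hyperplane `{xᵢ = h / 2}`. -/
def reflect (i : Fin d) (h : ℤ) (x : V d) : V d := Function.update x i (h - x i)

lemma step_apply_self (p : Fin d × ℤˣ) : step p p.1 = p.2 := Pi.single_eq_same _ _

lemma step_apply_of_ne (p : Fin d × ℤˣ) {i : Fin d} (hi : i ≠ p.1) : step p i = 0 :=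
  Pi.single_eq_of_ne hi _

lemma step_neg (i : Fin d) (s : ℤˣ) : step (i, -s) = -step (i, s) := by
  simp only [step, Units.val_neg, Pi.single_neg]

lemma abs_step_apply_le (p : Fin d × ℤˣ) (i : Fin d) : |step p i| ≤ 1 := by
  by_cases hi : i = p.1
  · rw [hi, step_apply_self, Int.abs_eq_natAbs, Int.units_natAbs, Nat.cast_one]
  · rw [step_apply_of_ne p hi, abs_zero]
    exact zero_le_one

lemma step_injective : Function.Injective (step (d := d)) := by
  intro p q h
  have hfst : p.1 = q.1 := by
    by_contra hne
    have := congrFun h p.1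
    rw [step_apply_self, step_apply_of_ne q hne] at this
    exact p.2.ne_zero this
  refine Prod.ext hfst (Units.ext ?_)
  rw [← step_apply_self p, ← step_apply_self q, h, hfst]

lemma adj_add_step (x : V d) (p : Fin d × ℤˣ) : adj x (x + step p) := by
  have hterm : ∀ i, |x i - (x + step p) i| = if i = p.1 then 1 else 0 := by
    intro i
    rw [Pi.add_apply, sub_add_cancel_left, abs_neg]
    by_cases hi : i = p.1
    · rw [hi, step_apply_self, if_pos rfl, Int.abs_eq_natAbs, Int.units_natAbs, Nat.cast_one]
    · rw [step_apply_of_ne p hi, if_neg hi, abs_zero]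
  simp only [adj, hterm, Finset.sum_ite_eq', Finset.mem_univ, if_true]

lemma height_add (p : Fin d × ℤˣ) (x y : V d) : height p (x + y) = height p x + height p y :=
  mul_add _ _ _

lemma height_sub (p : Fin d × ℤˣ) (x y : V d) : height p (x - y) = height p x - height p y :=
  mul_sub _ _ _

lemma height_zsmul_step (p : Fin d × ℤˣ) (k : ℤ) : height p (k • step p) = k := by
  rw [height, Pi.smul_apply, step_apply_self, smul_eq_mul]
  linear_combination k * Int.units_coe_mul_self p.2

lemma add_zsmul_step_apply_of_ne {p : Fin d × ℤˣ} {i : Fin d} (hi : i ≠ p.1) (x : V d) (k : ℤ) :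
    (x + k • step p) i = x i := by
  rw [Pi.add_apply, Pi.smul_apply, step_apply_of_ne p hi, smul_zero, add_zero]

lemma height_step (p : Fin d × ℤˣ) : height p (step p) = 1 := by
  simpa only [one_smul] using height_zsmul_step p 1

lemma height_step_eq (p q : Fin d × ℤˣ) :
    height p (step q) = if q.1 = p.1 then (p.2 : ℤ) * q.2 else 0 := by
  split_ifs with h
  · rw [height, ← h, step_apply_self]
  · rw [height, step_apply_of_ne q (Ne.symm h), mul_zero]

lemma height_zero (p : Fin d × ℤˣ) : height p 0 = 0 := mul_zero _

lemma abs_height (p : Fin d × ℤˣ) (x : V d) : |height p x| = |x p.1| := by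
  rw [height, abs_mul, Int.abs_eq_natAbs (p.2 : ℤ), Int.units_natAbs, Nat.cast_one, one_mul]

lemma abs_height_sub (p : Fin d × ℤˣ) (x y : V d) :
    |height p x - height p y| = |x p.1 - y p.1| := by
  rw [← height_sub, abs_height, Pi.sub_apply]

lemma reflect_apply_self (i : Fin d) (h : ℤ) (x : V d) : reflect i h x i = h - x i :=
  Function.update_self ..

lemma reflect_apply_of_ne {i j : Fin d} (hj : j ≠ i) (h : ℤ) (x : V d) :
    reflect i h x j = x j :=
  Function.update_of_ne hj ..

lemma reflect_reflect (i : Fin d) (h : ℤ) (x : V d) : reflect i h (reflect i h x) = x := by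
  simp [reflect]

lemma height_reflect (p : Fin d × ℤˣ) (h : ℤ) (x : V d) :
    height p (reflect p.1 (p.2 * h) x) = h - height p x := by
  rw [height, reflect_apply_self, height]
  linear_combination h * Int.units_coe_mul_self p.2

/-- The action of the reflections `reflect i h` on the directions of unit steps. -/
def flipDir (i : Fin d) (p : Fin d × ℤˣ) : Fin d × ℤˣ := (p.1, if p.1 = i then -p.2 else p.2)

lemma flipDir_involutive (i : Fin d) : Function.Involutive (flipDir i) := by
  rintro ⟨j, s⟩
  by_cases h : j = i <;> simp [flipDir, h]

lemma reflect_add_step (i : Fin d) (h : ℤ) (x : V d) (p : Fin d × ℤˣ) :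
    reflect i h (x + step p) = reflect i h x + step (flipDir i p) := by
  obtain ⟨j, s⟩ := p
  funext k
  by_cases hk : k = i <;> by_cases hj : j = i
  · subst hk hj
    simp only [reflect, step, flipDir, Function.update_self, Pi.add_apply, Pi.single_eq_same,
      if_true, Units.val_neg]
    ring
  · have hkj : k ≠ j := fun h' => hj (h'.symm.trans hk)
    subst hk
    simp [reflect, step, flipDir, hj, hkj]
  · subst hj
    simp [reflect, step, flipDir, hk]
  · simp [reflect, step, flipDir, hk, hj]

lemma mem_cube_iff_abs_sub_le {x y : V d} {r : ℕ} : y ∈ cube x r ↔ ∀ i, |y i - x i| ≤ r :=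
  Iff.rfl

lemma mem_cube_zero_iff {y : V d} {r : ℕ} : y ∈ cube 0 r ↔ ∀ i, |y i| ≤ r := by
  simp only [mem_cube_iff_abs_sub_le, Pi.zero_apply, sub_zero]

lemma cube_eq_Icc (x : V d) (r : ℕ) :
    cube x r = Set.Icc (fun i => x i - (r : ℤ)) (fun i => x i + r) := by
  ext y
  simp only [mem_cube_iff_abs_sub_le, Set.mem_Icc, Pi.le_def, ← forall_and, abs_le]
  exact forall_congr' fun i => by constructor <;> rintro ⟨h₁, h₂⟩ <;> constructor <;> linarith

lemma cube_finite (x : V d) (r : ℕ) : (cube x r).Finite :=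
  cube_eq_Icc x r ▸ Set.finite_Icc _ _

lemma card_cube (x : V d) (r : ℕ) : (cube_finite x r).toFinset.card = (2 * r + 1) ^ d := by
  have heq : (cube_finite x r).toFinset =
      Finset.Icc (fun i => x i - (r : ℤ)) (fun i => x i + r) := by
    rw [← Finset.coe_inj, Set.Finite.coe_toFinset, Finset.coe_Icc, cube_eq_Icc]
  have hside : ∀ i, (x i + r + 1 - (x i - r)).toNat = 2 * r + 1 := fun i => by omega
  simp [heq, Pi.card_Icc, hside]

lemma self_mem_cube (x : V d) (r : ℕ) : x ∈ cube x r := fun i => by simp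

lemma cube_mono {x : V d} {r s : ℕ} (h : r ≤ s) : cube x r ⊆ cube x s :=
  fun _ hy i => (hy i).trans (Nat.cast_le.2 h)

lemma mem_cube_comm {x y : V d} {r : ℕ} : y ∈ cube x r ↔ x ∈ cube y r :=
  forall_congr' fun i => by rw [abs_sub_comm]

lemma mem_cube_trans {x y z : V d} {r s t : ℕ} (hy : y ∈ cube x r) (hz : z ∈ cube y s)
    (h : r + s ≤ t) : z ∈ cube x t :=
  fun i => (abs_sub_le _ (y i) _).trans (by have := hy i; have := hz i; omega)

lemma add_step_mem_cube {x y : V d} {r s : ℕ} (hy : y ∈ cube x r) (h : r + 1 ≤ s)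
    (p : Fin d × ℤˣ) : y + step p ∈ cube x s :=
  mem_cube_trans hy (fun i => by simpa using abs_step_apply_le p i) h

/-! ### The nearest-neighbour average -/

/-- The nearest-neighbour average of a function on `ℤ^d`, i.e. the one-step transition operator
of simple random walk. -/
noncomputable def avg : (V d → ℝ) →ₗ[ℝ] (V d → ℝ) where
  toFun f x := (∑ p, f (x + step p)) / (2 * d)
  map_add' f g := by
    funext x
    simp only [Pi.add_apply, Finset.sum_add_distrib, add_div]
  map_smul' c f := by
    funext x
    simp only [Pi.smul_apply, smul_eq_mul, ← Finset.mul_sum, mul_div_assoc, RingHom.id_apply]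

/-- `u` satisfies the discrete mean value property at every point of `Ω`. -/
def HarmonicOn (u : V d → ℝ) (Ω : Set (V d)) : Prop := ∀ x ∈ Ω, avg u x = u x

lemma HarmonicOn.mono {u : V d → ℝ} {Ω Ω' : Set (V d)} (h : HarmonicOn u Ω') (hΩ : Ω ⊆ Ω') :
    HarmonicOn u Ω :=
  fun x hx => h x (hΩ hx)

lemma avg_apply (f : V d → ℝ) (x : V d) : avg f x = (∑ p, f (x + step p)) / (2 * d) := rfl

lemma avg_eq_sum_coord (f : V d → ℝ) (x : V d) :
    avg f x = (∑ i, (f (x + step (i, 1)) + f (x + step (i, -1)))) / (2 * d) := by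
  have huniv : (Finset.univ : Finset ℤˣ) = {1, -1} := by decide
  rw [avg_apply, Fintype.sum_prod_type, huniv]
  simp only [Finset.sum_pair (show (1 : ℤˣ) ≠ -1 by decide)]

lemma avg_mono {f g : V d → ℝ} {x : V d} (h : ∀ p, f (x + step p) ≤ g (x + step p)) :
    avg f x ≤ avg g x :=
  div_le_div_of_nonneg_right (Finset.sum_le_sum fun p _ => h p) (by positivity)

lemma avg_nonneg {f : V d → ℝ} {x : V d} (h : ∀ p, 0 ≤ f (x + step p)) : 0 ≤ avg f x := by
  simpa only [map_zero, Pi.zero_apply] using avg_mono (f := 0) (g := f) h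

lemma avg_const [NeZero d] (c : ℝ) (x : V d) : avg (fun _ => c) x = c := by
  have hd := dim_pos (d := d)
  rw [avg_apply, Finset.sum_const, Finset.card_univ, Fintype.card_prod, Fintype.card_fin,
    Fintype.card_units_int, nsmul_eq_mul]
  push_cast
  field_simp

lemma avg_const_sub [NeZero d] (c : ℝ) (f : V d → ℝ) (x : V d) :
    avg (fun y => c - f y) x = c - avg f x := by
  rw [← avg_const c x, ← Pi.sub_apply, ← map_sub, avg_const c x]
  rfl

lemma avg_le_of_le [NeZero d] {f : V d → ℝ} {x : V d} {c : ℝ} (h : ∀ p, f (x + step p) ≤ c) :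
    avg f x ≤ c :=
  (avg_mono h).trans_eq (avg_const c x)

lemma le_two_mul_dim_mul_avg [NeZero d] {f : V d → ℝ} {x : V d} (h : ∀ p, 0 ≤ f (x + step p))
    (p : Fin d × ℤˣ) : f (x + step p) ≤ 2 * d * avg f x := by
  have hd := dim_pos (d := d)
  rw [avg_apply, mul_div_cancel₀ _ (by positivity)]
  exact Finset.single_le_sum (f := fun p => f (x + step p)) (fun p _ => h p) (Finset.mem_univ p)

lemma avg_comp_reflect (i : Fin d) (h : ℤ) (u : V d → ℝ) (x : V d) :
    avg (u ∘ reflect i h) x = avg u (reflect i h x) := by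
  rw [avg_apply, avg_apply, ← Equiv.sum_comp (flipDir_involutive i).toPerm]
  congr 1
  refine Finset.sum_congr rfl fun p _ => ?_
  rw [Function.comp_apply, reflect_add_step, Function.Involutive.coe_toPerm, flipDir_involutive]

lemma tendsto_avg {f : ℕ → V d → ℝ} {g : V d → ℝ}
    (h : ∀ y, Filter.Tendsto (fun T => f T y) Filter.atTop (nhds (g y))) (x : V d) :
    Filter.Tendsto (fun T => avg (f T) x) Filter.atTop (nhds (avg g x)) :=
  (tendsto_finsetSum _ fun _ _ => h _).div_const _

lemma exists_neighbour_lt_of_avg_le [NeZero d] {u : V d → ℝ} {x : V d} (h : avg u x ≤ u x)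
    {p : Fin d × ℤˣ} (hp : u x < u (x + step p)) : ∃ q, u (x + step q) < u x := by
  by_contra! hge
  have hd := dim_pos (d := d)
  have hlt : ∑ _p : Fin d × ℤˣ, u x < ∑ p, u (x + step p) :=
    Finset.sum_lt_sum (fun q _ => hge q) ⟨p, Finset.mem_univ p, hp⟩
  have hlt' := div_lt_div_of_pos_right hlt (by positivity : (0 : ℝ) < 2 * d)
  exact absurd (avg_const (u x) x) (hlt'.trans_le h).ne

/-- The boundary condition is only asked for at exits from points where `G` is negative; this
lets a reflected boundary be handled, where `G` changes sign across the boundary. -/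
lemma nonneg_of_avg_le_of_boundary_nonneg [NeZero d] {Ω : Set (V d)} (hfin : Ω.Finite)
    {G : V d → ℝ} (hsuper : ∀ x ∈ Ω, avg G x ≤ G x)
    (hbdry : ∀ x ∈ Ω, G x < 0 → ∀ p, x + step p ∉ Ω → 0 ≤ G (x + step p)) :
    ∀ x ∈ Ω, 0 ≤ G x := by
  by_contra! hcon
  obtain ⟨x₀, hx₀, hneg⟩ := hcon
  obtain ⟨xmin, hxmin, hmin⟩ := Set.exists_min_image Ω G hfin ⟨x₀, hx₀⟩
  let i₀ : Fin d := 0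
  obtain ⟨x, ⟨hx, hxe⟩, hmax⟩ := Set.exists_max_image {x | x ∈ Ω ∧ G x = G xmin} (fun x => x i₀)
    (hfin.subset fun x h => h.1) ⟨xmin, hxmin, rfl⟩
  have hGx : G x < 0 := hxe ▸ (hmin x₀ hx₀).trans_lt hneg
  have hge : ∀ p, G x ≤ G (x + step p) := fun p => by
    by_cases hp : x + step p ∈ Ω
    · exact hxe ▸ hmin _ hp
    · exact hGx.le.trans (hbdry x hx hGx p hp)
  have hgt : G x < G (x + step (i₀, 1)) := by
    by_cases hp : x + step (i₀, 1) ∈ Ω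
    · refine (hge _).lt_of_ne fun he => ?_
      have := hmax _ ⟨hp, he.symm.trans hxe⟩
      simp [step] at this
    · exact hGx.trans_le (hbdry x hx hGx _ hp)
  obtain ⟨q, hq⟩ := exists_neighbour_lt_of_avg_le (hsuper x hx) hgt
  exact (hge q).not_gt hq

/-! ### Gaussian barriers -/

/-- The squared Euclidean norm. -/
def sqNorm (x : V d) : ℝ := ∑ i, (x i : ℝ) ^ 2

lemma sqNorm_nonneg (x : V d) : 0 ≤ sqNorm x := Finset.sum_nonneg fun _ _ => sq_nonneg _

lemma sq_coord_le_sqNorm (x : V d) (i : Fin d) : (x i : ℝ) ^ 2 ≤ sqNorm x :=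
  Finset.single_le_sum (f := fun i => (x i : ℝ) ^ 2) (fun _ _ => sq_nonneg _) (Finset.mem_univ i)

lemma sqNorm_add_step (x : V d) (p : Fin d × ℤˣ) :
    sqNorm (x + step p) = sqNorm x + (1 + 2 * height p x) := by
  rw [sqNorm, sqNorm, ← sub_eq_iff_eq_add', ← Finset.sum_sub_distrib, Finset.sum_eq_single p.1]
  · have hsign : ((p.2 : ℤ) : ℝ) * (p.2 : ℤ) = 1 := by exact_mod_cast Int.units_coe_mul_self p.2
    rw [Pi.add_apply, step_apply_self, height]
    push_cast
    linear_combination hsign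
  · intro j _ hj
    rw [Pi.add_apply, step_apply_of_ne p hj, add_zero, sub_self]
  · exact fun h => absurd (Finset.mem_univ _) h

lemma sqNorm_sub_le_of_mem_cube {x w : V d} {r : ℕ} (h : x ∈ cube w r) :
    sqNorm (x - w) ≤ d * (r : ℝ) ^ 2 := by
  have hcoord : ∀ i ∈ Finset.univ, (((x - w) i : ℤ) : ℝ) ^ 2 ≤ (r : ℝ) ^ 2 := fun i _ =>
    sq_le_sq' (by exact_mod_cast (abs_le.1 (h i)).1) (by exact_mod_cast (abs_le.1 (h i)).2)
  simpa [sqNorm] using Finset.sum_le_sum hcoord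

lemma sq_le_sqNorm_sub_of_notMem_cube {x w : V d} {r : ℕ} (h : x ∉ cube w r) :
    (r : ℝ) ^ 2 ≤ sqNorm (x - w) := by
  obtain ⟨i, hi⟩ := not_forall.1 h
  refine le_trans (sq_le_sq.2 ?_) (sq_coord_le_sqNorm (x - w) i)
  rw [Nat.abs_cast]
  exact_mod_cast (not_le.1 hi).le

lemma one_add_sq_div_two_le_cosh (y : ℝ) : 1 + y ^ 2 / 2 ≤ Real.cosh y := by
  have hsinh : (y / 2) ^ 2 ≤ Real.sinh (y / 2) ^ 2 :=
    sq_le_sq.2 (Real.abs_sinh _ ▸ Real.self_le_sinh_iff.2 (abs_nonneg _))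
  have hdouble := Real.cosh_two_mul (y / 2)
  rw [mul_div_cancel₀ y two_ne_zero, Real.cosh_sq] at hdouble
  linarith

/-- The Gaussian `exp (-l |x - w|²)`, the barrier function used to compare with harmonic
functions. -/
noncomputable def gaussian (l : ℝ) (w x : V d) : ℝ := Real.exp (-l * sqNorm (x - w))

lemma gaussian_pos (l : ℝ) (w x : V d) : 0 < gaussian l w x := Real.exp_pos _

lemma gaussian_le_one {l : ℝ} (hl : 0 ≤ l) (w x : V d) : gaussian l w x ≤ 1 :=
  Real.exp_le_one_iff.2 (mul_nonpos_of_nonpos_of_nonneg (neg_nonpos.2 hl) (sqNorm_nonneg _))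

lemma gaussian_le_of_notMem_cube {l : ℝ} (hl : 0 ≤ l) {w x : V d} {r : ℕ} (hx : x ∉ cube w r) :
    gaussian l w x ≤ Real.exp (-(l * r ^ 2)) := by
  rw [gaussian, neg_mul]
  exact Real.exp_le_exp.2 (neg_le_neg
    (mul_le_mul_of_nonneg_left (sq_le_sqNorm_sub_of_notMem_cube hx) hl))

lemma le_gaussian_of_mem_cube {l : ℝ} (hl : 0 ≤ l) {w x : V d} {r : ℕ} (hx : x ∈ cube w r) :
    Real.exp (-(l * (d * r ^ 2))) ≤ gaussian l w x := by
  rw [gaussian, neg_mul]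
  exact Real.exp_le_exp.2 (neg_le_neg
    (mul_le_mul_of_nonneg_left (sqNorm_sub_le_of_mem_cube hx) hl))

lemma gaussian_add_step (l : ℝ) (w x : V d) (p : Fin d × ℤˣ) :
    gaussian l w (x + step p) =
      gaussian l w x * Real.exp (-l) * Real.exp (-(2 * l * height p (x - w))) := by
  rw [gaussian, gaussian, add_sub_right_comm, sqNorm_add_step, ← Real.exp_add, ← Real.exp_add]
  ring_nf

lemma avg_gaussian (l : ℝ) (w x : V d) :
    avg (gaussian l w) x =
      gaussian l w x * (Real.exp (-l) * ((∑ i, Real.cosh (2 * l * ((x - w) i : ℤ))) / d)) := by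
  have hpair : ∀ i, gaussian l w (x + step (i, 1)) + gaussian l w (x + step (i, -1)) =
      gaussian l w x * Real.exp (-l) * 2 * Real.cosh (2 * l * ((x - w) i : ℤ)) := fun i => by
    rw [gaussian_add_step, gaussian_add_step, Real.cosh_eq, height, height]
    simp only [Units.val_one, Units.val_neg, one_mul, neg_mul, Int.cast_neg, mul_neg, neg_neg]
    ring
  simp only [avg_eq_sum_coord, hpair, ← Finset.mul_sum]
  ring

lemma gaussian_mul_le_avg [NeZero d] (l : ℝ) (w x : V d) :
    gaussian l w x * (Real.exp (-l) * (1 + 2 * l ^ 2 * sqNorm (x - w) / d)) ≤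
      avg (gaussian l w) x := by
  have hd := dim_pos (d := d)
  have hcosh : d + 2 * l ^ 2 * sqNorm (x - w) ≤ ∑ i, Real.cosh (2 * l * ((x - w) i : ℤ)) := by
    refine le_of_eq_of_le ?_ (Finset.sum_le_sum fun i _ => one_add_sq_div_two_le_cosh _)
    simp only [Finset.sum_add_distrib, ← Finset.sum_div, mul_pow, ← Finset.mul_sum, sqNorm,
      Finset.sum_const, Finset.card_univ, Fintype.card_fin, nsmul_eq_mul]
    ring
  rw [avg_gaussian]
  refine mul_le_mul_of_nonneg_left (mul_le_mul_of_nonneg_left ?_ (Real.exp_pos _).le)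
    (gaussian_pos l w x).le
  rw [le_div_iff₀ hd, add_mul, div_mul_cancel₀ _ hd.ne', one_mul]
  exact hcosh

lemma gaussian_le_avg_add [NeZero d] {l : ℝ} (hl : 0 ≤ l) (w x : V d) :
    gaussian l w x ≤ avg (gaussian l w) x + l := by
  have hfactor : 1 - l ≤ Real.exp (-l) * (1 + 2 * l ^ 2 * sqNorm (x - w) / d) := by
    have := sqNorm_nonneg (x - w)
    exact (Real.one_sub_le_exp_neg l).trans
      (le_mul_of_one_le_right (Real.exp_pos _).le (le_add_of_nonneg_right (by positivity)))
  have hprod := mul_le_mul_of_nonneg_left hfactor (gaussian_pos l w x).le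
  have hloss := mul_le_mul_of_nonneg_right (gaussian_le_one hl w x) hl
  linarith [gaussian_mul_le_avg l w x]

lemma gaussian_le_avg [NeZero d] {r : ℝ} (hr : 2 * d ≤ r ^ 2) {w x : V d}
    (hx : r ^ 2 ≤ sqNorm (x - w)) :
    gaussian (d / r ^ 2) w x ≤ avg (gaussian (d / r ^ 2) w) x := by
  have hd := dim_pos (d := d)
  have hr₀ : 0 < r ^ 2 := by linarith
  set l := (d : ℝ) / r ^ 2 with hl
  have hl₀ : 0 < l := by positivity
  have hl_half : l ≤ 1 / 2 := by rw [hl, div_le_iff₀ hr₀]; linarith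
  have hgain : 2 * l ≤ 2 * l ^ 2 * sqNorm (x - w) / d := by
    rw [le_div_iff₀ hd]
    calc 2 * l * d = 2 * l ^ 2 * r ^ 2 := by rw [hl]; field_simp
      _ ≤ _ := by gcongr
  have hfactor : 1 ≤ Real.exp (-l) * (1 + 2 * l ^ 2 * sqNorm (x - w) / d) :=
    calc (1 : ℝ) ≤ (1 - l) * (1 + 2 * l) := by nlinarith
      _ ≤ _ := mul_le_mul (Real.one_sub_le_exp_neg l) (by linarith) (by positivity)
          (Real.exp_pos _).le
  exact (le_mul_of_one_le_right (gaussian_pos l w x).le hfactor).trans (gaussian_mul_le_avg l w x)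

/-! ### The gradient estimate -/

/-- Half of the cube `Q(0, S)`, lying strictly on the positive side of the hyperplane through the
midpoint of `0` and `step p`. -/
def halfCube (p : Fin d × ℤˣ) (S : ℕ) : Set (V d) :=
  {x | 1 ≤ height p x ∧ height p x ≤ S ∧ ∀ j ≠ p.1, |x j| ≤ (S : ℤ) - 1}

lemma halfCube_subset_cube (p : Fin d × ℤˣ) (S : ℕ) : halfCube p S ⊆ cube 0 S := by
  rintro x ⟨hpos, hle, hside⟩
  refine mem_cube_zero_iff.2 fun j => ?_
  by_cases hj : j = p.1
  · rw [hj, ← abs_height, abs_of_pos (by omega)]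
    exact hle
  · exact (hside j hj).trans (by omega)

lemma reflect_mem_cube_of_mem_halfCube {p : Fin d × ℤˣ} {S : ℕ} {x : V d} (hx : x ∈ halfCube p S) :
    reflect p.1 p.2 x ∈ cube 0 S := by
  obtain ⟨hpos, hle, hside⟩ := hx
  refine mem_cube_zero_iff.2 fun j => ?_
  by_cases hj : j = p.1
  · have hheight := height_reflect p 1 x
    rw [mul_one] at hheight
    rw [hj, ← abs_height, hheight, abs_le]
    omega
  · rw [reflect_apply_of_ne hj]
    exact (hside j hj).trans (by omega)

lemma halfCube_exit {p q : Fin d × ℤˣ} {S : ℕ} {x : V d} (hx : x ∈ halfCube p S)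
    (hq : x + step q ∉ halfCube p S) :
    (height p x = 1 ∧ q = (p.1, -p.2)) ∨ height p (x + step q) = S + 1 ∨
      (1 ≤ height p (x + step q) ∧ height p (x + step q) ≤ S ∧
        ∃ j ≠ p.1, |(x + step q) j| = S) := by
  obtain ⟨hpos, hle, hside⟩ := hx
  by_cases hdir : q.1 = p.1
  · have hside' : ∀ j ≠ p.1, |(x + step q) j| ≤ (S : ℤ) - 1 := fun j hj => by
      rw [Pi.add_apply, step_apply_of_ne q (hdir ▸ hj), add_zero]
      exact hside j hj
    have hnot : ¬(1 ≤ height p (x + step q) ∧ height p (x + step q) ≤ S) := fun h =>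
      hq ⟨h.1, h.2, hside'⟩
    rw [height_add, height_step_eq, if_pos hdir] at hnot ⊢
    rcases (by decide : ∀ s t : ℤˣ, s = t ∨ s = -t) q.2 p.2 with hs | hs
    · rw [hs, Int.units_coe_mul_self] at hnot ⊢
      omega
    · rw [hs, Units.val_neg, mul_neg, Int.units_coe_mul_self] at hnot
      exact Or.inl ⟨by omega, Prod.ext hdir hs⟩
  · have hheight : height p (x + step q) = height p x := by
      rw [height_add, height_step_eq, if_neg hdir, add_zero]
    rw [← hheight] at hpos hle
    have hfar : ∃ j ≠ p.1, ¬|(x + step q) j| ≤ (S : ℤ) - 1 := by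
      by_contra! hcon
      exact hq ⟨hpos, hle, hcon⟩
    obtain ⟨j, hj, hjS⟩ := hfar
    have hstep := abs_add_le (x j) (step q j)
    rw [← Pi.add_apply] at hstep
    have := hside j hj
    have := abs_step_apply_le q j
    exact Or.inr (Or.inr ⟨hpos, hle, j, hj, by omega⟩)

lemma reflect_eq_add_step {p : Fin d × ℤˣ} {x : V d} (hx : height p x = 1) :
    reflect p.1 p.2 x = x + step (p.1, -p.2) := by
  funext j
  by_cases hj : j = p.1
  · have hheight := height_reflect p 1 x
    rw [mul_one, hx, sub_self, height, mul_eq_zero, or_iff_right p.2.ne_zero] at hheight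
    have hstep : height p (x + step (p.1, -p.2)) = 0 := by
      rw [step_neg, Prod.mk.eta, ← sub_eq_add_neg, height_sub, hx, height_step, sub_self]
    rw [height, mul_eq_zero, or_iff_right p.2.ne_zero] at hstep
    rw [hj, hheight, hstep]
  · rw [reflect_apply_of_ne hj, Pi.add_apply, step_apply_of_ne (p.1, -p.2) hj, add_zero]

/-- A harmonic quadratic polynomial that is of order `S` next to the hyperplane
`{height p = 1 / 2}` and exceeds `S ^ 2` where the walk leaves `halfCube p S` elsewhere. -/
def slabBarrier (p : Fin d × ℤˣ) (S : ℕ) (x : V d) : ℝ :=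
  2 * d * S * height p x - d * S - d * (height p x : ℝ) ^ 2 + (d - 1) * height p x + sqNorm x + d

lemma avg_slabBarrier [NeZero d] (p : Fin d × ℤˣ) (S : ℕ) (x : V d) :
    avg (slabBarrier p S) x = slabBarrier p S x := by
  have hd := dim_pos (d := d)
  have hsign : ((p.2 : ℤ) : ℝ) * (p.2 : ℤ) = 1 := by exact_mod_cast Int.units_coe_mul_self p.2
  have hpair : ∀ i, slabBarrier p S (x + step (i, 1)) + slabBarrier p S (x + step (i, -1)) =
      2 * slabBarrier p S x + 2 - if i = p.1 then 2 * (d : ℝ) else 0 := fun i => by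
    simp only [slabBarrier, sqNorm_add_step, height_add, height_step_eq]
    by_cases hi : i = p.1
    · simp only [hi, height, if_true, Units.val_one, Units.val_neg, mul_one, one_mul, neg_mul,
        mul_neg]
      push_cast
      linear_combination (-2 * (d : ℝ)) * hsign
    · simp only [hi, height, if_false, Units.val_one, Units.val_neg, one_mul, neg_mul, add_zero]
      push_cast
      ring
  rw [avg_eq_sum_coord, Finset.sum_congr rfl fun i _ => hpair i, Finset.sum_sub_distrib,
    Finset.sum_ite_eq' Finset.univ, if_pos (Finset.mem_univ _), Finset.sum_const,
    Finset.card_univ, Fintype.card_fin, nsmul_eq_mul]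
  field_simp
  ring

lemma sq_height (p : Fin d × ℤˣ) (x : V d) : (height p x : ℝ) ^ 2 = (x p.1 : ℝ) ^ 2 := by
  have hsign : ((p.2 : ℤ) : ℝ) * (p.2 : ℤ) = 1 := by exact_mod_cast Int.units_coe_mul_self p.2
  rw [height, Int.cast_mul]
  linear_combination (x p.1 : ℝ) ^ 2 * hsign

lemma sq_height_le_sqNorm (p : Fin d × ℤˣ) (x : V d) : (height p x : ℝ) ^ 2 ≤ sqNorm x :=
  sq_height p x ▸ sq_coord_le_sqNorm x p.1

lemma sq_height_add_sq_le_sqNorm {p : Fin d × ℤˣ} {j : Fin d} (hj : j ≠ p.1) (x : V d) :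
    (height p x : ℝ) ^ 2 + (x j : ℝ) ^ 2 ≤ sqNorm x := by
  rw [sq_height, ← Finset.sum_pair hj.symm (f := fun k => (x k : ℝ) ^ 2)]
  exact Finset.sum_le_sum_of_subset_of_nonneg (Finset.subset_univ _) fun _ _ _ => sq_nonneg _

lemma slabBarrier_add_slabBarrier_nonneg [NeZero d] {p : Fin d × ℤˣ} {x : V d} (S : ℕ)
    (hx : height p x = 1) :
    0 ≤ slabBarrier p S x + slabBarrier p S (x + step (p.1, -p.2)) := by
  have hd := one_le_dim (d := d)
  have hsq := sq_height_le_sqNorm p x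
  have hheight : height p (x + step (p.1, -p.2)) = 0 := by
    rw [step_neg, Prod.mk.eta, ← sub_eq_add_neg, height_sub, hx, height_step, sub_self]
  have hnorm := sqNorm_nonneg (x + step (p.1, -p.2))
  rw [slabBarrier, slabBarrier, hheight, hx]
  rw [hx] at hsq
  push_cast at *
  linarith

lemma sq_le_slabBarrier_of_height_eq [NeZero d] {p : Fin d × ℤˣ} {S : ℕ} {x : V d}
    (hx : height p x = S + 1) : (S : ℝ) ^ 2 ≤ slabBarrier p S x := by
  have hd := one_le_dim (d := d)
  have hsq := sq_height_le_sqNorm p x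
  have hS : (0 : ℝ) ≤ S := Nat.cast_nonneg S
  rw [slabBarrier, hx]
  rw [hx] at hsq
  push_cast at *
  nlinarith

lemma sq_le_slabBarrier_of_abs_eq [NeZero d] {p : Fin d × ℤˣ} {S : ℕ} {x : V d} {j : Fin d}
    (hj : j ≠ p.1) (hpos : 1 ≤ height p x) (hle : height p x ≤ S) (hxj : |x j| = S) :
    (S : ℝ) ^ 2 ≤ slabBarrier p S x := by
  have hd := one_le_dim (d := d)
  have hsq := sq_height_add_sq_le_sqNorm hj x
  have hxj' : (x j : ℝ) ^ 2 = (S : ℝ) ^ 2 := by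
    rw [← sq_abs, ← Int.cast_abs, hxj, Int.cast_natCast]
  have hpos' : (1 : ℝ) ≤ height p x := by exact_mod_cast hpos
  have hle' : (height p x : ℝ) ≤ S := by exact_mod_cast hle
  rw [slabBarrier]
  set t : ℝ := (height p x : ℝ)
  have hquad : 0 ≤ (d : ℝ) * ((S - t) * t) := by
    have := sub_nonneg.2 hle'
    positivity
  have hlin : 0 ≤ (d : ℝ) * (S * (t - 1)) := by
    have := sub_nonneg.2 hpos'
    positivity
  nlinarith

/-- The function `u ∘ reflect - u` changes sign across the reflecting hyperplane, so it is dominated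
by any harmonic barrier that is large on the rest of the boundary of the half cube. -/
lemma reflect_sub_le_slabBarrier [NeZero d] {u : V d → ℝ} {S : ℕ} (hS : 1 ≤ S) {M : ℝ}
    (hu : HarmonicOn u (cube 0 S)) (hbound : ∀ x ∈ cube 0 (S + 1), 0 ≤ u x ∧ u x ≤ M)
    (p : Fin d × ℤˣ) :
    ∀ x ∈ halfCube p S, u (reflect p.1 p.2 x) - u x ≤ M / S ^ 2 * slabBarrier p S x := by
  have hS' : (0 : ℝ) < S := Nat.cast_pos.2 hS
  have hM : 0 ≤ M := (hbound 0 (self_mem_cube _ _)).1.trans (hbound 0 (self_mem_cube _ _)).2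
  let G : V d → ℝ := (M / S ^ 2) • slabBarrier p S - (u ∘ reflect p.1 p.2 - u)
  have hG : ∀ x, G x = M / S ^ 2 * slabBarrier p S x - (u (reflect p.1 p.2 x) - u x) :=
    fun x => rfl
  have houter : ∀ x ∈ halfCube p S, ∀ q, (S : ℝ) ^ 2 ≤ slabBarrier p S (x + step q) →
      0 ≤ G (x + step q) := fun x hx q hbar => by
    have hupper : u (reflect p.1 p.2 (x + step q)) ≤ M := by
      rw [reflect_add_step]
      exact (hbound _ (add_step_mem_cube (reflect_mem_cube_of_mem_halfCube hx) le_rfl _)).2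
    have hlower := (hbound _ (add_step_mem_cube (halfCube_subset_cube p S hx) le_rfl q)).1
    have hbar' : M ≤ M / S ^ 2 * slabBarrier p S (x + step q) :=
      calc M = M / S ^ 2 * S ^ 2 := (div_mul_cancel₀ _ (pow_pos hS' 2).ne').symm
        _ ≤ _ := by gcongr
    rw [hG]
    linarith
  have hharm : ∀ x ∈ halfCube p S, avg G x ≤ G x := fun x hx => by
    simp only [G, map_sub, map_smul, Pi.sub_apply, Pi.smul_apply, avg_slabBarrier,
      avg_comp_reflect, hu _ (halfCube_subset_cube p S hx),
      hu _ (reflect_mem_cube_of_mem_halfCube hx), Function.comp_apply, le_refl]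
  have hnonneg := nonneg_of_avg_le_of_boundary_nonneg
    ((cube_finite 0 S).subset (halfCube_subset_cube p S)) hharm fun x hx hneg q hq => by
      rcases halfCube_exit hx hq with ⟨hheight, rfl⟩ | htop | ⟨hpos, hle, j, hj, hjS⟩
      · have hrefl := reflect_eq_add_step hheight
        have hsum : 0 ≤ M / S ^ 2 * (slabBarrier p S x + slabBarrier p S (reflect p.1 p.2 x)) :=
          mul_nonneg (by positivity) (hrefl ▸ slabBarrier_add_slabBarrier_nonneg S hheight)
        rw [hG] at hneg
        rw [← hrefl, hG, reflect_reflect]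
        linarith
      · exact houter x hx q (sq_le_slabBarrier_of_height_eq htop)
      · exact houter x hx q (sq_le_slabBarrier_of_abs_eq hj hpos hle hjS)
  exact fun x hx => sub_nonneg.1 (hnonneg x hx)

lemma step_mem_halfCube (p : Fin d × ℤˣ) {S : ℕ} (hS : 1 ≤ S) : step p ∈ halfCube p S := by
  rw [halfCube, Set.mem_ofPred_eq, height_step]
  exact ⟨le_rfl, by omega, fun j hj => by rw [step_apply_of_ne p hj, abs_zero]; omega⟩

lemma slabBarrier_step (p : Fin d × ℤˣ) (S : ℕ) : slabBarrier p S (step p) = d * S + d := by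
  have hnorm := sqNorm_add_step 0 p
  have hzero : sqNorm (0 : V d) = 0 := by simp [sqNorm]
  rw [zero_add, height_zero, hzero] at hnorm
  rw [slabBarrier, height_step, hnorm]
  push_cast
  ring

lemma HarmonicOn.sub_add_step_le [NeZero d] {u : V d → ℝ} {y : V d} {S : ℕ} (hS : 1 ≤ S) {M : ℝ}
    (hu : HarmonicOn u (cube y S)) (hbound : ∀ x ∈ cube y (S + 1), 0 ≤ u x ∧ u x ≤ M)
    (p : Fin d × ℤˣ) : u y - u (y + step p) ≤ 2 * d * M / S := by
  have hS' : (1 : ℝ) ≤ S := Nat.one_le_cast.2 hS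
  have hM : 0 ≤ M := (hbound y (self_mem_cube _ _)).1.trans (hbound y (self_mem_cube _ _)).2
  have hshift : ∀ {x : V d} {r : ℕ}, x ∈ cube 0 r → y + x ∈ cube y r := fun hx i => by
    simpa using hx i
  have hzero := reflect_sub_le_slabBarrier (u := fun x => u (y + x)) hS
    (fun x hx => by simpa only [avg_apply, add_assoc] using hu _ (hshift hx))
    (fun x hx => hbound _ (hshift hx)) p _ (step_mem_halfCube p hS)
  rw [reflect_eq_add_step (height_step p), step_neg, Prod.mk.eta, add_neg_cancel, add_zero,
    slabBarrier_step] at hzero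
  refine hzero.trans ?_
  calc M / S ^ 2 * (d * S + d) ≤ M / S ^ 2 * (2 * d * S) := by
        gcongr
        nlinarith [dim_pos (d := d)]
    _ = 2 * d * M / S := by field_simp

/-! ### The Harnack inequality -/

/-- The factor lost when a lower bound for a nonnegative harmonic function on a cube is extended
to the cube of twice the side. -/
noncomputable def doublingConst (d : ℕ) : ℝ :=
  Real.exp (-(4 * (d : ℝ) ^ 2)) - Real.exp (-(9 * (d : ℝ) ^ 3))

lemma doublingConst_pos [NeZero d] : 0 < doublingConst d := by
  have hpow : (d : ℝ) ^ 2 ≤ d ^ 3 := pow_le_pow_right₀ one_le_dim (by norm_num)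
  have hsq : 0 < (d : ℝ) ^ 2 := pow_pos dim_pos 2
  exact sub_pos.2 (Real.exp_lt_exp.2 (by linarith))

lemma HarmonicOn.gaussian_barrier_le [NeZero d] {u : V d → ℝ} (hu : ∀ x, 0 ≤ u x) {w : V d}
    {r s : ℕ} (hr : 2 * d ≤ r ^ 2) (hharm : HarmonicOn u (cube w s)) {A : ℝ} (hA₀ : 0 ≤ A)
    (hA : ∀ x ∈ cube w r, A ≤ u x) (x : V d) :
    A * (gaussian (d / (r : ℝ) ^ 2) w x - Real.exp (-(d / (r : ℝ) ^ 2 * s ^ 2))) ≤ u x := by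
  have hr' : 2 * (d : ℝ) ≤ (r : ℝ) ^ 2 := by exact_mod_cast hr
  have hl : 0 ≤ d / (r : ℝ) ^ 2 := by positivity
  set g := gaussian (d / (r : ℝ) ^ 2) w
  set e := Real.exp (-(d / (r : ℝ) ^ 2 * s ^ 2))
  have hinner : ∀ x ∈ cube w r, A * (g x - e) ≤ u x := fun x hx =>
    (mul_le_of_le_one_right hA₀ ((sub_le_self _ (Real.exp_pos _).le).trans
      (gaussian_le_one hl w x))).trans (hA x hx)
  have houter : ∀ x ∉ cube w s, A * (g x - e) ≤ u x := fun x hx =>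
    (mul_nonpos_of_nonneg_of_nonpos hA₀
      (sub_nonpos.2 (gaussian_le_of_notMem_cube hl hx))).trans (hu x)
  let v : V d → ℝ := u - A • (g - fun _ => e)
  have hshell : ∀ x ∈ cube w s \ cube w r, 0 ≤ v x := by
    refine nonneg_of_avg_le_of_boundary_nonneg ((cube_finite w s).subset Set.sdiff_subset)
      (fun x hx => ?_) fun x _ _ p hp => sub_nonneg.2 ?_
    · have hsub : g x ≤ avg g x := gaussian_le_avg hr' (sq_le_sqNorm_sub_of_notMem_cube hx.2)
      simp only [v, map_sub, map_smul, Pi.sub_apply, Pi.smul_apply, smul_eq_mul, avg_const,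
        hharm x hx.1]
      gcongr
    · by_cases hs : x + step p ∈ cube w s
      · by_cases hr : x + step p ∈ cube w r
        · exact hinner _ hr
        · exact absurd ⟨hs, hr⟩ hp
      · exact houter _ hs
  by_cases hs : x ∈ cube w s
  · by_cases hr : x ∈ cube w r
    · exact hinner x hr
    · exact sub_nonneg.1 (hshell x ⟨hs, hr⟩)
  · exact houter x hs

lemma HarmonicOn.doublingConst_mul_le [NeZero d] {u : V d → ℝ} (hu : ∀ x, 0 ≤ u x) {w : V d}
    {r : ℕ} (hr : 2 * d ≤ r ^ 2) (hharm : HarmonicOn u (cube w (3 * d * r))) {A : ℝ} (hA₀ : 0 ≤ A)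
    (hA : ∀ x ∈ cube w r, A ≤ u x) {x : V d} (hx : x ∈ cube w (2 * r)) :
    doublingConst d * A ≤ u x := by
  have hr₀ : (r : ℝ) ≠ 0 := by
    have := NeZero.pos d
    rintro h
    rw [Nat.cast_eq_zero] at h
    subst h
    omega
  have hgauss := le_gaussian_of_mem_cube (l := d / (r : ℝ) ^ 2) (by positivity) hx
  have hinner : d / (r : ℝ) ^ 2 * (d * ((2 * r : ℕ) : ℝ) ^ 2) = 4 * d ^ 2 := by
    push_cast; field_simp; ring
  have houter : d / (r : ℝ) ^ 2 * ((3 * d * r : ℕ) : ℝ) ^ 2 = 9 * d ^ 3 := by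
    push_cast; field_simp; ring
  have hbarrier := HarmonicOn.gaussian_barrier_le hu hr hharm hA₀ hA x
  rw [hinner] at hgauss
  rw [houter] at hbarrier
  refine le_trans ?_ hbarrier
  rw [mul_comm, doublingConst]
  gcongr

lemma HarmonicOn.doublingConst_pow_mul_le [NeZero d] {u : V d → ℝ} (hu : ∀ x, 0 ≤ u x) {w : V d}
    {r R : ℕ} (hr : 2 * d ≤ r) (hharm : HarmonicOn u (cube w (3 * d * R))) {A : ℝ} (hA₀ : 0 ≤ A)
    (hA : ∀ x ∈ cube w r, A ≤ u x) (j : ℕ) (hj : 2 ^ j * r ≤ 2 * R) :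
    ∀ x ∈ cube w (2 ^ j * r), doublingConst d ^ j * A ≤ u x := by
  induction j with
  | zero => simpa using hA
  | succ j ih =>
    have hd := NeZero.pos d
    have hdouble : 2 ^ (j + 1) * r = 2 * (2 ^ j * r) := by ring
    rw [hdouble] at hj ⊢
    have hscale : 2 * d ≤ 2 ^ j * r := hr.trans (Nat.le_mul_of_pos_left r (by positivity))
    intro x hx
    rw [pow_succ', mul_assoc]
    refine HarmonicOn.doublingConst_mul_le hu (by nlinarith) (hharm.mono (cube_mono ?_))
      (mul_nonneg (pow_nonneg doublingConst_pos.le j) hA₀) (ih (by omega)) hx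
    exact Nat.mul_le_mul_left _ (by omega)

lemma HarmonicOn.mul_pow_le_mul_pow [NeZero d] {u : V d → ℝ} (hu : ∀ x, 0 ≤ u x) {w : V d}
    {r R β : ℕ} (hr : 2 * d ≤ r) (hrR : r ≤ 2 * R) (hβ : (1 / 2 : ℝ) ^ β ≤ doublingConst d)
    (hharm : HarmonicOn u (cube w (3 * d * R))) {A : ℝ} (hA₀ : 0 ≤ A)
    (hA : ∀ x ∈ cube w r, A ≤ u x) {y : V d} (hy : y ∈ cube w R) :
    A * (r : ℝ) ^ β ≤ u y * (2 * R) ^ β := by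
  have hr₀ : 0 < r := by have := NeZero.pos d; omega
  obtain ⟨j, hj, hj'⟩ : ∃ j, 2 ^ j * r ≤ 2 * R ∧ 2 * R < 2 ^ (j + 1) * r := by
    obtain ⟨j, hj, hj'⟩ := exists_nat_pow_near (x := 2 * R / r) (y := 2)
      ((Nat.one_le_div_iff hr₀).2 hrR) one_lt_two
    exact ⟨j, (Nat.le_div_iff_mul_le hr₀).1 hj, (Nat.div_lt_iff_lt_mul hr₀).1 hj'⟩
  have hyj : y ∈ cube w (2 ^ j * r) := cube_mono (by rw [pow_succ] at hj'; linarith) hy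
  have hscale : ((2 : ℝ) ^ j * r) ^ β ≤ (2 * R) ^ β :=
    pow_le_pow_left₀ (by positivity) (by exact_mod_cast hj) β
  have hκ : 0 ≤ doublingConst d ^ j * A := mul_nonneg (pow_nonneg doublingConst_pos.le j) hA₀
  calc A * (r : ℝ) ^ β = ((1 / 2 : ℝ) ^ β) ^ j * A * ((2 : ℝ) ^ j * r) ^ β := by
        rw [mul_pow, ← pow_mul, ← pow_mul, mul_comm j β, one_div, inv_pow]
        field_simp
    _ ≤ doublingConst d ^ j * A * (2 * R) ^ β := by gcongr
    _ ≤ u y * (2 * R) ^ β := by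
        gcongr
        exact HarmonicOn.doublingConst_pow_mul_le hu hr hharm hA₀ hA j hj y hyj

lemma exists_step_toward {lo hi x y : V d} (hx : x ∈ Set.Icc lo hi) (hy : y ∈ Set.Icc lo hi)
    (hne : x ≠ y) : ∃ p, x + step p ∈ Set.Icc lo hi ∧
      ∑ i, (y i - x i).natAbs = ∑ i, (y i - (x + step p) i).natAbs + 1 := by
  obtain ⟨i, hxy⟩ := Function.ne_iff.1 hne
  obtain ⟨s, hs⟩ : ∃ s : ℤˣ, lo i ≤ x i + s ∧ x i + s ≤ hi i ∧
      (y i - x i).natAbs = (y i - (x i + s)).natAbs + 1 := by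
    have hx_i : lo i ≤ x i ∧ x i ≤ hi i := ⟨hx.1 i, hx.2 i⟩
    have hy_i : lo i ≤ y i ∧ y i ≤ hi i := ⟨hy.1 i, hy.2 i⟩
    rcases lt_or_gt_of_ne hxy with h | h
    · exact ⟨1, by rw [Units.val_one]; omega⟩
    · exact ⟨-1, by rw [Units.val_neg, Units.val_one]; omega⟩
  have hcoord : ∀ j, lo j ≤ (x + step (i, s)) j ∧ (x + step (i, s)) j ≤ hi j ∧
      (y j - x j).natAbs = (y j - (x + step (i, s)) j).natAbs + if j = i then 1 else 0 := by
    intro j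
    rw [Pi.add_apply]
    split_ifs with hj
    · subst hj
      rwa [step_apply_self]
    · rw [step_apply_of_ne _ hj, add_zero]
      exact ⟨hx.1 j, hx.2 j, rfl⟩
  refine ⟨(i, s), ⟨fun j => (hcoord j).1, fun j => (hcoord j).2.1⟩, ?_⟩
  rw [Finset.sum_congr rfl fun j _ => (hcoord j).2.2, Finset.sum_add_distrib,
    Finset.sum_ite_eq', if_pos (Finset.mem_univ i)]

lemma le_pow_mul_of_forall_step {lo hi : V d} {u : V d → ℝ} {C : ℝ} (hC : 1 ≤ C)
    (hu : ∀ x, 0 ≤ u x)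
    (hstep : ∀ x ∈ Set.Icc lo hi, ∀ p, x + step p ∈ Set.Icc lo hi → u x ≤ C * u (x + step p))
    {x y : V d} (hx : x ∈ Set.Icc lo hi) (hy : y ∈ Set.Icc lo hi) {k : ℕ} (hk : y ∈ cube x k) :
    u x ≤ C ^ (k * d) * u y := by
  have hdist : ∀ N : ℕ, ∀ x ∈ Set.Icc lo hi, ∑ i, (y i - x i).natAbs = N → u x ≤ C ^ N * u y := by
    intro N
    induction N with
    | zero =>
      intro x _ hN
      have hxy : x = y := funext fun i => by
        have := Finset.sum_eq_zero_iff.1 hN i (Finset.mem_univ i)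
        omega
      rw [hxy, pow_zero, one_mul]
    | succ N ih =>
      intro x hx hN
      have hne : x ≠ y := by rintro rfl; simp at hN
      obtain ⟨p, hp, hsum⟩ := exists_step_toward hx hy hne
      calc u x ≤ C * u (x + step p) := hstep x hx p hp
        _ ≤ C * (C ^ N * u y) := by gcongr; exact ih _ hp (by omega)
        _ = C ^ (N + 1) * u y := by ring
  refine (hdist _ x hx rfl).trans (mul_le_mul_of_nonneg_right (pow_le_pow_right₀ hC ?_) (hu y))
  calc ∑ i, (y i - x i).natAbs ≤ ∑ _i : Fin d, k := Finset.sum_le_sum fun i _ => by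
        have := abs_le.1 (mem_cube_iff_abs_sub_le.1 hk i)
        omega
    _ = k * d := by rw [Finset.sum_const, Finset.card_univ, Fintype.card_fin, smul_eq_mul, mul_comm]

lemma HarmonicOn.le_pow_mul [NeZero d] {lo hi : V d} {u : V d → ℝ} (hu : ∀ x, 0 ≤ u x)
    (hharm : HarmonicOn u (Set.Icc lo hi)) {x y : V d} (hx : x ∈ Set.Icc lo hi)
    (hy : y ∈ Set.Icc lo hi) {k : ℕ} (hk : y ∈ cube x k) :
    u x ≤ (2 * d) ^ (k * d) * u y := by
  have hd := one_le_dim (d := d)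
  refine le_pow_mul_of_forall_step (by linarith) hu (fun x _ p hp => ?_) hx hy hk
  have hback : x + step p + step (p.1, -p.2) = x := by
    rw [step_neg, Prod.mk.eta, add_neg_cancel_right]
  calc u x = u (x + step p + step (p.1, -p.2)) := by rw [hback]
    _ ≤ 2 * d * avg u (x + step p) := le_two_mul_dim_mul_avg (fun _ => hu _) _
    _ = 2 * d * u (x + step p) := by rw [hharm _ hp]

lemma HarmonicOn.le_pow_mul_of_mem_cube [NeZero d] {u : V d → ℝ} (hu : ∀ x, 0 ≤ u x) {c x y : V d}
    {r k : ℕ} (hharm : HarmonicOn u (cube c r)) (hx : x ∈ cube c r) (hy : y ∈ cube c r)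
    (hk : y ∈ cube x k) : u x ≤ (2 * d) ^ (k * d) * u y := by
  rw [cube_eq_Icc] at hharm hx hy
  exact HarmonicOn.le_pow_mul hu hharm hx hy hk

lemma sub_mul_le_of_forall_sub_step_le {u : V d → ℝ} {c x : V d} {r : ℕ} {ε : ℝ} (hε : 0 ≤ ε)
    (hstep : ∀ y ∈ cube c r, ∀ p, u y - u (y + step p) ≤ ε) (hx : x ∈ cube c r) :
    u c - r * d * ε ≤ u x := by
  have hexp := le_pow_mul_of_forall_step (lo := fun i => c i - (r : ℤ)) (hi := fun i => c i + r)
    (u := fun y => Real.exp (u y)) (Real.one_le_exp hε) (fun _ => (Real.exp_pos _).le)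
    (fun y hy p _ => ?_) (cube_eq_Icc c r ▸ self_mem_cube c r) (cube_eq_Icc c r ▸ hx) hx
  · rw [← Real.exp_nat_mul, ← Real.exp_add, Real.exp_le_exp] at hexp
    push_cast at hexp
    linarith
  · rw [← Real.exp_add, Real.exp_le_exp]
    linarith [hstep y (cube_eq_Icc c r ▸ hy) p]

lemma HarmonicOn.half_le_of_le_mul [NeZero d] {u : V d → ℝ} (hu : ∀ x, 0 ≤ u x) {x y : V d}
    {r ρ B : ℕ} (hr : 1 ≤ r) (hB : 1 ≤ B) (hρ : (4 * d ^ 2 * B + 2) * r ≤ ρ)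
    (hharm : HarmonicOn u (cube x ρ)) (hbound : ∀ y ∈ cube x ρ, u y ≤ B * u x)
    (hy : y ∈ cube x r) : u x / 2 ≤ u y := by
  have hd := dim_pos (d := d)
  have hr₀ : (r : ℝ) ≠ 0 := Nat.cast_ne_zero.2 (by omega)
  have hB₀ : (B : ℝ) ≠ 0 := Nat.cast_ne_zero.2 (by omega)
  set S := 4 * d ^ 2 * B * r with hS
  have hS₁ : 1 ≤ S :=
    Nat.mul_pos (Nat.mul_pos (Nat.mul_pos four_pos (pow_pos (NeZero.pos d) 2)) hB) hr
  have hsub : ∀ z ∈ cube x r, cube z (S + 1) ⊆ cube x ρ := fun z hz v hv =>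
    mem_cube_trans hz hv (by linarith)
  have hgrad : ∀ z ∈ cube x r, ∀ p, u z - u (z + step p) ≤ u x / (2 * d * r) := fun z hz p =>
    calc u z - u (z + step p) ≤ 2 * d * (B * u x) / S :=
          HarmonicOn.sub_add_step_le hS₁
            (hharm.mono ((cube_mono S.le_succ).trans (hsub z hz)))
            (fun v hv => ⟨hu v, hbound v (hsub z hz hv)⟩) p
      _ = u x / (2 * d * r) := by rw [hS]; push_cast; field_simp; ring
  have hlower := sub_mul_le_of_forall_sub_step_le (by have := hu x; positivity) hgrad hy
  have hhalf : (r : ℝ) * d * (u x / (2 * d * r)) = u x / 2 := by field_simp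
  linarith

/-- A point where `u` is within the factor `2 ^ β` of its maximum over the cube of radius `s / 2`
controls `u` from below on the cube of radius `s / harnackRatio d β`. -/
def harnackRatio (d β : ℕ) : ℕ := 2 * (4 * d ^ 2 * 2 ^ β + 2)

lemma HarmonicOn.mul_le_of_le_two_pow_mul [NeZero d] {u : V d → ℝ} (hu : ∀ x, 0 ≤ u x) {x y : V d}
    {s β : ℕ} (hharm : HarmonicOn u (cube x (max (2 * d) (s / 2))))
    (hbound : ∀ y ∈ cube x (s / 2), u y ≤ 2 ^ β * u x)
    (hy : y ∈ cube x (max (2 * d) (s / harnackRatio d β))) :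
    u x ≤ (2 * d) ^ (2 * d * d) * u y := by
  have hd := one_le_dim (d := d)
  rcases le_total (2 * d) (s / harnackRatio d β) with hs | hs
  · rw [max_eq_right hs] at hy
    have hdiv : harnackRatio d β * (s / harnackRatio d β) ≤ s := Nat.mul_div_le ..
    have hhalf : u x / 2 ≤ u y := HarmonicOn.half_le_of_le_mul hu
      (hs.trans' (by have := NeZero.pos d; omega)) Nat.one_le_two_pow
      (by rw [Nat.le_div_iff_mul_le two_pos]; rw [harnackRatio] at hdiv ⊢; linarith)
      (hharm.mono (cube_mono (le_max_right _ _)))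
      (fun y hy => by exact_mod_cast hbound y hy) hy
    calc u x ≤ 2 * u y := by linarith
      _ ≤ (2 * d) ^ (2 * d * d) * u y := by
        refine mul_le_mul_of_nonneg_right ?_ (hu y)
        calc (2 : ℝ) ≤ 2 * d := by linarith
          _ ≤ (2 * d) ^ (2 * d * d) := le_self_pow₀ (by linarith) (by simp [NeZero.ne d])
  · rw [max_eq_left hs] at hy
    exact HarmonicOn.le_pow_mul_of_mem_cube hu (hharm.mono (cube_mono (le_max_left _ _)))
      (self_mem_cube x _) hy hy

/-- Maximising `u y * (s + 1) ^ β` over the pairs with `cube y s ⊆ cube c R` selects a point that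
both dominates its surroundings and carries the size of `u` on the half cube. -/
lemma exists_weighted_max {u : V d → ℝ} (hu : ∀ x, 0 ≤ u x) (c : V d) (R β : ℕ) :
    ∃ s ≤ R, ∃ w ∈ cube c (R - s), (∀ y ∈ cube w (s / 2), u y ≤ 2 ^ β * u w) ∧
      ∀ x ∈ cube c (R / 2), u x * (R / 2) ^ β ≤ u w * (s + 1) ^ β := by
  let pairs : Set (ℕ × V d) := {p | p.1 ≤ R ∧ p.2 ∈ cube c (R - p.1)}
  have hfin : pairs.Finite := ((Set.finite_Iic R).prod (cube_finite c R)).subset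
    fun p hp => ⟨hp.1, cube_mono (Nat.sub_le _ _) hp.2⟩
  obtain ⟨⟨s, w⟩, ⟨hs, hw⟩, hmax⟩ := Set.exists_max_image pairs
    (fun p => u p.2 * ((p.1 : ℝ) + 1) ^ β) hfin ⟨(0, c), R.zero_le, self_mem_cube c _⟩
  dsimp only at hs hw
  refine ⟨s, hs, w, hw, fun y hy => ?_, fun x hx => ?_⟩
  · have hle : ((s : ℝ) + 1) ≤ 2 * ((s - s / 2 : ℕ) + 1) := by norm_cast; omega
    have hpos : (0 : ℝ) < ((s - s / 2 : ℕ) + 1 : ℝ) ^ β := by positivity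
    refine le_of_mul_le_mul_right ?_ hpos
    calc u y * ((s - s / 2 : ℕ) + 1 : ℝ) ^ β ≤ u w * ((s : ℝ) + 1) ^ β :=
          hmax (s - s / 2, y) ⟨(Nat.sub_le _ _).trans hs, mem_cube_trans hw hy (by omega)⟩
      _ ≤ u w * (2 * ((s - s / 2 : ℕ) + 1)) ^ β := by
          have := hu w
          gcongr
      _ = 2 ^ β * u w * ((s - s / 2 : ℕ) + 1 : ℝ) ^ β := by rw [mul_pow]; ring
  · have hle : (R : ℝ) / 2 ≤ (R - R / 2 : ℕ) + 1 := by
      rw [div_le_iff₀ two_pos]; norm_cast; omega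
    calc u x * ((R : ℝ) / 2) ^ β ≤ u x * ((R - R / 2 : ℕ) + 1) ^ β := by
          have := hu x
          gcongr
      _ ≤ u w * (s + 1) ^ β :=
          hmax (R - R / 2, x) ⟨Nat.sub_le _ _, cube_mono (by omega) hx⟩

lemma HarmonicOn.le_mul_of_mem_half_cube [NeZero d] {u : V d → ℝ} (hu : ∀ x, 0 ≤ u x)
    {c x : V d} {R β : ℕ} (hR : 2 * d ≤ R) (hβ : (1 / 2 : ℝ) ^ β ≤ doublingConst d)
    (hharm : HarmonicOn u (cube c (4 * d * R))) (hx : x ∈ cube c (R / 2)) :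
    u x ≤ (2 * d) ^ (2 * d * d) * (8 * harnackRatio d β) ^ β * u c := by
  have hd := NeZero.pos d
  set K : ℝ := (2 * d) ^ (2 * d * d)
  set L := harnackRatio d β with hL
  have hL₀ : 0 < L := by rw [hL, harnackRatio]; positivity
  have hK : 0 < K := pow_pos (by have := dim_pos (d := d); positivity) _
  obtain ⟨s, hs, w, hw, hdom, hsize⟩ := exists_weighted_max hu c R β
  set r := max (2 * d) (s / L)
  have hrR : r ≤ R := max_le hR ((Nat.div_le_self s L).trans hs)
  have hsr : ((s : ℝ) + 1) ≤ 2 * L * r := by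
    have : s < L * (s / L + 1) := Nat.lt_mul_div_succ s hL₀
    have : L * (s / L + 1) ≤ L * (2 * r) := by gcongr; omega
    norm_cast
    linarith
  have hsub : cube w (3 * d * R) ⊆ cube c (4 * d * R) := fun v hv =>
    mem_cube_trans hw hv (by nlinarith [Nat.sub_le R s])
  have hlower : ∀ y ∈ cube w r, u w / K ≤ u y := fun y hy => by
    rw [div_le_iff₀' hK]
    refine HarmonicOn.mul_le_of_le_two_pow_mul hu (hharm.mono (.trans (cube_mono ?_) hsub)) hdom hy
    exact max_le (by nlinarith) ((Nat.div_le_self s 2).trans (by nlinarith))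
  have hcentre : u w / K * r ^ β ≤ u c * (2 * R) ^ β :=
    HarmonicOn.mul_pow_le_mul_pow hu (le_max_left _ _) (by omega) hβ (hharm.mono hsub)
      (div_nonneg (hu w) hK.le) hlower (cube_mono (Nat.sub_le _ _) (mem_cube_comm.1 hw))
  have hR₀ : (0 : ℝ) < R := by norm_cast; omega
  refine le_of_mul_le_mul_right ?_ (pow_pos (half_pos hR₀) β)
  calc u x * (R / 2) ^ β ≤ u w * (s + 1) ^ β := hsize x hx
    _ ≤ u w * (2 * L * r) ^ β := mul_le_mul_of_nonneg_left
        (pow_le_pow_left₀ (by positivity) hsr β) (hu w)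
    _ = K * (2 * L) ^ β * (u w / K * r ^ β) := by rw [mul_pow _ (r : ℝ)]; field_simp
    _ ≤ K * (2 * L) ^ β * (u c * (2 * R) ^ β) := by gcongr
    _ = K * (8 * L) ^ β * u c * (R / 2) ^ β := by
        have hR₄ : 2 * (R : ℝ) = 4 * (R / 2) := by ring
        have hL₈ : 8 * (L : ℝ) = 4 * (2 * L) := by ring
        rw [hR₄, hL₈, mul_pow 4, mul_pow 4]
        ring

lemma HarmonicOn.exists_harnack (d : ℕ) [NeZero d] : ∃ C : ℝ, 1 ≤ C ∧
    ∀ u : V d → ℝ, (∀ x, 0 ≤ u x) → ∀ (c : V d) (R : ℕ), HarmonicOn u (cube c (4 * d * R)) →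
      ∀ x ∈ cube c (R / 2), u x ≤ C * u c := by
  have hd := NeZero.pos d
  obtain ⟨β, hβ⟩ := exists_pow_lt_of_lt_one (doublingConst_pos (d := d)) one_half_lt_one
  set C₁ : ℝ := (2 * d) ^ (2 * d * d) * (8 * harnackRatio d β) ^ β
  set C₂ : ℝ := (2 * d) ^ (d * d)
  refine ⟨max (max C₁ C₂) 1, le_max_right _ _, fun u hu c R hharm x hx => ?_⟩
  have hcases : u x ≤ C₁ * u c ∨ u x ≤ C₂ * u c := by
    rcases le_or_gt (2 * d) R with hR | hR
    · exact .inl (HarmonicOn.le_mul_of_mem_half_cube hu hR hβ.le hharm hx)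
    · have hsub : R / 2 ≤ 4 * d * R :=
        (Nat.div_le_self R 2).trans (Nat.le_mul_of_pos_left R (by omega))
      exact .inr (HarmonicOn.le_pow_mul_of_mem_cube hu (hharm.mono (cube_mono hsub)) hx
        (self_mem_cube c _) (cube_mono (by omega) (mem_cube_comm.1 hx)))
  rcases hcases with h | h
  · exact h.trans (mul_le_mul_of_nonneg_right ((le_max_left _ _).trans (le_max_left _ _)) (hu c))
  · exact h.trans (mul_le_mul_of_nonneg_right ((le_max_right _ _).trans (le_max_left _ _)) (hu c))

lemma le_pow_mul_of_forall_mem_cube {lo hi : V d} {u : V d → ℝ} {C : ℝ} {s : ℕ} (hC : 0 ≤ C)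
    (hnear : ∀ x ∈ Set.Icc lo hi, ∀ y ∈ Set.Icc lo hi, y ∈ cube x s → u x ≤ C * u y) {y : V d}
    (hy : y ∈ Set.Icc lo hi) (k : ℕ) :
    ∀ x ∈ Set.Icc lo hi, y ∈ cube x (k * s) → u x ≤ C ^ k * u y := by
  induction k with
  | zero =>
    intro x _ hxy
    have hxy' : x = y := funext fun i => by
      have := abs_le.1 (mem_cube_iff_abs_sub_le.1 hxy i)
      omega
    rw [hxy', pow_zero, one_mul]
  | succ k ih =>
    intro x hx hxy
    let z : V d := fun i => (x i - (s : ℤ)) ⊔ (y i ⊓ (x i + s))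
    have hcoord : ∀ i, (lo i ≤ z i ∧ z i ≤ hi i) ∧ |z i - x i| ≤ s ∧ |y i - z i| ≤ (k * s : ℕ) := by
      intro i
      have hx_i : lo i ≤ x i ∧ x i ≤ hi i := ⟨hx.1 i, hx.2 i⟩
      have hy_i : lo i ≤ y i ∧ y i ≤ hi i := ⟨hy.1 i, hy.2 i⟩
      have hxy_i := abs_le.1 (mem_cube_iff_abs_sub_le.1 hxy i)
      rw [add_one_mul] at hxy_i
      simp only [abs_le, z]
      omega
    have hz : z ∈ Set.Icc lo hi := ⟨fun i => (hcoord i).1.1, fun i => (hcoord i).1.2⟩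
    calc u x ≤ C * u z := hnear x hx z hz fun i => (hcoord i).2.1
      _ ≤ C * (C ^ k * u y) := by gcongr; exact ih z hz fun i => (hcoord i).2.2
      _ = C ^ (k + 1) * u y := by ring

lemma HarmonicOn.exists_cube_harnack (d : ℕ) [NeZero d] (k : ℕ) : ∃ C : ℝ, 1 ≤ C ∧
    ∀ u : V d → ℝ, (∀ x, 0 ≤ u x) → ∀ (c : V d) (r ρ : ℕ), r ≤ k * (ρ + 1) →
      HarmonicOn u (cube c (r + ρ)) → ∀ x ∈ cube c r, ∀ y ∈ cube c r, u x ≤ C * u y := by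
  obtain ⟨C, hC, hharnack⟩ := HarmonicOn.exists_harnack d
  refine ⟨max C ((2 * d) ^ (1 * d)) ^ (32 * d * k), one_le_pow₀ (hC.trans (le_max_left _ _)),
    fun u hu c r ρ hr hharm x hx y hy => ?_⟩
  have hd := NeZero.pos d
  set R := ρ / (4 * d)
  have hRρ : 4 * d * R ≤ ρ := Nat.mul_div_le ..
  have hρR : ρ < 4 * d * (R + 1) := Nat.lt_mul_div_succ ρ (by positivity)
  set s := max 1 (R / 2)
  have hnear : ∀ x ∈ cube c r, ∀ y ∈ cube c r, y ∈ cube x s →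
      u x ≤ max C ((2 * d) ^ (1 * d)) * u y := by
    intro x hx y hy hxy
    rcases le_total 1 (R / 2) with hR | hR
    · refine (hharnack u hu y R (hharm.mono fun v hv => mem_cube_trans hy hv (by omega)) x
        ?_).trans (mul_le_mul_of_nonneg_right (le_max_left _ _) (hu y))
      rwa [← max_eq_right hR, ← mem_cube_comm]
    · refine (HarmonicOn.le_pow_mul_of_mem_cube hu (hharm.mono (cube_mono (Nat.le_add_right r ρ)))
        hx hy ?_).trans (mul_le_mul_of_nonneg_right (le_max_right _ _) (hu y))
      rwa [← max_eq_left hR]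
  have hdist : 2 * r ≤ 32 * d * k * s := by
    have hs : R + 1 ≤ 4 * s := by omega
    calc 2 * r ≤ 2 * (k * (4 * d * (R + 1))) := by gcongr; exact hr.trans (by gcongr; omega)
      _ ≤ 2 * (k * (4 * d * (4 * s))) := by gcongr
      _ = 32 * d * k * s := by ring
  rw [cube_eq_Icc] at hnear
  exact le_pow_mul_of_forall_mem_cube (by positivity) hnear (cube_eq_Icc c r ▸ hy) _ x
    (cube_eq_Icc c r ▸ hx) (mem_cube_trans (mem_cube_comm.1 hx) hy (by omega))

/-! ### A strictly superharmonic function -/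

lemma rpow_neg_quarter_le {t : ℝ} (ht : -(1 / 20) ≤ t) :
    (1 + t) ^ (-(1 / 4) : ℝ) ≤ 1 - t / 4 + 11 / 64 * t ^ 2 := by
  have hpos : 0 < 1 + t := by linarith
  obtain ⟨y, hy, hy₀, hpow⟩ : ∃ y : ℝ, y⁻¹ = (1 + t) ^ (-(1 / 4) : ℝ) ∧ 0 < y ∧ y ^ 4 = 1 + t :=
    ⟨(1 + t) ^ (1 / 4 : ℝ), (Real.rpow_neg hpos.le _).symm, Real.rpow_pos_of_pos hpos _, by
      rw [← Real.rpow_natCast, ← Real.rpow_mul hpos.le]; norm_num⟩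
  have hy₁ : 0.98 ≤ y := by
    by_contra! h
    have : y ^ 4 < 0.98 ^ 4 := pow_lt_pow_left₀ h hy₀.le (by norm_num)
    norm_num at this
    linarith
  obtain rfl : t = y ^ 4 - 1 := by linarith
  rw [← hy, inv_le_iff_one_le_mul₀ hy₀]
  have hquot : 0 ≤ 11 * y ^ 7 + 22 * y ^ 6 + 33 * y ^ 5 + 44 * y ^ 4 + 17 * y ^ 3 - 10 * y ^ 2
      - 37 * y - 64 := by
    obtain ⟨s, hs, rfl⟩ : ∃ s, 0 ≤ s ∧ y = 0.98 + s := ⟨y - 0.98, by linarith, by ring⟩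
    ring_nf
    positivity
  linear_combination (1 / 64) * (y - 1) ^ 2 * hquot

/-- A regularisation of `|x| ^ (-1/2)`, strictly superharmonic in dimension at least three. The
shift `400` keeps the relative change of `|x| ^ 2 + 400` along a step below `1 / 20`. -/
noncomputable def potential (x : V d) : ℝ := (sqNorm x + 400) ^ (-(1 / 4) : ℝ)

lemma potential_pos (x : V d) : 0 < potential x :=
  Real.rpow_pos_of_pos (by linarith [sqNorm_nonneg x]) _

lemma potential_add_step_le (x : V d) (p : Fin d × ℤˣ) :
    potential (x + step p) ≤ potential x * (1 - (1 + 2 * height p x) / (sqNorm x + 400) / 4 +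
      11 / 64 * ((1 + 2 * height p x) / (sqNorm x + 400)) ^ 2) := by
  have hsq : (height p x : ℝ) ^ 2 ≤ sqNorm x := sq_height_le_sqNorm p x
  set h : ℝ := (height p x : ℝ)
  set σ := sqNorm x + 400
  have hσ₀ : 0 < σ := by linarith [sqNorm_nonneg x]
  have ht : -(1 / 20) ≤ (1 + 2 * h) / σ := by
    rw [le_div_iff₀ hσ₀]
    linarith [sq_nonneg (h + 20)]
  have hfactor : sqNorm (x + step p) + 400 = σ * (1 + (1 + 2 * h) / σ) := by
    rw [sqNorm_add_step]
    field_simp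
    ring
  rw [potential, hfactor, Real.mul_rpow hσ₀.le (by linarith)]
  exact mul_le_mul_of_nonneg_left (rpow_neg_quarter_le ht) (potential_pos x).le

lemma sum_height (x : V d) : ∑ p, (height p x : ℝ) = 0 := by
  have huniv : (Finset.univ : Finset ℤˣ) = {1, -1} := by decide
  simp only [Fintype.sum_prod_type, height, huniv, Finset.sum_pair (show (1 : ℤˣ) ≠ -1 by decide)]
  simp

lemma sum_sq_height (x : V d) : ∑ p, (height p x : ℝ) ^ 2 = 2 * sqNorm x := by
  simp only [sq_height, Fintype.sum_prod_type, Finset.sum_const, Finset.card_univ,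
    Fintype.card_units_int, nsmul_eq_mul, sqNorm, Finset.mul_sum, Nat.cast_ofNat]

lemma avg_potential_lt [h : Fact (3 ≤ d)] (x : V d) : avg potential x < potential x := by
  have hd : (3 : ℝ) ≤ d := by exact_mod_cast h.out
  have hn := sqNorm_nonneg x
  set σ := sqNorm x + 400
  have hσ₀ : 0 < σ := by positivity
  have hsum : ∑ p, (1 - (1 + 2 * (height p x : ℝ)) / σ / 4 +
      11 / 64 * ((1 + 2 * (height p x : ℝ)) / σ) ^ 2) =
      2 * d * (1 - 1 / (4 * σ)) + 11 / 64 * (2 * d + 8 * sqNorm x) / σ ^ 2 := by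
    have hterm : ∀ p, 1 - (1 + 2 * (height p x : ℝ)) / σ / 4 +
        11 / 64 * ((1 + 2 * (height p x : ℝ)) / σ) ^ 2 =
        (1 - 1 / (4 * σ) + 11 / 64 / σ ^ 2) +
          (11 / 16 / σ ^ 2 - 1 / (2 * σ)) * height p x + 11 / 16 / σ ^ 2 * (height p x) ^ 2 := by
      intro p
      field_simp
      ring
    simp only [hterm, Finset.sum_add_distrib, ← Finset.mul_sum, sum_height, sum_sq_height]
    simp only [Finset.sum_const, Finset.card_univ, Fintype.card_prod, Fintype.card_fin,
      Fintype.card_units_int, nsmul_eq_mul]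
    push_cast
    ring
  have hquad : 11 / 64 * (2 * d + 8 * sqNorm x) / σ ^ 2 ≤ 2 * d * (11 / (48 * σ)) := by
    rw [div_le_iff₀ (by positivity)]
    have : 2 * d * (11 / (48 * σ)) * σ ^ 2 = 11 / 24 * (d * σ) := by field_simp; ring
    nlinarith
  have hpos := potential_pos x
  rw [avg_apply, div_lt_iff₀ (by positivity)]
  calc ∑ p, potential (x + step p) ≤ _ := Finset.sum_le_sum fun p _ => potential_add_step_le x p
    _ ≤ potential x * (2 * d * (1 - 1 / (4 * σ)) + 2 * d * (11 / (48 * σ))) := by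
        rw [← Finset.mul_sum, hsum]
        gcongr
    _ = potential x * (2 * d) - potential x * (d / (24 * σ)) := by field_simp; ring
    _ < potential x * (2 * d) := sub_lt_self _ (by positivity)

/-! ### The killed walk and its Green function -/

/-- The transition operator of the walk killed on leaving `U`. -/
noncomputable def killedAvg (U : Set (V d)) : (V d → ℝ) →ₗ[ℝ] (V d → ℝ) where
  toFun f := avg (U.indicator f)
  map_add' f g := by rw [Set.indicator_add', map_add]
  map_smul' c f := by
    rw [RingHom.id_apply, ← map_smul]
    exact congrArg avg (Set.indicator_const_smul U c f)

lemma killedAvg_apply (U : Set (V d)) (f : V d → ℝ) : killedAvg U f = avg (U.indicator f) := rfl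

lemma killedAvg_mono {U : Set (V d)} {f g : V d → ℝ} (h : ∀ x ∈ U, f x ≤ g x) (x : V d) :
    killedAvg U f x ≤ killedAvg U g x :=
  avg_mono fun _ => Set.indicator_apply_le' (fun hy => by simpa [hy] using h _ hy)
    (fun hy => by simp [hy])

lemma killedAvg_mono_set {U W : Set (V d)} (hUW : U ⊆ W) {f : V d → ℝ} (hf : ∀ x, 0 ≤ f x)
    (x : V d) : killedAvg U f x ≤ killedAvg W f x :=
  avg_mono fun _ => Set.indicator_le_indicator_of_subset hUW hf _

lemma killedAvg_le_avg (U : Set (V d)) {f : V d → ℝ} (hf : ∀ x, 0 ≤ f x) (x : V d) :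
    killedAvg U f x ≤ avg f x :=
  avg_mono fun _ => Set.indicator_le_self' (fun _ _ => hf _) _

lemma killedAvg_pow_mono {U : Set (V d)} {f g : V d → ℝ} (h : ∀ x, f x ≤ g x) (t : ℕ) :
    ∀ x, (killedAvg U ^ t) f x ≤ (killedAvg U ^ t) g x := by
  induction t with
  | zero => exact h
  | succ t ih =>
    intro x
    rw [pow_succ', Module.End.mul_apply, Module.End.mul_apply]
    exact killedAvg_mono (fun y _ => ih y) x

lemma killedAvg_pow_nonneg {U : Set (V d)} {f : V d → ℝ} (h : ∀ x, 0 ≤ f x) (t : ℕ) (x : V d) :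
    0 ≤ (killedAvg U ^ t) f x := by
  simpa only [map_zero, Pi.zero_apply] using killedAvg_pow_mono (U := U) (f := 0) h t x

lemma killedAvg_pow_mono_set {U W : Set (V d)} (hUW : U ⊆ W) {f : V d → ℝ} (hf : ∀ x, 0 ≤ f x)
    (t : ℕ) : ∀ x, (killedAvg U ^ t) f x ≤ (killedAvg W ^ t) f x := by
  induction t with
  | zero => exact fun _ => le_rfl
  | succ t ih =>
    intro x
    rw [pow_succ', pow_succ', Module.End.mul_apply, Module.End.mul_apply]
    exact (killedAvg_mono (fun y _ => ih y) x).trans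
      (killedAvg_mono_set hUW (killedAvg_pow_nonneg hf t) x)

lemma sum_killedAvg_pow_le {U : Set (V d)} {f w : V d → ℝ} (hw : ∀ x, 0 ≤ w x)
    (hf : ∀ x, f x ≤ w x - killedAvg U w x) (T : ℕ) (x : V d) :
    ∑ t ∈ Finset.range T, (killedAvg U ^ t) f x ≤ w x := by
  suffices h : ∑ t ∈ Finset.range T, (killedAvg U ^ t) f x ≤ w x - (killedAvg U ^ T) w x from
    h.trans (sub_le_self _ (killedAvg_pow_nonneg hw T x))
  induction T with
  | zero => simp
  | succ T ih =>
    have hstep := killedAvg_pow_mono (U := U) (g := w - killedAvg U w) hf T x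
    rw [map_sub, Pi.sub_apply] at hstep
    rw [Finset.sum_range_succ, pow_succ, Module.End.mul_apply]
    linarith

/-- Transience: a multiple of the potential dominates the expected total of `f` over the life of
the walk. -/
lemma summable_killedAvg_pow [Fact (3 ≤ d)] (U : Set (V d)) {f : V d → ℝ} (hf : ∀ x, 0 ≤ f x)
    (hfin : f.support.Finite) (x : V d) : Summable fun t => (killedAvg U ^ t) f x := by
  let gap : V d → ℝ := fun y => potential y - killedAvg U potential y
  have hgap : ∀ y, 0 < gap y := fun y => sub_pos.2
    ((killedAvg_le_avg U (fun z => (potential_pos z).le) y).trans_lt (avg_potential_lt y))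
  have hratio : ∀ y, 0 ≤ f y / gap y := fun y => div_nonneg (hf y) (hgap y).le
  set C := ∑ y ∈ hfin.toFinset, f y / gap y
  have hC : 0 ≤ C := Finset.sum_nonneg fun y _ => hratio y
  have hbound : ∀ y, f y ≤ (C • potential) y - killedAvg U (C • potential) y := by
    intro y
    have hCgap : (C • potential) y - killedAvg U (C • potential) y = C * gap y := by
      rw [map_smul, Pi.smul_apply, Pi.smul_apply, smul_eq_mul, smul_eq_mul, mul_sub]
    rw [hCgap]
    by_cases hy : f y = 0
    · exact hy ▸ mul_nonneg hC (hgap y).le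
    · rw [← div_le_iff₀ (hgap y)]
      exact Finset.single_le_sum (f := fun y => f y / gap y) (fun y _ => hratio y)
        (hfin.mem_toFinset.2 hy)
  exact summable_of_sum_range_le (fun t => killedAvg_pow_nonneg hf t x) fun T =>
    sum_killedAvg_pow_le (fun y => mul_nonneg hC (potential_pos y).le) hbound T x

/-- The probability that the walk from `x` is at `y` at time `t` and lies in `U` at the times
`1, …, t`. -/
noncomputable def killedHeat (U : Set (V d)) (x : V d) (t : ℕ) (y : V d) : ℝ :=
  (killedAvg U ^ t) (Pi.single y 1) x

lemma single_one_nonneg (y x : V d) : 0 ≤ (Pi.single y 1 : V d → ℝ) x :=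
  (Pi.single_nonneg (α := fun _ => ℝ) (i := y)).2 zero_le_one x

lemma killedHeat_nonneg (U : Set (V d)) (x : V d) (t : ℕ) (y : V d) : 0 ≤ killedHeat U x t y :=
  killedAvg_pow_nonneg (single_one_nonneg y) t x

lemma killedHeat_zero (U : Set (V d)) (x y : V d) :
    killedHeat U x 0 y = if y = x then 1 else 0 := by
  rw [killedHeat, pow_zero, Module.End.one_apply, Pi.single_apply]
  simp only [eq_comm]

lemma killedAvg_single (U : Set (V d)) (y : V d) : killedAvg U (Pi.single y 1) =
    if y ∈ U then (2 * (d : ℝ))⁻¹ • ∑ p, Pi.single (y + step p) 1 else 0 := by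
  funext x
  have hterm : ∀ p, U.indicator (Pi.single y (1 : ℝ)) (x + step p) =
      if y ∈ U then (Pi.single (y + step (p.1, -p.2)) 1 : V d → ℝ) x else 0 := by
    intro p
    have hiff : x = y + step (p.1, -p.2) ↔ x + step p = y := by
      rw [step_neg, ← sub_eq_add_neg, eq_sub_iff_add_eq]
    by_cases hxy : x + step p = y
    · simp [Set.indicator_apply, Pi.single_apply, hiff, hxy]
    · simp [Set.indicator_apply, hiff, hxy]
  rw [killedAvg_apply, avg_apply]
  simp only [hterm]
  split_ifs
  · rw [Pi.smul_apply, Finset.sum_apply, smul_eq_mul, div_eq_inv_mul,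
      ← Equiv.sum_comp (Equiv.prodCongr (Equiv.refl (Fin d)) (Equiv.neg ℤˣ))]
    simp
  · simp

lemma killedHeat_succ (U : Set (V d)) (x : V d) (t : ℕ) (y : V d) :
    killedHeat U x (t + 1) y = if y ∈ U then avg (killedHeat U x t) y else 0 := by
  rw [killedHeat, pow_succ, Module.End.mul_apply, killedAvg_single]
  split_ifs with hy
  · rw [map_smul, map_sum, Pi.smul_apply, Finset.sum_apply, smul_eq_mul, avg_apply, div_eq_inv_mul]
    rfl
  · rw [map_zero, Pi.zero_apply]

/-- The Green function of the walk killed on leaving `U`; the starting point counts even outside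
`U`. -/
noncomputable def green (U : Set (V d)) (x y : V d) : ℝ := ∑' t, killedHeat U x t y

lemma summable_killedHeat [Fact (3 ≤ d)] (U : Set (V d)) (x y : V d) :
    Summable fun t => killedHeat U x t y :=
  summable_killedAvg_pow U (single_one_nonneg y)
    ((Set.finite_singleton y).subset Pi.support_single_subset) x

lemma green_nonneg (U : Set (V d)) (x y : V d) : 0 ≤ green U x y :=
  tsum_nonneg fun t => killedHeat_nonneg U x t y

lemma green_mono_set [Fact (3 ≤ d)] {U W : Set (V d)} (hUW : U ⊆ W) (x y : V d) :
    green U x y ≤ green W x y :=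
  Summable.tsum_le_tsum (fun t => killedAvg_pow_mono_set hUW (single_one_nonneg y) t x)
    (summable_killedHeat U x y) (summable_killedHeat W x y)

lemma avg_tsum {f : ℕ → V d → ℝ} (hf : ∀ y, Summable fun t => f t y) (x : V d) :
    avg (fun y => ∑' t, f t y) x = ∑' t, avg (f t) x := by
  simp only [avg_apply]
  rw [tsum_div_const, Summable.tsum_finsetSum fun p _ => hf _]

lemma harmonicOn_green [Fact (3 ≤ d)] (U : Set (V d)) (x : V d) :
    HarmonicOn (green U x) (U \ {x}) := by
  rintro y ⟨hyU, hyx⟩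
  have hsucc : ∀ t, killedHeat U x (t + 1) y = avg (killedHeat U x t) y := fun t => by
    rw [killedHeat_succ, if_pos hyU]
  have hzero : killedHeat U x 0 y = 0 := by rw [killedHeat_zero, if_neg (by simpa using hyx)]
  calc avg (green U x) y = ∑' t, avg (killedHeat U x t) y := avg_tsum (summable_killedHeat U x) y
    _ = green U x y := by
        rw [green, (summable_killedHeat U x y).tsum_eq_zero_add, hzero, zero_add]
        simp only [hsucc]

lemma le_killedAvg_pow_add_sum {U B : Set (V d)} (hUB : U ⊆ B) {f g : V d → ℝ}
    (hf : ∀ x ∈ B, f x ≤ killedAvg U f x + g x) (T : ℕ) :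
    ∀ x ∈ B, f x ≤ (killedAvg U ^ T) f x + ∑ t ∈ Finset.range T, (killedAvg U ^ t) g x := by
  induction T with
  | zero => simp
  | succ T ih =>
    intro x hx
    set R : V d → ℝ := (killedAvg U ^ T) f + ∑ t ∈ Finset.range T, (killedAvg U ^ t) g with hR
    have hmono : killedAvg U f x ≤ killedAvg U R x := killedAvg_mono (fun y hy => by
      simpa only [hR, Pi.add_apply, Finset.sum_apply] using ih y (hUB hy)) x
    have hshift : killedAvg U R x = (killedAvg U ^ (T + 1)) f x +
        ∑ t ∈ Finset.range T, (killedAvg U ^ (t + 1)) g x := by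
      rw [hR, map_add, map_sum]
      simp only [Pi.add_apply, Finset.sum_apply, pow_succ', Module.End.mul_apply]
    rw [Finset.sum_range_succ', pow_zero, Module.End.one_apply]
    linarith [hf x hx]

lemma tendsto_killedAvg_pow_zero [Fact (3 ≤ d)] (U : Set (V d)) {f : V d → ℝ}
    (hfin : f.support.Finite) (x : V d) :
    Filter.Tendsto (fun t => (killedAvg U ^ t) f x) Filter.atTop (nhds 0) := by
  have habs := (summable_killedAvg_pow U (f := fun y => |f y|) (fun y => abs_nonneg _)
    (hfin.subset fun y hy => abs_ne_zero.1 hy) x).tendsto_atTop_zero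
  refine tendsto_of_tendsto_of_tendsto_of_le_of_le (by simpa using habs.neg) habs (fun t => ?_)
    (fun t => killedAvg_pow_mono (fun y => le_abs_self _) t x)
  have hneg := killedAvg_pow_mono (U := U) (f := -fun y => |f y|) (fun y => neg_abs_le (f y)) t x
  rwa [map_neg] at hneg

/-- Iterating the one-step inequality leaves the total cost `κ` collected on `F` over the life of
the walk. -/
lemma le_mul_sum_green [Fact (3 ≤ d)] {U B : Set (V d)} (hUB : U ⊆ B) (hB : B.Finite)
    {f : V d → ℝ} {κ : ℝ} (hκ : 0 ≤ κ) (F : Finset (V d))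
    (hf : ∀ x ∈ B, f x ≤ killedAvg U f x + κ) (hfF : ∀ x ∈ B, x ∉ F → f x ≤ killedAvg U f x)
    {x : V d} (hx : x ∈ B) : f x ≤ κ * ∑ y ∈ F, green U x y := by
  set g : V d → ℝ := κ • ∑ y ∈ F, Pi.single y 1 with hg
  have hg_apply : ∀ y, g y = if y ∈ F then κ else 0 := fun y => by
    simp [hg, Finset.sum_apply, Pi.single_apply]
  have hsum : ∀ T, ∑ t ∈ Finset.range T, (killedAvg U ^ t) g x ≤ κ * ∑ y ∈ F, green U x y := by
    intro T
    have hpow : ∀ t, (killedAvg U ^ t) g x = κ * ∑ y ∈ F, killedHeat U x t y := fun t => by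
      rw [hg, map_smul, map_sum, Pi.smul_apply, Finset.sum_apply, smul_eq_mul]
      rfl
    simp only [hpow, ← Finset.mul_sum]
    rw [Finset.sum_comm]
    exact mul_le_mul_of_nonneg_left (Finset.sum_le_sum fun y _ =>
      (summable_killedHeat U x y).sum_le_tsum _ fun t _ => killedHeat_nonneg U x t y) hκ
  have hkilled : killedAvg U (B.indicator f) = killedAvg U f := by
    rw [killedAvg_apply, killedAvg_apply, Set.indicator_indicator, Set.inter_eq_left.2 hUB]
  have hiter : ∀ T, B.indicator f x ≤ (killedAvg U ^ T) (B.indicator f) x +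
      κ * ∑ y ∈ F, green U x y := fun T =>
    (le_killedAvg_pow_add_sum hUB (g := g) (fun y hy => by
      rw [hkilled, Set.indicator_of_mem hy, hg_apply]
      split_ifs with hyF
      exacts [hf y hy, (hfF y hy hyF).trans_eq (add_zero _).symm]) T x hx).trans
      (add_le_add_right (hsum T) _)
  have hlim := (tendsto_killedAvg_pow_zero U (f := B.indicator f)
    (hB.subset Set.support_indicator_subset) x).add_const (κ * ∑ y ∈ F, green U x y)
  simpa only [Set.indicator_of_mem hx, zero_add] using ge_of_tendsto' hlim hiter

lemma inv_two_mul_dim_pow_le_killedHeat [NeZero d] {U : Set (V d)} {x : V d} {p : Fin d × ℤˣ}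
    (k : ℕ) (h : ∀ j : ℕ, 1 ≤ j → j ≤ k → x + (j : ℤ) • step p ∈ U) :
    (2 * (d : ℝ))⁻¹ ^ k ≤ killedHeat U x k (x + (k : ℤ) • step p) := by
  induction k with
  | zero => simp [killedHeat_zero]
  | succ k ih =>
    have hback : x + ((k + 1 : ℕ) : ℤ) • step p + step (p.1, -p.2) = x + (k : ℤ) • step p := by
      rw [step_neg]
      push_cast
      rw [add_smul, one_smul]
      abel
    have hneighbour := le_two_mul_dim_mul_avg
      (fun q => killedHeat_nonneg U x k (x + ((k + 1 : ℕ) : ℤ) • step p + step q)) (p.1, -p.2)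
    rw [hback] at hneighbour
    have hd : (0 : ℝ) < 2 * d := by linarith [dim_pos (d := d)]
    rw [killedHeat_succ, if_pos (h (k + 1) (by omega) le_rfl), pow_succ, ← div_eq_mul_inv,
      div_le_iff₀' hd]
    exact (ih fun j hj hjk => h j hj (by omega)).trans hneighbour

lemma killedHeat_le_green [Fact (3 ≤ d)] (U : Set (V d)) (x : V d) (t : ℕ) (y : V d) :
    killedHeat U x t y ≤ green U x y :=
  (summable_killedHeat U x y).le_tsum t fun s _ => killedHeat_nonneg U x s y

/-! ### Escape probabilities -/

/-- The probability that the walk from a point avoids `K` up to its exit from `D`, when it is run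
for at most the given number of steps. -/
noncomputable def escapeProbUpTo (D K : Set (V d)) : ℕ → V d → ℝ
  | 0, x => if x ∈ K then 0 else 1
  | T + 1, x => if x ∈ K then 0 else if x ∈ D then avg (escapeProbUpTo D K T) x else 1

lemma escapeProbUpTo_of_mem {D K : Set (V d)} {x : V d} (hx : x ∈ K) (T : ℕ) :
    escapeProbUpTo D K T x = 0 := by
  cases T <;> exact if_pos hx

lemma escapeProbUpTo_succ {D K : Set (V d)} {x : V d} (hx : x ∉ K) (hD : x ∈ D) (T : ℕ) :
    escapeProbUpTo D K (T + 1) x = avg (escapeProbUpTo D K T) x :=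
  (if_neg hx).trans (if_pos hD)

lemma escapeProbUpTo_nonneg (D K : Set (V d)) (T : ℕ) : ∀ x, 0 ≤ escapeProbUpTo D K T x := by
  induction T with
  | zero => intro x; rw [escapeProbUpTo]; split_ifs <;> norm_num
  | succ T ih =>
    intro x
    rw [escapeProbUpTo]
    split_ifs
    exacts [le_rfl, avg_nonneg fun p => ih _, zero_le_one]

lemma escapeProbUpTo_succ_le [NeZero d] (D K : Set (V d)) (T : ℕ) :
    ∀ x, escapeProbUpTo D K (T + 1) x ≤ escapeProbUpTo D K T x := by
  induction T with
  | zero =>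
    intro x
    rw [escapeProbUpTo, escapeProbUpTo]
    split_ifs with hK hD
    exacts [le_rfl, avg_le_of_le fun p => by rw [escapeProbUpTo]; split_ifs <;> norm_num, le_rfl]
  | succ T ih =>
    intro x
    rw [escapeProbUpTo, escapeProbUpTo]
    split_ifs
    exacts [le_rfl, avg_mono fun p => ih _, le_rfl]

lemma escapeProbUpTo_le_one [NeZero d] (D K : Set (V d)) (T : ℕ) (x : V d) :
    escapeProbUpTo D K T x ≤ 1 := by
  refine (antitone_nat_of_succ_le (f := fun T => escapeProbUpTo D K T x)
    (fun T => escapeProbUpTo_succ_le D K T x) T.zero_le).trans ?_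
  change (if x ∈ K then (0 : ℝ) else 1) ≤ 1
  split_ifs <;> norm_num

/-- Comparison principle for the escape probabilities on a set `Ω`. -/
lemma le_escapeProbUpTo {D K Ω : Set (V d)} {g : V d → ℝ} (hK : ∀ x ∈ Ω, x ∈ K → g x ≤ 0)
    (hle : ∀ x ∈ Ω, g x ≤ 1) (hsub : ∀ x ∈ Ω, g x ≤ avg g x)
    (hbdry : ∀ T, ∀ x ∈ Ω, ∀ p, x + step p ∉ Ω → g (x + step p) ≤ escapeProbUpTo D K T (x + step p))
    (T : ℕ) : ∀ x ∈ Ω, g x ≤ escapeProbUpTo D K T x := by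
  induction T with
  | zero =>
    intro x hx
    rw [escapeProbUpTo]
    split_ifs with hxK
    exacts [hK x hx hxK, hle x hx]
  | succ T ih =>
    intro x hx
    rw [escapeProbUpTo]
    split_ifs with hxK
    · exact hK x hx hxK
    · refine (hsub x hx).trans (avg_mono fun p => ?_)
      by_cases hp : x + step p ∈ Ω
      exacts [ih _ hp, hbdry T x hx p hp]
    · exact hle x hx

lemma half_le_escapeProbUpTo [Fact (3 ≤ d)] {D K : Set (V d)} {x : V d}
    (hK : ∀ y ∈ K, 2 * potential x ≤ potential y) (T : ℕ) : 1 / 2 ≤ escapeProbUpTo D K T x := by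
  have hx := potential_pos x
  set M := (2 * potential x)⁻¹
  have hM : 0 < M := by positivity
  have hMx : 1 - M * potential x = 1 / 2 := by simp only [M]; field_simp; norm_num
  have havg : ∀ y, avg (fun y => 1 - M * potential y) y = 1 - M * avg potential y := fun y =>
    (avg_const_sub 1 (M • potential) y).trans
      (congrArg (1 - ·) (congrFun (map_smul avg M (potential (d := d))) y))
  refine hMx.ge.trans (le_escapeProbUpTo (Ω := Set.univ) (g := fun y => 1 - M * potential y)
    (fun y _ hy => ?_) (fun y _ => ?_) (fun y _ => ?_) (fun _ _ _ _ h => (h trivial).elim) T x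
    trivial)
  · rw [sub_nonpos, ← div_eq_inv_mul, one_le_div (by positivity)]
    exact hK y hy
  · exact sub_le_self _ (mul_nonneg hM.le (potential_pos y).le)
  · rw [havg]
    exact sub_le_sub_left (mul_le_mul_of_nonneg_left (avg_potential_lt y).le hM.le) _

lemma two_mul_potential_le {x y : V d} (h : 16 * (sqNorm y + 400) ≤ sqNorm x + 400) :
    2 * potential x ≤ potential y := by
  have hy : 0 < sqNorm y + 400 := by linarith [sqNorm_nonneg y]
  have hpow : (16 : ℝ) ^ (-(1 / 4) : ℝ) = 1 / 2 := by
    rw [show (16 : ℝ) = 2 ^ (4 : ℝ) by norm_num, ← Real.rpow_mul zero_le_two]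
    norm_num [Real.rpow_neg_one]
  have hle : potential x ≤ (16 * (sqNorm y + 400)) ^ (-(1 / 4) : ℝ) :=
    Real.rpow_le_rpow_of_nonpos (by positivity) h (by norm_num)
  rw [Real.mul_rpow (by norm_num) hy.le, hpow] at hle
  rw [potential.eq_1 y]
  linarith

lemma half_le_escapeProbUpTo_of_notMem_cube [Fact (3 ≤ d)] {D K : Set (V d)} {N : ℕ}
    (hN : 16 ≤ N) (hK : K ⊆ cube 0 N) {x : V d} (hx : x ∉ cube 0 ((4 * d + 8) * N)) (T : ℕ) :
    1 / 2 ≤ escapeProbUpTo D K T x := by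
  refine half_le_escapeProbUpTo (fun y hy => two_mul_potential_le ?_) T
  have hy' := sqNorm_sub_le_of_mem_cube (hK hy)
  have hx' := sq_le_sqNorm_sub_of_notMem_cube hx
  rw [sub_zero] at hx' hy'
  push_cast at hx'
  have hd := one_le_dim (d := d)
  have hN' : (16 : ℝ) ^ 2 ≤ (N : ℝ) ^ 2 :=
    pow_le_pow_left₀ (by norm_num) (by exact_mod_cast hN) 2
  have : (d : ℝ) * N ^ 2 ≤ (d * N) ^ 2 := by
    rw [mul_pow]
    exact mul_le_mul_of_nonneg_right (le_self_pow₀ hd two_ne_zero) (sq_nonneg _)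
  nlinarith [mul_nonneg (dim_pos (d := d)).le (sq_nonneg (N : ℝ))]

lemma sum_height_step (p : Fin d × ℤˣ) : ∑ q, (height p (step q) : ℝ) = 0 := by
  rw [← sum_height (step p)]
  refine Finset.sum_congr rfl fun q _ => ?_
  rw [height_step_eq, height_step_eq]
  by_cases h : q.1 = p.1
  · rw [if_pos h, if_pos h.symm, mul_comm]
  · rw [if_neg h, if_neg (Ne.symm h)]

lemma avg_height_affine [NeZero d] (p : Fin d × ℤˣ) (a b : ℝ) (x : V d) :
    avg (fun y => a * height p y + b) x = a * height p x + b := by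
  have hd := dim_pos (d := d)
  have hsum : ∑ q, (a * (height p (x + step q) : ℝ) + b) = 2 * d * (a * height p x + b) := by
    simp only [height_add, Int.cast_add, mul_add, Finset.sum_add_distrib, ← Finset.mul_sum,
      sum_height_step, Finset.sum_const, Finset.card_univ, Fintype.card_prod, Fintype.card_fin,
      Fintype.card_units_int, nsmul_eq_mul]
    push_cast
    ring
  rw [avg_apply, hsum]
  field_simp

lemma abs_height_le_of_mem_cube {p : Fin d × ℤˣ} {x : V d} {r : ℕ} (hx : x ∈ cube 0 r) :
    |height p x| ≤ r :=
  abs_height p x ▸ mem_cube_zero_iff.1 hx p.1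

lemma notMem_cube_of_lt_height {p : Fin d × ℤˣ} {x : V d} {r : ℕ} (hx : (r : ℤ) < height p x) :
    x ∉ cube 0 r :=
  fun h => hx.not_ge ((le_abs_self _).trans (abs_height_le_of_mem_cube h))

lemma exists_lt_height_of_notMem_cube {x : V d} {r : ℕ} (hx : x ∉ cube 0 r) :
    ∃ p, (r : ℤ) < height p x := by
  simp only [mem_cube_zero_iff, not_forall, not_le] at hx
  obtain ⟨i, hi⟩ := hx
  obtain h | h := lt_abs.1 hi
  · exact ⟨(i, 1), by simpa [height] using h⟩
  · exact ⟨(i, -1), by simpa [height] using h⟩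

/-- Gambler's ruin: between the heights `N` and `(4 d + 8) N` an affine function of the height
bounds the escape probability from below. -/
lemma height_le_escapeProbUpTo [Fact (3 ≤ d)] {D K : Set (V d)} {N : ℕ} (hN : 16 ≤ N)
    (hK : K ⊆ cube 0 N) (p : Fin d × ℤˣ) (T : ℕ) {x : V d}
    (hx : height p x ≤ (4 * d + 8) * N) :
    ((height p x : ℝ) - N) / ((4 * d + 8) * N) / 2 ≤ escapeProbUpTo D K T x := by
  have hN' : (16 : ℝ) ≤ N := by exact_mod_cast hN
  set R : ℝ := (4 * d + 8) * N
  have hR : 1 ≤ R := by nlinarith [dim_pos (d := d)]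
  have hrw : ∀ y : V d, (height p y - N) / R / 2 = (1 / R / 2) * height p y + -(N / R / 2) :=
    fun y => by ring
  have hhalf : ∀ y : V d, height p y ≤ (4 * d + 8) * N + 1 → (height p y - N) / R / 2 ≤ 1 / 2 := by
    intro y hy
    have hy' : (height p y : ℝ) ≤ R + 1 := by simp only [R]; exact_mod_cast hy
    gcongr
    rw [div_le_one (by linarith)]
    linarith
  refine le_escapeProbUpTo (Ω := {y | height p y ≤ (4 * d + 8) * N})
    (g := fun y => (height p y - N) / R / 2) (fun y _ hyK => ?_) (fun y hy => ?_) (fun y _ => ?_)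
    (fun T y hy q hq => ?_) T x hx
  · have hle : (height p y : ℝ) ≤ N := by
      exact_mod_cast (le_abs_self _).trans (abs_height_le_of_mem_cube (p := p) (hK hyK))
    exact div_nonpos_of_nonpos_of_nonneg (div_nonpos_of_nonpos_of_nonneg (by linarith)
      (by linarith)) zero_le_two
  · linarith [hhalf y (le_add_of_le_of_nonneg hy zero_le_one)]
  · simp only [hrw, avg_height_affine, le_refl]
  · have hstep : height p (step q) ≤ 1 :=
      (le_abs_self _).trans ((abs_height p _).trans_le (abs_step_apply_le q p.1))
    have hq' : (4 * d + 8) * N < height p (y + step q) := not_le.1 hq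
    refine (hhalf _ ?_).trans (half_le_escapeProbUpTo_of_notMem_cube hN hK
      (notMem_cube_of_lt_height (p := p) (by exact_mod_cast hq')) T)
    rw [height_add]
    exact add_le_add hy hstep

/-- The probability that the walk from `x` avoids `K` up to its exit from `D`. -/
noncomputable def escapeProb (D K : Set (V d)) (x : V d) : ℝ := ⨅ T, escapeProbUpTo D K T x

lemma bddBelow_escapeProbUpTo (D K : Set (V d)) (x : V d) :
    BddBelow (Set.range fun T => escapeProbUpTo D K T x) :=
  ⟨0, Set.forall_mem_range.2 fun T => escapeProbUpTo_nonneg D K T x⟩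

lemma tendsto_escapeProb [NeZero d] (D K : Set (V d)) (x : V d) :
    Filter.Tendsto (fun T => escapeProbUpTo D K T x) Filter.atTop (nhds (escapeProb D K x)) :=
  tendsto_atTop_ciInf (antitone_nat_of_succ_le fun T => escapeProbUpTo_succ_le D K T x)
    (bddBelow_escapeProbUpTo D K x)

lemma escapeProb_nonneg (D K : Set (V d)) (x : V d) : 0 ≤ escapeProb D K x :=
  le_ciInf fun T => escapeProbUpTo_nonneg D K T x

lemma escapeProb_le_one [NeZero d] (D K : Set (V d)) (x : V d) : escapeProb D K x ≤ 1 :=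
  (ciInf_le (bddBelow_escapeProbUpTo D K x) 0).trans (escapeProbUpTo_le_one D K 0 x)

lemma escapeProb_of_mem {D K : Set (V d)} {x : V d} (hx : x ∈ K) : escapeProb D K x = 0 := by
  simp only [escapeProb, escapeProbUpTo_of_mem hx, ciInf_const]

lemma harmonicOn_escapeProb [NeZero d] (D K : Set (V d)) :
    HarmonicOn (escapeProb D K) (D \ K) := by
  rintro x ⟨hD, hK⟩
  refine tendsto_nhds_unique (tendsto_avg (tendsto_escapeProb D K) x)
    (((Filter.tendsto_add_atTop_iff_nat 1).2 (tendsto_escapeProb D K x)).congr fun T => ?_)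
  exact escapeProbUpTo_succ hK hD T

lemma escapeProb_le_avg [NeZero d] {D K : Set (V d)} {x : V d} (hD : x ∈ D) :
    escapeProb D K x ≤ avg (escapeProb D K) x := by
  by_cases hx : x ∈ K
  · exact (escapeProb_of_mem hx).trans_le (avg_nonneg fun p => escapeProb_nonneg D K _)
  · exact (harmonicOn_escapeProb D K x ⟨hD, hx⟩).ge

/-- A lower bound, independent of the scale, for the escape probability from outside twice a cube
containing the obstacle. -/
noncomputable def farEscapeConst (d : ℕ) : ℝ := 1 / (2 * (4 * d + 8))

lemma farEscapeConst_pos (d : ℕ) : 0 < farEscapeConst d := by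
  rw [farEscapeConst]
  positivity

lemma farEscapeConst_le_half (d : ℕ) : farEscapeConst d ≤ 1 / 2 :=
  one_div_le_one_div_of_le two_pos (by linarith [d.cast_nonneg (α := ℝ)])

lemma farEscapeConst_le_escapeProb [Fact (3 ≤ d)] {D K : Set (V d)} {N : ℕ} (hN : 16 ≤ N)
    (hK : K ⊆ cube 0 N) {x : V d} (hx : x ∉ cube 0 (2 * N)) :
    farEscapeConst d ≤ escapeProb D K x := by
  refine le_ciInf fun T => ?_
  obtain ⟨p, hp⟩ := exists_lt_height_of_notMem_cube hx
  by_cases hle : height p x ≤ (4 * d + 8) * N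
  · refine le_trans ?_ (height_le_escapeProbUpTo hN hK p T hle)
    have hp' : 2 * (N : ℝ) < height p x := by exact_mod_cast hp
    have hN' : (N : ℝ) ≠ 0 := Nat.cast_ne_zero.2 (by omega)
    calc farEscapeConst d = N / ((4 * d + 8) * N) / 2 := by rw [farEscapeConst]; field_simp
      _ ≤ _ := by gcongr; linarith
  · exact (farEscapeConst_le_half d).trans (half_le_escapeProbUpTo_of_notMem_cube hN hK
      (notMem_cube_of_lt_height (p := p) (by push_cast; exact not_le.1 hle)) T)

lemma reflect_mem_cube {p : Fin d × ℤˣ} {k : ℤ} {x : V d} {r s : ℕ} (hx : x ∈ cube 0 r)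
    (hrs : r ≤ s) (hk : |k - height p x| ≤ s) : reflect p.1 (p.2 * k) x ∈ cube 0 s := by
  refine mem_cube_zero_iff.2 fun j => ?_
  by_cases hj : j = p.1
  · rwa [hj, ← abs_height, height_reflect]
  · rw [reflect_apply_of_ne hj]
    exact (mem_cube_zero_iff.1 hx j).trans (Nat.cast_le.2 hrs)

lemma reflect_notMem_cube {p : Fin d × ℤˣ} {k : ℤ} {x : V d} {r : ℕ} (hx : x ∉ cube 0 r)
    (hk : 0 ≤ k) (hxk : 2 * height p x ≤ k) : reflect p.1 (p.2 * k) x ∉ cube 0 r := fun h => by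
  have hle := abs_le.1 (abs_height_le_of_mem_cube (p := p) h)
  rw [height_reflect] at hle
  refine hx (reflect_reflect p.1 (p.2 * k) x ▸ reflect_mem_cube h le_rfl ?_)
  rw [height_reflect, abs_le]
  constructor <;> linarith

lemma reflect_eq_self {p : Fin d × ℤˣ} {k : ℤ} {x : V d} (hk : k = 2 * height p x) :
    reflect p.1 (p.2 * k) x = x := by
  refine Function.update_eq_self_iff.2 ?_
  rw [hk, height]
  linear_combination 2 * x p.1 * Int.units_coe_mul_self p.2

/-- Reflection principle: below height `h` the escape probability is dominated by its reflected
copy, because the obstacle lies on the lower side only. -/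
lemma mul_escapeProb_le_escapeProb_reflect [Fact (3 ≤ d)] {D K : Set (V d)} {N n h : ℕ}
    (hN : 16 ≤ N) (hD : cube 0 (4 * N) ⊆ D) (hK : K ⊆ cube 0 n) (hnh : n ≤ h) (hhN : h ≤ N)
    (p : Fin d × ℤˣ) {y : V d} (hy : y ∈ cube 0 (2 * N)) (hyh : height p y < h) :
    farEscapeConst d * escapeProb D K y ≤ escapeProb D K (reflect p.1 (p.2 * (2 * h)) y) := by
  set q := escapeProb D K
  set c := farEscapeConst d
  set R : V d → V d := reflect p.1 (p.2 * (2 * h))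
  have hc : 0 < c := farEscapeConst_pos d
  have hq1 : ∀ y, q y ≤ 1 := escapeProb_le_one D K
  have havg : ∀ y, avg (fun z => q (R z) - c * q z) y = avg q (R y) - c * avg q y := fun y => by
    have hlin := congrFun (map_sub avg (q ∘ R) (c • q)) y
    rwa [map_smul, Pi.sub_apply, avg_comp_reflect] at hlin
  suffices key : ∀ y ∈ {y | y ∈ cube 0 (2 * N) ∧ height p y < h}, 0 ≤ q (R y) - c * q y from
    sub_nonneg.1 (key y ⟨hy, hyh⟩)
  refine nonneg_of_avg_le_of_boundary_nonneg ((cube_finite 0 (2 * N)).subset fun y hy => hy.1)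
    (fun y ⟨hy, hyh⟩ => ?_) (fun y ⟨hy, hyh⟩ _ r hr => sub_nonneg.2 ?_)
  · have hlow := abs_le.1 (abs_height_le_of_mem_cube (p := p) hy)
    have hRD : R y ∈ D := hD (reflect_mem_cube hy (by omega) (abs_le.2 (by omega)))
    have hRK : R y ∉ K := fun hRK => notMem_cube_of_lt_height (p := p) (x := R y) (r := n)
      (by rw [height_reflect]; omega) (hK hRK)
    rw [havg, harmonicOn_escapeProb D K _ ⟨hRD, hRK⟩]
    exact sub_le_sub_left (mul_le_mul_of_nonneg_left
      (escapeProb_le_avg (hD (cube_mono (by omega) hy))) hc.le) _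
  · have hstep : height p (step r) ≤ 1 :=
      (le_abs_self _).trans ((abs_height p _).trans_le (abs_step_apply_le r p.1))
    have hle : height p (y + step r) ≤ h := by rw [height_add]; omega
    obtain heq | hlt := hle.eq_or_lt
    · rw [show R (y + step r) = y + step r from reflect_eq_self (by rw [heq])]
      exact mul_le_of_le_one_left (escapeProb_nonneg D K _)
        ((farEscapeConst_le_half d).trans (by norm_num))
    · have hout : y + step r ∉ cube 0 (2 * N) := fun hmem => hr ⟨hmem, hlt⟩
      exact (mul_le_of_le_one_right hc.le (hq1 _)).trans (farEscapeConst_le_escapeProb hN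
        (hK.trans (cube_mono (hnh.trans hhN))) (reflect_notMem_cube hout (by omega) (by omega)))

lemma escapeProb_pos_of_lt_height [Fact (3 ≤ d)] {D K : Set (V d)} {N n : ℕ}
    (hN : 16 ≤ N) (hD : cube 0 (4 * N) ⊆ D) (hK : K ⊆ cube 0 n) (hnN : n ≤ N)
    {p : Fin d × ℤˣ} {x : V d} (hx : (n : ℤ) < height p x) : 0 < escapeProb D K x := by
  suffices h : ∀ (k : ℕ) (x : V d), (n : ℤ) < height p x → 2 * (N : ℤ) < height p x + k →
      0 < escapeProb D K x from h (2 * N) x hx (by push_cast; omega)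
  intro k
  have hfar : ∀ x ∉ cube 0 (2 * N), 0 < escapeProb D K x := fun x hx =>
    (farEscapeConst_pos d).trans_le
      (farEscapeConst_le_escapeProb hN (hK.trans (cube_mono hnN)) hx)
  induction k with
  | zero => exact fun x _ hx => hfar x (notMem_cube_of_lt_height (p := p) (by push_cast; omega))
  | succ k ih =>
    intro x hx hxk
    by_cases hfarx : x ∈ cube 0 (2 * N)
    · have hxK : x ∉ K := fun h => notMem_cube_of_lt_height hx (hK h)
      rw [← harmonicOn_escapeProb D K x ⟨hD (cube_mono (by omega) hfarx), hxK⟩]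
      have hup : height p (x + step p) = height p x + 1 := by rw [height_add, height_step]
      have hstep := (ih (x + step p) (by omega) (by push_cast at hxk; omega)).trans_le
        (le_two_mul_dim_mul_avg (fun p => escapeProb_nonneg D K _) p)
      exact pos_of_mul_pos_right hstep (by linarith [dim_pos (d := d)])
    · exact hfar x hfarx

/-! ### The Green function near the endpoint of the obstacle -/

/-- Comparison of the escape probability `q` with the Green function: the function
`Q (γ - a) + (a - b) avg q` is, up to the error `Q l` on `F`, subharmonic for the walk killed on
`K` and off `B`. -/
lemma sub_mul_avg_escapeProb_le [Fact (3 ≤ d)] {D K B : Set (V d)} (hB : B.Finite) (hBD : B ⊆ D)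
    {γ : V d → ℝ} {a b l Q : ℝ} (hba : b ≤ a) (hl : 0 ≤ l) (hQ₀ : 0 ≤ Q) (F : Finset (V d))
    (hγ : ∀ x, γ x ≤ avg γ x + l) (hγF : ∀ x ∉ F, γ x ≤ avg γ x) (hγK : ∀ x ∈ K, γ x ≤ a)
    (hγB : ∀ x ∉ B, γ x ≤ b) (hQ : ∀ x ∈ B, ∀ p, escapeProb D K (x + step p) ≤ Q) {x : V d}
    (hx : x ∈ B) (hγx : a ≤ γ x) :
    (a - b) * avg (escapeProb D K) x ≤ Q * l * ∑ y ∈ F, green (D \ K) x y := by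
  set q := escapeProb D K
  set f : V d → ℝ := Q • γ + (a - b) • avg q - fun _ => Q * a
  set g : V d → ℝ := Q • γ + (a - b) • q - fun _ => Q * a
  have hf_apply : ∀ y, f y = Q * γ y + (a - b) * avg q y - Q * a := fun _ => rfl
  have hg_apply : ∀ y, g y = Q * γ y + (a - b) * q y - Q * a := fun _ => rfl
  have havg : ∀ y, avg g y = Q * avg γ y + (a - b) * avg q y - Q * a := fun y => by
    simp only [g, map_sub, map_add, map_smul, Pi.sub_apply, Pi.add_apply, Pi.smul_apply,
      smul_eq_mul, avg_const]
  have hkilled : ∀ y ∈ B, avg g y ≤ killedAvg (B \ K) f y := by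
    refine fun y hy => avg_mono fun p => ?_
    rw [hg_apply]
    by_cases hyK : y + step p ∈ K
    · rw [Set.indicator_of_notMem fun h => h.2 hyK, show q (y + step p) = 0 from
        escapeProb_of_mem hyK]
      linarith [mul_le_mul_of_nonneg_left (hγK _ hyK) hQ₀]
    by_cases hyB : y + step p ∈ B
    · rw [Set.indicator_of_mem (show _ ∈ B \ K from ⟨hyB, hyK⟩), hf_apply,
        harmonicOn_escapeProb D K _ ⟨hBD hyB, hyK⟩]
    · rw [Set.indicator_of_notMem fun h => hyB h.1]
      have hq := mul_le_mul_of_nonneg_left (hQ y hy p) (sub_nonneg.2 hba)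
      linarith [mul_le_mul_of_nonneg_left (hγB _ hyB) hQ₀]
  have hmain := le_mul_sum_green (f := f) (Set.sdiff_subset (t := K)) hB (mul_nonneg hQ₀ hl) F
    (fun y hy => by
      have := hkilled y hy
      rw [havg] at this
      linarith [hf_apply y, mul_le_mul_of_nonneg_left (hγ y) hQ₀])
    (fun y hy hyF => by
      have := hkilled y hy
      rw [havg] at this
      linarith [hf_apply y, mul_le_mul_of_nonneg_left (hγF y hyF) hQ₀]) hx
  calc (a - b) * avg q x ≤ f x := by linarith [hf_apply x, mul_le_mul_of_nonneg_left hγx hQ₀]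
    _ ≤ Q * l * ∑ y ∈ F, green (B \ K) x y := hmain
    _ ≤ _ := mul_le_mul_of_nonneg_left (Finset.sum_le_sum fun y _ =>
      green_mono_set (Set.sdiff_subset_sdiff_left hBD) x y) (mul_nonneg hQ₀ hl)

lemma exp_sub_exp_mul_avg_escapeProb_le [Fact (3 ≤ d)] {D K : Set (V d)} {m : ℕ}
    (hm : 8 * (d : ℝ) ≤ (m : ℝ) ^ 2) {w x : V d} (hx : sqNorm (x - w) = (m : ℝ) ^ 2)
    (hD : cube w (2 * m) ⊆ D) (hK : ∀ y ∈ K, (m : ℝ) ^ 2 ≤ sqNorm (y - w)) {Q : ℝ} (hQ₀ : 0 ≤ Q)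
    (hQ : ∀ y ∈ cube w (2 * m + 1), escapeProb D K y ≤ Q) :
    (Real.exp (-(4 * d)) - Real.exp (-(16 * d))) * avg (escapeProb D K) x ≤
      Q * (4 * d / (m : ℝ) ^ 2) *
        ∑ y ∈ (cube_finite w (m / 2)).toFinset, green (D \ K) x y := by
  have hd := dim_pos (d := d)
  have hm₀ : 0 < (m : ℝ) ^ 2 := by linarith
  have hl : 4 * d / (m : ℝ) ^ 2 = d / ((m : ℝ) / 2) ^ 2 := by field_simp; norm_num
  have hlm : 4 * d / (m : ℝ) ^ 2 * (m : ℝ) ^ 2 = 4 * d := div_mul_cancel₀ _ hm₀.ne'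
  have hl₀ : 0 ≤ 4 * d / (m : ℝ) ^ 2 := by positivity
  refine sub_mul_avg_escapeProb_le (γ := gaussian (4 * d / (m : ℝ) ^ 2) w)
    (cube_finite w (2 * m)) hD (Real.exp_le_exp.2 (by linarith)) hl₀ hQ₀ _
    (gaussian_le_avg_add hl₀ w) (fun y hy => ?_) (fun y hy => ?_) (fun y hy => ?_)
    (fun y hy p => hQ _ (add_step_mem_cube hy le_rfl p)) (mem_cube_comm.1 fun i => ?_) ?_
  · rw [Set.Finite.mem_toFinset] at hy
    obtain ⟨i, hi⟩ := not_forall.1 hy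
    have hi' : (m : ℤ) < 2 * |(y - w) i| := by rw [Pi.sub_apply]; omega
    have hsq : ((m : ℝ) / 2) ^ 2 ≤ (((y - w) i : ℤ) : ℝ) ^ 2 := by
      refine sq_le_sq.2 ?_
      rw [abs_of_nonneg (by positivity), div_le_iff₀' two_pos]
      exact_mod_cast hi'.le
    rw [hl]
    exact gaussian_le_avg (by linarith) (hsq.trans (sq_coord_le_sqNorm _ i))
  · rw [gaussian, neg_mul]
    conv_rhs => rw [← hlm]
    exact Real.exp_le_exp.2 (neg_le_neg (mul_le_mul_of_nonneg_left (hK y hy) hl₀))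
  · refine (gaussian_le_of_notMem_cube hl₀ hy).trans_eq (congrArg (fun t => Real.exp (-t)) ?_)
    push_cast
    linear_combination 4 * hlm
  · have hcoord := (sq_coord_le_sqNorm (x - w) i).trans_eq hx
    have hle := abs_le_of_sq_le_sq hcoord (Nat.cast_nonneg m)
    rw [abs_sub_comm]
    exact (show |(x - w) i| ≤ (m : ℤ) by exact_mod_cast hle).trans (by omega)
  · rw [gaussian, hx, neg_mul, hlm]

/-- The shell setup: `K` plays the role of the initial segment `α` of the loop erasure, and its
endpoint `x₀` lies on the face of the cube `Q_n` with outward unit normal `step p`. -/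
structure ShellSetup (N n m : ℕ) (D K : Set (V d)) (p : Fin d × ℤˣ) (x₀ : V d) : Prop where
  one_le : 1 ≤ m
  eight_mul_le : 8 * m ≤ n
  sixteen_le : 16 ≤ n
  add_le : n + m ≤ N
  cube_subset : cube 0 (4 * N) ⊆ D
  subset_cube : K ⊆ cube 0 n
  mem : x₀ ∈ K
  height_eq : height p x₀ = n

/-- The points near `x₀` whose height above `x₀` is comparable to `m`: a region, in front of the
face carrying `x₀`, on which Harnack's inequality is applied. -/
def frontRegion (p : Fin d × ℤˣ) (x₀ : V d) (m : ℕ) : Set (V d) :=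
  {x | x ∈ cube x₀ (6 * m) ∧ (m : ℤ) ≤ 8 * (height p x - height p x₀)}

lemma HarmonicOn.exists_frontRegion_harnack (d : ℕ) [NeZero d] : ∃ C : ℝ, 1 ≤ C ∧
    ∀ (N n m : ℕ) (p : Fin d × ℤˣ) (x₀ : V d), 1 ≤ m → 8 * m ≤ n → n ≤ N → x₀ ∈ cube 0 n →
      height p x₀ = n → ∀ u : V d → ℝ, (∀ x, 0 ≤ u x) →
      HarmonicOn u {x | x ∈ cube 0 (4 * N) ∧ n < height p x} →
      ∀ x ∈ frontRegion p x₀ m, ∀ y ∈ frontRegion p x₀ m, u x ≤ C * u y := by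
  obtain ⟨C, hC, hharnack⟩ := HarmonicOn.exists_cube_harnack d 48
  refine ⟨C, hC, fun N n m p x₀ hm hmn hnN hx₀ hheight u hu hharm => ?_⟩
  obtain ⟨ρ, hρ⟩ : ∃ ρ, (m + 7) / 8 = ρ + 1 := ⟨(m + 7) / 8 - 1, by omega⟩
  set c : V d := x₀ + ((ρ + 1 + 6 * m : ℕ) : ℤ) • step p
  have hcp : height p c = n + (ρ + 1 + 6 * m : ℕ) := by
    rw [height_add, height_zsmul_step, hheight]
  have hci : ∀ i ≠ p.1, c i = x₀ i := fun i hi => add_zsmul_step_apply_of_ne hi x₀ _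
  have hmem : ∀ {x : V d} {r : ℕ}, x ∈ cube c r ↔
      |height p x - height p c| ≤ r ∧ ∀ i ≠ p.1, |x i - x₀ i| ≤ r := by
    refine fun {x r} => ⟨fun h => ⟨abs_height_sub p x c ▸ h p.1, fun i hi => hci i hi ▸ h i⟩,
      fun h i => ?_⟩
    by_cases hi : i = p.1
    · rw [hi, ← abs_height_sub]; exact h.1
    · rw [hci i hi]; exact h.2 i hi
  have hfront : frontRegion p x₀ m ⊆ cube c (6 * m) := fun x ⟨hx, hxp⟩ =>
    hmem.2 ⟨by have := (abs_height_sub p x x₀).trans_le (hx p.1); rw [abs_le] at *; omega,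
      fun i _ => hx i⟩
  have hcube : cube c (6 * m + ρ) ⊆ {x | x ∈ cube 0 (4 * N) ∧ n < height p x} := fun x hx => by
    have hxp := abs_le.1 (hmem.1 hx).1
    refine ⟨mem_cube_zero_iff.2 fun i => ?_, by omega⟩
    by_cases hi : i = p.1
    · rw [hi, ← abs_height, abs_le]; omega
    · have hxi := abs_le.1 ((hmem.1 hx).2 i hi)
      have hx₀i := abs_le.1 (mem_cube_zero_iff.1 hx₀ i)
      exact abs_le.2 (by omega)
  exact fun x hx y hy => hharnack u hu c (6 * m) ρ (by omega) (hharm.mono hcube) x (hfront hx) y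
    (hfront hy)

lemma sqNorm_zsmul_step (k : ℤ) (p : Fin d × ℤˣ) : sqNorm (k • step p) = (k : ℝ) ^ 2 := by
  rw [sqNorm, Finset.sum_eq_single p.1]
  · rw [← sq_height, height_zsmul_step]
  · intro i _ hi
    rw [Pi.smul_apply, step_apply_of_ne p hi, smul_zero, Int.cast_zero, zero_pow two_ne_zero]
  · exact fun h => (h (Finset.mem_univ _)).elim

lemma add_zsmul_step_mem_cube (x : V d) (k : ℕ) (p : Fin d × ℤˣ) :
    x + (k : ℤ) • step p ∈ cube x k := fun i => by
  rw [Pi.add_apply, add_sub_cancel_left, Pi.smul_apply, smul_eq_mul, abs_mul, Nat.abs_cast]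
  exact mul_le_of_le_one_right (Nat.cast_nonneg k) (abs_step_apply_le p i)

lemma reflect_mem_cube_of_height_eq {p : Fin d × ℤˣ} {k : ℤ} {w x : V d} {r : ℕ}
    (hk : k = 2 * height p w) (hx : x ∈ cube w r) : reflect p.1 (p.2 * k) x ∈ cube w r := by
  intro j
  by_cases hj : j = p.1
  · have hxp := abs_le.1 ((abs_height_sub p x w).trans_le (hx p.1))
    rw [hj, ← abs_height_sub, height_reflect, abs_le]
    omega
  · rw [reflect_apply_of_ne hj]
    exact hx j

namespace ShellSetup

variable {N n m : ℕ} {D K : Set (V d)} {p : Fin d × ℤˣ} {x₀ : V d}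

lemma endpoint_mem_cube (h : ShellSetup N n m D K p x₀) : x₀ ∈ cube 0 n := h.subset_cube h.mem

lemma height_center (h : ShellSetup N n m D K p x₀) :
    height p (x₀ + (m : ℤ) • step p) = n + m := by
  rw [height_add, height_zsmul_step, h.height_eq]

lemma center_mem_cube (h : ShellSetup N n m D K p x₀) {y : V d} {r s : ℕ}
    (hy : y ∈ cube (x₀ + (m : ℤ) • step p) r) (hs : n + m + r ≤ s) : y ∈ cube 0 s :=
  mem_cube_trans (mem_cube_trans h.endpoint_mem_cube (add_zsmul_step_mem_cube x₀ m p) le_rfl) hy hs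

lemma mem_frontRegion (h : ShellSetup N n m D K p x₀) {y : V d}
    (hy : y ∈ cube (x₀ + (m : ℤ) • step p) (2 * m + 1)) (hyp : (m : ℤ) ≤ 8 * (height p y - n)) :
    y ∈ frontRegion p x₀ m :=
  ⟨mem_cube_trans (add_zsmul_step_mem_cube x₀ m p) hy (by have := h.one_le; omega),
    h.height_eq ▸ hyp⟩

lemma cube_subset_frontRegion (h : ShellSetup N n m D K p x₀) :
    cube (x₀ + (m : ℤ) • step p) (m / 2) ⊆ frontRegion p x₀ m := fun y hy => by
  have hyp := abs_le.1 ((abs_height_sub p y _).trans_le (hy p.1))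
  rw [h.height_center] at hyp
  exact h.mem_frontRegion (cube_mono (by omega) hy) (by omega)

lemma upper_subset_sdiff (h : ShellSetup N n m D K p x₀) :
    {x | x ∈ cube 0 (4 * N) ∧ n < height p x} ⊆ D \ K :=
  fun _ hx => ⟨h.cube_subset hx.1, fun hK => notMem_cube_of_lt_height hx.2 (h.subset_cube hK)⟩

lemma exists_mem_frontRegion_mul_escapeProb_le [Fact (3 ≤ d)] (h : ShellSetup N n m D K p x₀)
    {y : V d} (hy : y ∈ cube (x₀ + (m : ℤ) • step p) (2 * m + 1)) :
    ∃ x ∈ frontRegion p x₀ m, farEscapeConst d * escapeProb D K y ≤ escapeProb D K x := by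
  have ⟨hm, hmn, hn, hN, _, _, _, _⟩ := h
  by_cases hyp : (n + m : ℕ) ≤ height p y
  · exact ⟨y, h.mem_frontRegion hy (by omega), mul_le_of_le_one_left (escapeProb_nonneg D K y)
      ((farEscapeConst_le_half d).trans (by norm_num))⟩
  · have hreflect : ((2 * (n + m : ℕ) : ℤ)) = 2 * height p (x₀ + (m : ℤ) • step p) := by
      rw [h.height_center, Nat.cast_add]
    refine ⟨_, h.mem_frontRegion (reflect_mem_cube_of_height_eq hreflect hy) ?_,
      mul_escapeProb_le_escapeProb_reflect (by omega) h.cube_subset h.subset_cube (by omega) hN p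
        (h.center_mem_cube hy (by omega)) (not_le.1 hyp)⟩
    rw [height_reflect]
    omega

lemma exists_frontRegion_bounds (d : ℕ) [Fact (3 ≤ d)] : ∃ C : ℝ, 1 ≤ C ∧
    ∀ {N n m : ℕ} {D K : Set (V d)} {p : Fin d × ℤˣ} {x₀ : V d}, ShellSetup N n m D K p x₀ →
      ∀ z ∈ frontRegion p x₀ m,
        (∀ y ∈ frontRegion p x₀ m, green (D \ K) x₀ y ≤ C * green (D \ K) x₀ z) ∧
        ∀ y ∈ cube (x₀ + (m : ℤ) • step p) (2 * m + 1),
          escapeProb D K y ≤ C * escapeProb D K z := by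
  obtain ⟨C, hC, hharnack⟩ := HarmonicOn.exists_frontRegion_harnack d
  have hc := farEscapeConst_pos d
  have hCc : C ≤ C / farEscapeConst d :=
    le_div_self (by linarith) hc ((farEscapeConst_le_half d).trans (by norm_num))
  refine ⟨C / farEscapeConst d, hC.trans hCc, fun {N n m D K p x₀} h z hz => ?_⟩
  have hupper := h.upper_subset_sdiff
  replace hharnack := hharnack N n m p x₀ h.one_le h.eight_mul_le
    (by have := h.add_le; omega) h.endpoint_mem_cube h.height_eq
  refine ⟨fun y hy => ?_, fun y hy => ?_⟩
  · refine (hharnack _ (green_nonneg _ x₀) ((harmonicOn_green (D \ K) x₀).mono fun x hx =>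
      ⟨hupper hx, fun hx₀ => (hupper hx).2 (hx₀ ▸ h.mem)⟩) y hy z hz).trans ?_
    exact mul_le_mul_of_nonneg_right hCc (green_nonneg _ _ _)
  · obtain ⟨x, hx, hyx⟩ := h.exists_mem_frontRegion_mul_escapeProb_le hy
    rw [div_mul_eq_mul_div, le_div_iff₀' hc]
    exact hyx.trans (hharnack _ (escapeProb_nonneg D K)
      ((harmonicOn_escapeProb D K).mono hupper) x hx z hz)

lemma sum_green_le (h : ShellSetup N n m D K p x₀) {G : ℝ}
    (hG : ∀ y ∈ frontRegion p x₀ m, green (D \ K) x₀ y ≤ G) :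
    ∑ y ∈ (cube_finite (x₀ + (m : ℤ) • step p) (m / 2)).toFinset, green (D \ K) x₀ y ≤
      (2 * (m : ℝ)) ^ d * G := by
  have hm := h.one_le
  have hG₀ : 0 ≤ G := (green_nonneg _ _ _).trans
    (hG _ (h.cube_subset_frontRegion (self_mem_cube _ _)))
  refine (Finset.sum_le_card_nsmul _ _ G fun y hy =>
    hG y (h.cube_subset_frontRegion ((Set.Finite.mem_toFinset _).1 hy))).trans ?_
  rw [card_cube, nsmul_eq_mul]
  refine mul_le_mul_of_nonneg_right ?_ hG₀
  exact_mod_cast Nat.pow_le_pow_left (show 2 * (m / 2) + 1 ≤ 2 * m by omega) d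

/-- The large scales: Gaussian comparison around `x₀ + m • step p`. -/
lemma zpow_mul_avg_escapeProb_le_of_le_sq [Fact (3 ≤ d)] (h : ShellSetup N n m D K p x₀)
    (hm : 8 * (d : ℝ) ≤ (m : ℝ) ^ 2) {G Q : ℝ}
    (hG : ∀ y ∈ frontRegion p x₀ m, green (D \ K) x₀ y ≤ G)
    (hQ : ∀ y ∈ cube (x₀ + (m : ℤ) • step p) (2 * m + 1), escapeProb D K y ≤ Q) :
    (m : ℝ) ^ (2 - d : ℤ) * avg (escapeProb D K) x₀ ≤
      4 * d * 2 ^ d / (Real.exp (-(4 * d)) - Real.exp (-(16 * d))) * (G * Q) := by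
  have ⟨hm₁, _, _, hN, _, _, _, _⟩ := h
  have hm₀ : (0 : ℝ) < m := Nat.cast_pos.2 hm₁
  have hψ : 0 < Real.exp (-(4 * d)) - Real.exp (-(16 * d)) :=
    sub_pos.2 (Real.exp_lt_exp.2 (by linarith [dim_pos (d := d)]))
  have hQ₀ : 0 ≤ Q := (escapeProb_nonneg D K _).trans (hQ _ (self_mem_cube _ _))
  have hK : ∀ y ∈ K, (m : ℝ) ^ 2 ≤ sqNorm (y - (x₀ + (m : ℤ) • step p)) := fun y hy => by
    have hyn := (le_abs_self _).trans (abs_height_le_of_mem_cube (p := p) (h.subset_cube hy))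
    have hle : (m : ℤ) ≤ |height p (y - (x₀ + (m : ℤ) • step p))| := by
      rw [height_sub, h.height_center, le_abs]
      omega
    exact (sq_le_sq.2 (by rw [Nat.abs_cast]; exact_mod_cast hle)).trans (sq_height_le_sqNorm p _)
  have hmain := (exp_sub_exp_mul_avg_escapeProb_le hm (by
      rw [← sub_sub, sub_self, zero_sub, ← neg_smul, sqNorm_zsmul_step]; push_cast; ring)
    (fun y hy => h.cube_subset (h.center_mem_cube hy (by omega))) hK hQ₀ hQ).trans
    (mul_le_mul_of_nonneg_left (h.sum_green_le hG) (by positivity))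
  rw [← le_div_iff₀' hψ] at hmain
  refine (mul_le_mul_of_nonneg_left hmain (by positivity)).trans_eq ?_
  rw [zpow_sub₀ hm₀.ne', zpow_ofNat, zpow_natCast, mul_pow]
  field_simp

/-- The small scales: the straight path from `x₀` to `x₀ + m • step p` has probability bounded
below. -/
lemma zpow_mul_avg_escapeProb_le_of_sq_lt [Fact (3 ≤ d)] (h : ShellSetup N n m D K p x₀)
    (hm : (m : ℝ) ^ 2 < 8 * d) {G Q : ℝ}
    (hG : ∀ y ∈ frontRegion p x₀ m, green (D \ K) x₀ y ≤ G)
    (hQ : ∀ y ∈ cube (x₀ + (m : ℤ) • step p) (2 * m + 1), escapeProb D K y ≤ Q) :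
    (m : ℝ) ^ (2 - d : ℤ) * avg (escapeProb D K) x₀ ≤ (2 * d) ^ (8 * d) * (G * Q) := by
  have ⟨hm₁, _, _, hN, _, _, _, _⟩ := h
  have hd := one_le_dim (d := d)
  have hdim := Fact.out (p := 3 ≤ d)
  have hmd : m ≤ 8 * d := (Nat.le_self_pow two_ne_zero m).trans (by exact_mod_cast hm.le)
  have hinv : 0 ≤ (2 * (d : ℝ))⁻¹ := by positivity
  have hpow : (m : ℝ) ^ (2 - d : ℤ) ≤ 1 :=
    zpow_le_one_of_nonpos₀ (Nat.one_le_cast.2 hm₁) (by omega)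
  have hQ₀ : 0 ≤ Q := (escapeProb_nonneg D K _).trans (hQ _ (self_mem_cube _ _))
  have havg : avg (escapeProb D K) x₀ ≤ Q := avg_le_of_le fun q => hQ _
    (add_step_mem_cube (mem_cube_comm.1 (add_zsmul_step_mem_cube x₀ m p)) (by omega) q)
  have hline : ∀ j : ℕ, 1 ≤ j → j ≤ m → x₀ + (j : ℤ) • step p ∈ D \ K := fun j hj hjm =>
    h.upper_subset_sdiff ⟨mem_cube_trans h.endpoint_mem_cube (add_zsmul_step_mem_cube x₀ j p)
      (by omega), by rw [height_add, height_zsmul_step, h.height_eq]; omega⟩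
  have hgreen : (2 * (d : ℝ))⁻¹ ^ (8 * d) ≤ G :=
    calc (2 * (d : ℝ))⁻¹ ^ (8 * d) ≤ (2 * (d : ℝ))⁻¹ ^ m :=
        pow_le_pow_of_le_one hinv (inv_le_one_of_one_le₀ (by linarith)) hmd
      _ ≤ killedHeat (D \ K) x₀ m (x₀ + (m : ℤ) • step p) :=
        inv_two_mul_dim_pow_le_killedHeat m hline
      _ ≤ green (D \ K) x₀ (x₀ + (m : ℤ) • step p) := killedHeat_le_green _ _ _ _
      _ ≤ G := hG _ (h.cube_subset_frontRegion (self_mem_cube _ _))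
  rw [inv_pow, inv_le_iff_one_le_mul₀' (by positivity)] at hgreen
  calc (m : ℝ) ^ (2 - d : ℤ) * avg (escapeProb D K) x₀ ≤ 1 * Q :=
        mul_le_mul hpow havg (avg_nonneg fun q => escapeProb_nonneg D K _) zero_le_one
    _ ≤ (2 * d) ^ (8 * d) * G * Q := mul_le_mul_of_nonneg_right hgreen hQ₀
    _ = _ := mul_assoc _ _ _

lemma exists_zpow_mul_avg_escapeProb_le (d : ℕ) [Fact (3 ≤ d)] : ∃ C : ℝ, 1 ≤ C ∧
    ∀ {N n m : ℕ} {D K : Set (V d)} {p : Fin d × ℤˣ} {x₀ : V d}, ShellSetup N n m D K p x₀ →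
      ∀ z ∈ frontRegion p x₀ m, (m : ℝ) ^ (2 - d : ℤ) * avg (escapeProb D K) x₀ ≤
        C * (green (D \ K) x₀ z * escapeProb D K z) := by
  obtain ⟨C, hC, hbounds⟩ := exists_frontRegion_bounds d
  set E : ℝ := max (4 * d * 2 ^ d / (Real.exp (-(4 * d)) - Real.exp (-(16 * d))))
    ((2 * d) ^ (8 * d))
  have hE : 1 ≤ E := (one_le_pow₀ (by linarith [one_le_dim (d := d)])).trans (le_max_right _ _)
  refine ⟨E * C ^ 2, one_le_mul_of_one_le_of_one_le hE (one_le_pow₀ hC),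
    fun {N n m D K p x₀} h z hz => ?_⟩
  obtain ⟨hG, hQ⟩ := hbounds h z hz
  have hnonneg : 0 ≤ C * green (D \ K) x₀ z * (C * escapeProb D K z) :=
    mul_nonneg (mul_nonneg (by linarith) (green_nonneg _ _ _))
      (mul_nonneg (by linarith) (escapeProb_nonneg D K z))
  calc _ ≤ E * (C * green (D \ K) x₀ z * (C * escapeProb D K z)) := by
        obtain hm | hm := le_or_gt (8 * (d : ℝ)) ((m : ℝ) ^ 2)
        · exact (h.zpow_mul_avg_escapeProb_le_of_le_sq hm hG hQ).trans
            (mul_le_mul_of_nonneg_right (le_max_left _ _) hnonneg)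
        · exact (h.zpow_mul_avg_escapeProb_le_of_sq_lt hm hG hQ).trans
            (mul_le_mul_of_nonneg_right (le_max_right _ _) hnonneg)
    _ = _ := by ring

lemma avg_escapeProb_pos [Fact (3 ≤ d)] (h : ShellSetup N n m D K p x₀) :
    0 < avg (escapeProb D K) x₀ := by
  have hnext : (n : ℤ) < height p (x₀ + step p) := by
    rw [height_add, height_step, h.height_eq]
    omega
  have hpos := (escapeProb_pos_of_lt_height (by linarith [h.sixteen_le, h.add_le]) h.cube_subset
    h.subset_cube (by linarith [h.add_le]) hnext).trans_le
    (le_two_mul_dim_mul_avg (fun q => escapeProb_nonneg D K _) p)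
  exact pos_of_mul_pos_right hpos (by linarith [dim_pos (d := d)])

end ShellSetup

/-! ### Simple random walk -/

/-- The paths which start at `x` and whose first `t` steps go in the directions `s`. -/
def walkCylinder (x : V d) {t : ℕ} (s : Fin t → Fin d × ℤˣ) : Set (ℕ → V d) :=
  {ω | ω 0 = x ∧ ∀ i : Fin t, ω (i + 1) = ω i + step (s i)}

/-- The event `E` is decided by the positions of the path at the times `0, …, t`. -/
def DecidedBy (t : ℕ) (E : Set (ℕ → V d)) : Prop := DependsOn (· ∈ E) (Set.Iic t)

lemma DecidedBy.mem_iff {t : ℕ} {E : Set (ℕ → V d)} (hE : DecidedBy t E) {ω ω' : ℕ → V d}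
    (h : ∀ i ≤ t, ω i = ω' i) : ω ∈ E ↔ ω' ∈ E :=
  (hE h).to_iff

lemma DecidedBy.inter {t t' : ℕ} {E F : Set (ℕ → V d)} (hE : DecidedBy t E) (ht : t ≤ t')
    (hF : DecidedBy t' F) : DecidedBy t' (E ∩ F) := fun _ _ h =>
  propext (and_congr (hE.mem_iff fun i hi => h i (hi.trans ht)) (hF.mem_iff h))

lemma DecidedBy.measurableSet {t : ℕ} {E : Set (ℕ → V d)} (hE : DecidedBy t E) :
    MeasurableSet E := by
  obtain ⟨g, hg⟩ := dependsOn_iff_exists_comp.1 hE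
  have : E = (Set.Iic t).domRestrict ⁻¹' {h | g h} := Set.ext fun ω => (congrFun hg ω).to_iff
  rw [this]
  exact measurable_pi_lambda _ (fun i => measurable_pi_apply _) MeasurableSet.of_discrete

lemma decidedBy_eq (t : ℕ) (x : V d) : DecidedBy t {ω | ω t = x} := fun _ _ h =>
  congrArg (· = x) (h t Set.self_mem_Iic)

lemma decidedBy_walkCylinder (x : V d) {t : ℕ} (s : Fin t → Fin d × ℤˣ) :
    DecidedBy t (walkCylinder x s) := fun ω ω' h =>
  propext (and_congr (by rw [h 0 (Nat.zero_le t)]) (forall_congr' fun i => by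
    rw [h (i + 1) i.2, h i i.2.le]))

lemma walkCylinder_nonempty (x : V d) {t : ℕ} (s : Fin t → Fin d × ℤˣ) :
    (walkCylinder x s).Nonempty :=
  ⟨Nat.rec x fun i y => if h : i < t then y + step (s ⟨i, h⟩) else y, rfl, fun i => dif_pos i.2⟩

lemma eq_of_mem_walkCylinder {x : V d} {t : ℕ} {s : Fin t → Fin d × ℤˣ} {ω ω' : ℕ → V d}
    (hω : ω ∈ walkCylinder x s) (hω' : ω' ∈ walkCylinder x s) : ∀ i ≤ t, ω i = ω' i := by
  intro i hi
  induction i with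
  | zero => rw [hω.1, hω'.1]
  | succ i ih => rw [hω.2 ⟨i, hi⟩, hω'.2 ⟨i, hi⟩, ih (by omega)]

lemma walkCylinder_snoc (x : V d) {t : ℕ} (s : Fin t → Fin d × ℤˣ) (p : Fin d × ℤˣ) :
    walkCylinder x (Fin.snoc s p : Fin (t + 1) → Fin d × ℤˣ) =
      walkCylinder x s ∩ {ω | ω (t + 1) = ω t + step p} := by
  ext ω
  simp [walkCylinder, Fin.forall_fin_succ', and_assoc]

lemma disjoint_eq_add_step (t : ℕ) (x : V d) {p q : Fin d × ℤˣ} (h : p ≠ q) :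
    Disjoint {ω : ℕ → V d | ω t = x + step p} {ω : ℕ → V d | ω t = x + step q} :=
  Set.disjoint_left.2 fun _ hp hq => h (step_injective (add_left_cancel (hp.symm.trans hq)))

lemma pairwise_disjoint_walkCylinder (x : V d) (t : ℕ) :
    Pairwise fun s s' : Fin t → Fin d × ℤˣ =>
      Disjoint (walkCylinder x s) (walkCylinder x s') := fun _ _ hs =>
  Set.disjoint_left.2 fun _ hω hω' =>
    hs (funext fun i => step_injective (add_left_cancel ((hω.2 i).symm.trans (hω'.2 i))))

namespace IsSRWLaw

variable {ν : Measure (ℕ → V d)} {x : V d}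

lemma measureReal_walkCylinder (hν : IsSRWLaw ν x) {t : ℕ} (s : Fin t → Fin d × ℤˣ) :
    ν.real (walkCylinder x s) = (2 * (d : ℝ))⁻¹ ^ t := by
  obtain ⟨γ, hγ⟩ := walkCylinder_nonempty x s
  have hcyl : walkCylinder x s = {ω | ∀ i ≤ t, ω i = γ i} := Set.ext fun ω =>
    ⟨fun hω => eq_of_mem_walkCylinder hω hγ,
      fun hω => ((decidedBy_walkCylinder x s).mem_iff hω).2 hγ⟩
  rw [measureReal_def, hcyl, hν.2 t γ hγ.1 fun i hi => hγ.2 ⟨i, hi⟩ ▸ adj_add_step _ _]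
  simp

lemma ae_exists_mem_walkCylinder [NeZero d] (hν : IsSRWLaw ν x) (t : ℕ) :
    ∀ᵐ ω ∂ν, ∃ s : Fin t → Fin d × ℤˣ, ω ∈ walkCylinder x s := by
  have := hν.1
  have hmeas := fun s : Fin t → Fin d × ℤˣ => (decidedBy_walkCylinder x s).measurableSet
  have hprob : ν.real (⋃ s : Fin t → Fin d × ℤˣ, walkCylinder x s) = 1 := by
    have hd := dim_pos (d := d)
    rw [measureReal_iUnion_fintype (pairwise_disjoint_walkCylinder x t) hmeas]
    simp only [hν.measureReal_walkCylinder, Finset.sum_const, Finset.card_univ, Fintype.card_fun,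
      Fintype.card_prod, Fintype.card_fin, Fintype.card_units_int, nsmul_eq_mul]
    push_cast
    rw [← mul_pow, mul_comm (d : ℝ) 2, mul_inv_cancel₀ (by positivity), one_pow]
  rw [measureReal_def, ENNReal.toReal_eq_one_iff,
    ← mem_ae_iff_prob_eq_one (MeasurableSet.iUnion hmeas)] at hprob
  filter_upwards [hprob] with ω hω using Set.mem_iUnion.1 hω

lemma ae_nearest_neighbour [NeZero d] (hν : IsSRWLaw ν x) :
    ∀ᵐ ω ∂ν, ω 0 = x ∧ ∀ i, ∃ p, ω (i + 1) = ω i + step p := by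
  filter_upwards [ae_all_iff.2 hν.ae_exists_mem_walkCylinder] with ω hω
  refine ⟨(hω 0).choose_spec.1, fun i => ?_⟩
  obtain ⟨s, hs⟩ := hω (i + 1)
  exact ⟨_, hs.2 (Fin.last i)⟩

lemma measureReal_eq_sum_inter_walkCylinder [NeZero d] (hν : IsSRWLaw ν x) (t : ℕ)
    {E : Set (ℕ → V d)} (hE : MeasurableSet E) :
    ν.real E = ∑ s : Fin t → Fin d × ℤˣ, ν.real (E ∩ walkCylinder x s) := by
  have := hν.1
  rw [← measureReal_iUnion_fintype (fun s s' hs => (pairwise_disjoint_walkCylinder x t hs).mono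
    Set.inter_subset_right Set.inter_subset_right)
    fun s => hE.inter (decidedBy_walkCylinder x s).measurableSet, ← Set.inter_iUnion]
  refine measureReal_congr ?_
  filter_upwards [hν.ae_exists_mem_walkCylinder t] with ω hω
  exact propext (and_iff_left (Set.mem_iUnion.2 hω)).symm

/-- The Markov property. -/
lemma measureReal_inter_next [NeZero d] (hν : IsSRWLaw ν x) {t : ℕ} {E : Set (ℕ → V d)}
    (hE : DecidedBy t E) {y : V d} (hy : ∀ ω ∈ E, ω t = y) (p : Fin d × ℤˣ) :
    ν.real (E ∩ {ω | ω (t + 1) = y + step p}) = (2 * (d : ℝ))⁻¹ * ν.real E := by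
  rw [hν.measureReal_eq_sum_inter_walkCylinder t (hE.inter t.le_succ
    (decidedBy_eq (t + 1) (y + step p))).measurableSet,
    hν.measureReal_eq_sum_inter_walkCylinder t hE.measurableSet, Finset.mul_sum]
  refine Finset.sum_congr rfl fun s _ => ?_
  obtain hempty | ⟨γ, hγE, hγ⟩ := (E ∩ walkCylinder x s).eq_empty_or_nonempty
  · rw [Set.inter_right_comm, hempty, Set.empty_inter, measureReal_empty, mul_zero]
  · have hsub : walkCylinder x s ⊆ E := fun ω hω =>
      (hE.mem_iff (eq_of_mem_walkCylinder hω hγ)).2 hγE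
    have hnext : walkCylinder x s ∩ {ω | ω (t + 1) = y + step p} =
        walkCylinder x (Fin.snoc s p : Fin (t + 1) → Fin d × ℤˣ) := by
      rw [walkCylinder_snoc]
      exact Set.ext fun ω => and_congr_right fun hω => by
        rw [Set.mem_ofPred_eq, Set.mem_ofPred_eq, hy ω (hsub hω)]
    rw [Set.inter_right_comm, Set.inter_eq_right.2 hsub, hnext, hν.measureReal_walkCylinder,
      hν.measureReal_walkCylinder, pow_succ']

/-- First-step decomposition of the future after time `t`. -/
lemma measureReal_inter_eq_avg_mul [NeZero d] (hν : IsSRWLaw ν x) {t : ℕ} {E A : Set (ℕ → V d)}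
    (hE : DecidedBy t E) {y : V d} (hy : ∀ ω ∈ E, ω t = y) (hA : MeasurableSet A) {u : V d → ℝ}
    (hu : ∀ p, ν.real (E ∩ {ω | ω (t + 1) = y + step p} ∩ A) =
      u (y + step p) * ν.real (E ∩ {ω | ω (t + 1) = y + step p})) :
    ν.real (E ∩ A) = avg u y * ν.real E := by
  have := hν.1
  have hsplit : ν.real (E ∩ A) = ∑ p, ν.real (E ∩ {ω | ω (t + 1) = y + step p} ∩ A) := by
    rw [← measureReal_iUnion_fintype
      (fun p q hpq => (disjoint_eq_add_step (t + 1) y hpq).mono (fun _ h => h.1.2) fun _ h => h.1.2)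
      fun p => (hE.measurableSet.inter (decidedBy_eq _ _).measurableSet).inter hA]
    refine measureReal_congr ?_
    filter_upwards [hν.ae_nearest_neighbour] with ω hω
    refine propext ⟨fun h => ?_, fun h => ?_⟩
    · obtain ⟨p, hp⟩ := hω.2 t
      exact Set.mem_iUnion.2 ⟨p, ⟨h.1, hp.trans (by rw [hy ω h.1])⟩, h.2⟩
    · obtain ⟨p, hp⟩ := Set.mem_iUnion.1 h
      exact ⟨hp.1.1, hp.2⟩
  rw [hsplit, avg_apply, div_eq_mul_inv, mul_assoc, Finset.sum_mul]
  exact Finset.sum_congr rfl fun p _ => by rw [hu, hν.measureReal_inter_next hE hy]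

end IsSRWLaw

/-- The path is at `y` at time `t` and lies in `U` at the times `1, …, t`. -/
def killedVisit (U : Set (V d)) (t : ℕ) (y : V d) : Set (ℕ → V d) :=
  {ω | ω t = y ∧ ∀ i, 1 ≤ i → i ≤ t → ω i ∈ U}

lemma decidedBy_killedVisit (U : Set (V d)) (t : ℕ) (y : V d) :
    DecidedBy t (killedVisit U t y) := fun _ _ h =>
  propext (and_congr (by rw [h t Set.self_mem_Iic])
    (forall₃_congr fun i _ hi => by rw [h i hi]))

lemma killedVisit_succ (U : Set (V d)) (t : ℕ) {y : V d} (hy : y ∈ U) {ω : ℕ → V d}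
    (hω : ∃ p, ω (t + 1) = ω t + step p) : ω ∈ killedVisit U (t + 1) y ↔
      ω ∈ ⋃ p : Fin d × ℤˣ, killedVisit U t (y + step p) ∩ {ω | ω (t + 1) = y} := by
  rw [Set.mem_iUnion]
  refine ⟨fun h => ?_, fun ⟨p, hp, hnext⟩ => ⟨hnext, fun i hi hit => ?_⟩⟩
  · obtain ⟨p, hp⟩ := hω
    refine ⟨(p.1, -p.2), ⟨?_, fun i hi hit => h.2 i hi (by omega)⟩, h.1⟩
    rw [step_neg, ← h.1, hp, add_neg_cancel_right]
  · obtain rfl | hlt := eq_or_lt_of_le hit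
    · rw [show ω (t + 1) = y from hnext]
      exact hy
    · exact hp.2 i hi (by omega)

/-- A path seen from time `t` on. -/
def pathShift (t : ℕ) (ω : ℕ → V d) : ℕ → V d := fun j => ω (t + j)

lemma measurable_pathShift (t : ℕ) : Measurable (pathShift (d := d) t) :=
  measurable_pi_lambda _ fun j => measurable_pi_apply (t + j)

lemma pathShift_add (s t : ℕ) (ω : ℕ → V d) : pathShift (s + t) ω = pathShift t (pathShift s ω) :=
  funext fun j => congrArg ω (add_assoc s t j)

lemma le_exitTimeE_iff {D : Set (V d)} {ω : ℕ → V d} {j : ℕ} :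
    (j : ENat) ≤ exitTimeE D ω ↔ ∀ i < j, ω i ∈ D := by
  unfold exitTimeE
  split_ifs with h
  · simp only [Nat.cast_le, Nat.le_find_iff, not_not]
  · push Not at h
    simp only [le_top, h, implies_true]

lemma lt_exitTimeE_iff {D : Set (V d)} {ω : ℕ → V d} {j : ℕ} :
    (j : ENat) < exitTimeE D ω ↔ ∀ i ≤ j, ω i ∈ D := by
  rw [← ENat.add_one_le_iff (ENat.natCast_ne_top j), ← Nat.cast_one, ← Nat.cast_add,
    le_exitTimeE_iff]
  simp only [Nat.lt_succ_iff]

/-- The path avoids `K` up to its exit from `D`, or up to time `T` if that is earlier. -/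
def avoidUpTo (D K : Set (V d)) (T : ℕ) : Set (ℕ → V d) :=
  {ω | ∀ j ≤ T, (∀ i < j, ω i ∈ D) → ω j ∉ K}

lemma decidedBy_avoidUpTo (D K : Set (V d)) (T : ℕ) : DecidedBy T (avoidUpTo D K T) :=
  fun _ _ h => propext (forall₂_congr fun j hj =>
    imp_congr (forall₂_congr fun i hi => by rw [h i (hi.le.trans hj)]) (by rw [h j hj]))

lemma mem_avoidUpTo_zero {D K : Set (V d)} {ω : ℕ → V d} : ω ∈ avoidUpTo D K 0 ↔ ω 0 ∉ K := by
  simp [avoidUpTo]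

lemma mem_avoidUpTo_succ {D K : Set (V d)} {T : ℕ} {ω : ℕ → V d} :
    ω ∈ avoidUpTo D K (T + 1) ↔ ω 0 ∉ K ∧ (ω 0 ∈ D → pathShift 1 ω ∈ avoidUpTo D K T) := by
  have hshift : ∀ j, pathShift 1 ω j = ω (j + 1) := fun j => congrArg ω (add_comm 1 j)
  simp only [avoidUpTo, Set.mem_ofPred_eq, hshift]
  refine ⟨fun h => ⟨h 0 (by omega) (by simp), fun h₀ j hj hD => h (j + 1) (by omega)
    fun i hi => ?_⟩, fun h j hj hD => ?_⟩
  · cases i with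
    | zero => exact h₀
    | succ i => exact hD i (by omega)
  · cases j with
    | zero => exact h.1
    | succ j => exact h.2 (hD 0 (by omega)) j (by omega) fun i hi => hD (i + 1) (by omega)

lemma avoidBeforeExit_eq_iInter (D K : Set (V d)) :
    {ω | avoidBeforeExit D K ω} = ⋂ T, avoidUpTo D K T := by
  ext ω
  simp only [avoidBeforeExit, avoidUpTo, le_exitTimeE_iff, Set.mem_iInter, Set.mem_ofPred_eq]
  exact ⟨fun h T j _ => h j, fun h j => h j j le_rfl⟩

lemma measurableSet_avoidBeforeExit (D K : Set (V d)) :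
    MeasurableSet {ω | avoidBeforeExit D K ω} := by
  rw [avoidBeforeExit_eq_iInter]
  exact MeasurableSet.iInter fun T => (decidedBy_avoidUpTo D K T).measurableSet

lemma avoidBeforeExitPos_iff {D K : Set (V d)} {ω : ℕ → V d} (h : ω 0 ∈ D) :
    avoidBeforeExitPos D K ω ↔ avoidBeforeExit D K (pathShift 1 ω) := by
  have hshift : ∀ j, pathShift 1 ω j = ω (j + 1) := fun j => congrArg ω (add_comm 1 j)
  simp only [avoidBeforeExitPos, avoidBeforeExit, le_exitTimeE_iff, hshift]
  refine ⟨fun hpos j hj => hpos (j + 1) (by omega) fun i hi => ?_, fun hav j hj hD => ?_⟩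
  · cases i with
    | zero => exact h
    | succ i => exact hj i (by omega)
  · obtain ⟨j, rfl⟩ := Nat.exists_eq_add_of_le' hj
    exact hav j fun i hi => hD (i + 1) (by omega)

namespace IsSRWLaw

variable {ν : Measure (ℕ → V d)} {x : V d}

lemma measureReal_killedVisit [NeZero d] (hν : IsSRWLaw ν x) (U : Set (V d)) (t : ℕ) (y : V d) :
    ν.real (killedVisit U t y) = killedHeat U x t y := by
  have := hν.1
  induction t generalizing y with
  | zero =>
    rw [killedHeat_zero]
    have hstart : killedVisit U 0 y =ᵐ[ν] ({_ω | y = x} : Set (ℕ → V d)) := by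
      filter_upwards [hν.ae_nearest_neighbour] with ω hω
      refine propext ⟨fun h => h.1.symm.trans hω.1, fun h => ⟨hω.1.trans h.symm, ?_⟩⟩
      exact fun i hi hi₀ => by omega
    rw [measureReal_congr hstart]
    split_ifs with hy <;> simp [hy]
  | succ t ih =>
    rw [killedHeat_succ]
    split_ifs with hy
    · have hlast : killedVisit U (t + 1) y =ᵐ[ν]
          (⋃ p : Fin d × ℤˣ, killedVisit U t (y + step p) ∩ {ω | ω (t + 1) = y} :) :=
        hν.ae_nearest_neighbour.mono fun ω hω => propext (killedVisit_succ U t hy (hω.2 t))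
      rw [measureReal_congr hlast,
        measureReal_iUnion_fintype
          (fun p q hpq => (disjoint_eq_add_step t y hpq).mono
            (fun _ h => h.1.1) fun _ h => h.1.1)
          fun p => (decidedBy_killedVisit _ _ _).measurableSet.inter
            (decidedBy_eq _ _).measurableSet, avg_apply, div_eq_inv_mul, Finset.mul_sum]
      refine Finset.sum_congr rfl fun p _ => ?_
      rw [← ih, ← hν.measureReal_inter_next (decidedBy_killedVisit U t (y + step p))
        (fun _ h => h.1) (p.1, -p.2), step_neg, add_neg_cancel_right]
    · rw [Set.eq_empty_of_forall_notMem fun ω (h : ω ∈ killedVisit U (t + 1) y) =>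
        hy (h.1 ▸ h.2 (t + 1) (by omega) le_rfl), measureReal_empty]

lemma measureReal_inter_avoidUpTo [NeZero d] (hν : IsSRWLaw ν x) (D K : Set (V d)) (T : ℕ) {t : ℕ}
    {E : Set (ℕ → V d)} (hE : DecidedBy t E) {y : V d} (hy : ∀ ω ∈ E, ω t = y) :
    ν.real (E ∩ pathShift t ⁻¹' avoidUpTo D K T) = escapeProbUpTo D K T y * ν.real E := by
  induction T generalizing t E y with
  | zero =>
    rw [show E ∩ pathShift t ⁻¹' avoidUpTo D K 0 = {ω | ω ∈ E ∧ y ∉ K} from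
      Set.ext fun ω => and_congr_right fun hω => by
        rw [Set.mem_preimage, mem_avoidUpTo_zero, ← hy ω hω]; rfl, escapeProbUpTo]
    split_ifs with hK <;> simp [hK]
  | succ T ih =>
    rw [show E ∩ pathShift t ⁻¹' avoidUpTo D K (T + 1) =
      {ω | ω ∈ E ∧ y ∉ K ∧ (y ∈ D → pathShift (t + 1) ω ∈ avoidUpTo D K T)} from
      Set.ext fun ω => and_congr_right fun hω => by
        rw [Set.mem_preimage, mem_avoidUpTo_succ, ← hy ω hω, pathShift_add]; rfl, escapeProbUpTo]
    split_ifs with hK hD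
    · simp [hK]
    · simp only [hK, hD, not_false_eq_true, true_and, forall_const]
      exact hν.measureReal_inter_eq_avg_mul hE hy
        (measurable_pathShift (t + 1) (decidedBy_avoidUpTo D K T).measurableSet)
        fun p => ih (hE.inter t.le_succ (decidedBy_eq _ _)) fun _ h => h.2
    · simp [hK, hD]

lemma measureReal_inter_avoidBeforeExit [NeZero d] (hν : IsSRWLaw ν x) (D K : Set (V d)) {t : ℕ}
    {E : Set (ℕ → V d)} (hE : DecidedBy t E) {y : V d} (hy : ∀ ω ∈ E, ω t = y) :
    ν.real (E ∩ pathShift t ⁻¹' {ω | avoidBeforeExit D K ω}) = escapeProb D K y * ν.real E := by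
  have := hν.1
  have hmeas : ∀ T, MeasurableSet (E ∩ pathShift t ⁻¹' avoidUpTo D K T) := fun T =>
    hE.measurableSet.inter (measurable_pathShift t (decidedBy_avoidUpTo D K T).measurableSet)
  have hlim := tendsto_measure_iInter_atTop (μ := ν) (fun T => (hmeas T).nullMeasurableSet)
    (fun T T' hT => Set.inter_subset_inter_right _ (Set.preimage_mono fun ω h j hj =>
      h j (hj.trans hT))) ⟨0, measure_ne_top _ _⟩
  rw [← Set.inter_iInter, ← Set.preimage_iInter, ← avoidBeforeExit_eq_iInter] at hlim
  refine tendsto_nhds_unique ((ENNReal.tendsto_toReal (measure_ne_top ν _)).comp hlim)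
    (((tendsto_escapeProb D K y).mul_const _).congr fun T => ?_)
  exact (hν.measureReal_inter_avoidUpTo D K T hE hy).symm

lemma measureReal_avoidBeforeExitPos [NeZero d] (hν : IsSRWLaw ν x) {D : Set (V d)} (hx : x ∈ D)
    (K : Set (V d)) : ν.real {ω | avoidBeforeExitPos D K ω} = avg (escapeProb D K) x := by
  have := hν.1
  have hstart : ν.real {ω | ω 0 = x} = 1 := by
    rw [measureReal_congr (show ({ω | ω 0 = x} : Set (ℕ → V d)) =ᵐ[ν] Set.univ from
      hν.ae_nearest_neighbour.mono fun ω hω => eq_true hω.1), probReal_univ]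
  have havoid : ({ω | avoidBeforeExitPos D K ω} : Set (ℕ → V d)) =ᵐ[ν]
      ({ω | ω 0 = x} ∩ pathShift 1 ⁻¹' {ω | avoidBeforeExit D K ω} : Set (ℕ → V d)) :=
    hν.ae_nearest_neighbour.mono fun ω hω => propext
      ((avoidBeforeExitPos_iff (hω.1.symm ▸ hx)).trans (and_iff_right hω.1).symm)
  rw [measureReal_congr havoid, hν.measureReal_inter_eq_avg_mul (decidedBy_eq 0 x) (fun _ h => h)
    (measurable_pathShift 1 (measurableSet_avoidBeforeExit D K)) fun p =>
      hν.measureReal_inter_avoidBeforeExit D K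
        ((decidedBy_eq 0 x).inter zero_le_one (decidedBy_eq 1 _)) fun _ h => h.2, hstart, mul_one]

end IsSRWLaw

/-! ### The conditioned walk -/

/-- The path is at `z` at time `t`, before its exit from `D`. -/
def visitBeforeExit (D : Set (V d)) (t : ℕ) (z : V d) : Set (ℕ → V d) :=
  {ω | (t : ENat) < exitTimeE D ω ∧ ω t = z}

lemma decidedBy_visitBeforeExit (D : Set (V d)) (t : ℕ) (z : V d) :
    DecidedBy t (visitBeforeExit D t z) := fun _ _ h => propext <| by
  simp only [visitBeforeExit, lt_exitTimeE_iff, Set.mem_ofPred_eq, h t Set.self_mem_Iic]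
  exact and_congr_left' (forall₂_congr fun i hi => by rw [h i hi])

lemma visitsBeforeExit_eq_tsum_indicator (D : Set (V d)) (z : V d) (ω : ℕ → V d) :
    visitsBeforeExit D z ω = ∑' t, (visitBeforeExit D t z).indicator 1 ω := by
  simp only [visitsBeforeExit, visitBeforeExit, Set.indicator_apply, Set.mem_ofPred_eq,
    Pi.one_apply]

lemma lintegral_visitsBeforeExit_cond (ν : Measure (ℕ → V d)) (D : Set (V d)) (z : V d)
    (A : Set (ℕ → V d)) : ∫⁻ ω, visitsBeforeExit D z ω ∂ProbabilityTheory.cond ν A =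
      (ν A)⁻¹ * ∑' t, ν (visitBeforeExit D t z ∩ A) := by
  have hmeas := fun t => (decidedBy_visitBeforeExit D t z).measurableSet
  simp only [visitsBeforeExit_eq_tsum_indicator, ProbabilityTheory.cond, lintegral_smul_measure,
    smul_eq_mul]
  rw [lintegral_tsum fun t => (measurable_one.indicator (hmeas t)).aemeasurable]
  simp only [lintegral_indicator_one (hmeas _), Measure.restrict_apply (hmeas _)]

lemma mem_visitBeforeExit_inter {D K : Set (V d)} {t : ℕ} {z : V d} {ω : ℕ → V d} (h : ω 0 ∈ D)
    (hvisit : ω ∈ killedVisit (D \ K) t z) (havoid : avoidBeforeExit D K (pathShift t ω)) :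
    ω ∈ visitBeforeExit D t z ∩ {ω | avoidBeforeExitPos D K ω} := by
  have hD : ∀ i ≤ t, ω i ∈ D := fun i hi => by
    obtain rfl | hpos := Nat.eq_zero_or_pos i
    · exact h
    · exact (hvisit.2 i hpos hi).1
  refine ⟨⟨lt_exitTimeE_iff.2 hD, hvisit.1⟩, fun j hj hexit => ?_⟩
  obtain hle | hlt := le_or_gt j t
  · exact (hvisit.2 j hj hle).2
  · obtain ⟨k, rfl⟩ := Nat.exists_eq_add_of_le hlt.le
    rw [le_exitTimeE_iff] at hexit
    exact havoid k (le_exitTimeE_iff.2 fun i hi => hexit (t + i) (by omega))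

namespace IsSRWLaw

variable {ν : Measure (ℕ → V d)} {x : V d} {D K : Set (V d)}

lemma ofReal_killedHeat_mul_escapeProb_le [NeZero d] (hν : IsSRWLaw ν x) (hx : x ∈ D) (t : ℕ)
    (z : V d) : ENNReal.ofReal (killedHeat (D \ K) x t z * escapeProb D K z) ≤
      ν (visitBeforeExit D t z ∩ {ω | avoidBeforeExitPos D K ω}) := by
  have := hν.1
  rw [mul_comm, ← hν.measureReal_killedVisit, ← hν.measureReal_inter_avoidBeforeExit D K
    (decidedBy_killedVisit (D \ K) t z) fun _ h => h.1, ofReal_measureReal]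
  refine measure_mono_ae ?_
  filter_upwards [hν.ae_nearest_neighbour] with ω hω hvisit
  exact mem_visitBeforeExit_inter (hω.1.symm ▸ hx) hvisit.1 hvisit.2

lemma ofReal_green_mul_escapeProb_le [Fact (3 ≤ d)] (hν : IsSRWLaw ν x) (hx : x ∈ D) (z : V d) :
    ENNReal.ofReal (green (D \ K) x z * escapeProb D K z) ≤
      ∑' t, ν (visitBeforeExit D t z ∩ {ω | avoidBeforeExitPos D K ω}) := by
  rw [green, ← tsum_mul_right, ENNReal.ofReal_tsum_of_nonneg
    (fun t => mul_nonneg (killedHeat_nonneg _ _ _ _) (escapeProb_nonneg D K z))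
    ((summable_killedHeat _ _ _).mul_right _)]
  exact ENNReal.tsum_le_tsum fun t => hν.ofReal_killedHeat_mul_escapeProb_le hx t z

/-- Splitting a visit to `z` before the exit into the path up to that visit, killed on `K`, and
the escape after it bounds the Green function of the conditioned walk from below. -/
lemma ofReal_green_mul_escapeProb_div_le [Fact (3 ≤ d)] (hν : IsSRWLaw ν x) (hx : x ∈ D)
    (hpos : 0 < avg (escapeProb D K) x) (z : V d) :
    ENNReal.ofReal (green (D \ K) x z * escapeProb D K z / avg (escapeProb D K) x) ≤
      ∫⁻ ω, visitsBeforeExit D z ω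
        ∂ProbabilityTheory.cond ν {ω | avoidBeforeExitPos D K ω} := by
  have := hν.1
  rw [lintegral_visitsBeforeExit_cond, ENNReal.ofReal_div_of_pos hpos, ENNReal.div_eq_inv_mul,
    ← hν.measureReal_avoidBeforeExitPos hx, ofReal_measureReal]
  gcongr
  exact hν.ofReal_green_mul_escapeProb_le hx z

lemma measure_avoidBeforeExitPos_ne_zero [NeZero d] (hν : IsSRWLaw ν x) (hx : x ∈ D)
    (hpos : 0 < avg (escapeProb D K) x) : ν {ω | avoidBeforeExitPos D K ω} ≠ 0 := fun h₀ => by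
  rw [← hν.measureReal_avoidBeforeExitPos hx, measureReal_def, h₀] at hpos
  exact lt_irrefl 0 hpos

lemma one_le_lintegral_visitsBeforeExit [NeZero d] (hν : IsSRWLaw ν x) (hx : x ∈ D)
    {A : Set (ℕ → V d)} (hA : ν A ≠ 0) :
    1 ≤ ∫⁻ ω, visitsBeforeExit D x ω ∂ProbabilityTheory.cond ν A := by
  have := hν.1
  have := ProbabilityTheory.cond_isProbabilityMeasure hA
  refine le_of_eq_of_le (by rw [lintegral_one, measure_univ] : (1 : ℝ≥0∞) =
    ∫⁻ _, 1 ∂ProbabilityTheory.cond ν A) (lintegral_mono_ae ?_)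
  filter_upwards [ProbabilityTheory.cond_absolutelyContinuous.ae_le hν.ae_nearest_neighbour]
    with ω hω
  have hvisit : ω ∈ visitBeforeExit D 0 x :=
    ⟨lt_exitTimeE_iff.2 fun i hi => by rwa [Nat.le_zero.1 hi, hω.1], hω.1⟩
  rw [visitsBeforeExit_eq_tsum_indicator]
  exact le_of_eq_of_le (by rw [Set.indicator_of_mem hvisit, Pi.one_apply]) (ENNReal.le_tsum 0)

end IsSRWLaw

/-! ### The initial segment of the loop erasure -/

lemma IsSRWLaw.ae_finite_visits [Fact (3 ≤ d)] {μ : Measure (ℕ → V d)} {x : V d}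
    (hμ : IsSRWLaw μ x) : ∀ᵐ ω ∂μ, ∀ v, {t | ω t = v}.Finite := by
  have := hμ.1
  refine ae_all_iff.2 fun v =>
    ae_finite_setOfPred_mem (s := fun t => ({ω | ω t = v} : Set (ℕ → V d))) ?_
  have hvisit : ∀ t, μ {ω : ℕ → V d | ω t = v} =
      ENNReal.ofReal (killedHeat Set.univ x t v) := fun t => by
    rw [← hμ.measureReal_killedVisit, ofReal_measureReal]
    simp only [killedVisit, Set.mem_univ, implies_true, and_true]
  simp only [hvisit]
  rw [← ENNReal.ofReal_tsum_of_nonneg (fun t => killedHeat_nonneg _ _ _ _)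
    (summable_killedHeat _ _ _)]
  exact ENNReal.ofReal_ne_top

lemma stopAt_of_le {D : Set (V d)} {ω : ℕ → V d} {t : ℕ} (h : (t : ENat) ≤ exitTimeE D ω) :
    stopAt D ω t = ω t :=
  if_pos h

lemma stopAt_of_exitTimeE_le {D : Set (V d)} {ω : ℕ → V d} {k t : ℕ}
    (hk : exitTimeE D ω = k) (h : k ≤ t) : stopAt D ω t = ω k := by
  simp only [stopAt, exitTime, hk, ENat.toNat_natCast, Nat.cast_le]
  split_ifs with hle
  · rw [le_antisymm hle h]
  · rfl

lemma notMem_of_exitTimeE_eq {D : Set (V d)} {ω : ℕ → V d} {k : ℕ} (hk : exitTimeE D ω = k) :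
    ω k ∉ D := fun hD =>
  lt_irrefl (k : ENat) <| (lt_exitTimeE_iff.2 fun i hi => by
    obtain rfl | hlt := eq_or_lt_of_le hi
    · exact hD
    · exact le_exitTimeE_iff.1 hk.ge i hlt).trans_eq hk

lemma stopAt_eq_or_notMem (D : Set (V d)) (ω : ℕ → V d) (t : ℕ) :
    stopAt D ω t = ω t ∨ stopAt D ω t ∉ D := by
  by_cases h : (t : ENat) ≤ exitTimeE D ω
  · exact Or.inl (stopAt_of_le h)
  · obtain ⟨k, hk⟩ := ENat.ne_top_iff_exists.1 (ne_top_of_lt (not_le.1 h))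
    rw [stopAt_of_exitTimeE_le hk.symm (by rw [← hk, Nat.cast_le] at h; omega)]
    exact Or.inr (notMem_of_exitTimeE_eq hk.symm)

lemma stopAt_succ (D : Set (V d)) (ω : ℕ → V d) (t : ℕ) :
    stopAt D ω (t + 1) = stopAt D ω t ∨ stopAt D ω t = ω t ∧ stopAt D ω (t + 1) = ω (t + 1) := by
  by_cases h : ((t + 1 : ℕ) : ENat) ≤ exitTimeE D ω
  · exact Or.inr ⟨stopAt_of_le ((Nat.cast_le.2 t.le_succ).trans h), stopAt_of_le h⟩
  · obtain ⟨k, hk⟩ := ENat.ne_top_iff_exists.1 (ne_top_of_lt (not_le.1 h))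
    have hkt : k ≤ t := by rw [← hk, Nat.cast_le] at h; omega
    exact Or.inl (by rw [stopAt_of_exitTimeE_le hk.symm hkt,
      stopAt_of_exitTimeE_le hk.symm (hkt.trans t.le_succ)])

lemma le_lastVisit {σ : ℕ → V d} {t : ℕ} (h : {j | σ j = σ t}.Finite) : t ≤ lastVisit σ t :=
  le_csSup (h.subset fun _ hj => hj.2).bddAbove ⟨le_rfl, rfl⟩

/-- If `σ` visits `σ t` infinitely often, `lastVisit σ t` takes the junk value `0`. -/
lemma apply_lastVisit_eq_or (σ : ℕ → V d) (t : ℕ) :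
    σ (lastVisit σ t) = σ t ∨ σ (lastVisit σ t) = σ 0 := by
  by_cases h : BddAbove {j | t ≤ j ∧ σ j = σ t}
  · exact Or.inl (Nat.sSup_mem (s := {j | t ≤ j ∧ σ j = σ t}) ⟨t, le_rfl, rfl⟩ h).2
  · exact Or.inr (congrArg σ (Nat.sSup_of_not_bddAbove h))

/-- The path makes nearest-neighbour steps, except that it may stay put. -/
def IsLazyPath (σ : ℕ → V d) : Prop := ∀ t, σ (t + 1) = σ t ∨ adj (σ t) (σ (t + 1))

lemma isLazyPath_stopAt (D : Set (V d)) {ω : ℕ → V d}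
    (hω : ∀ i, ∃ p, ω (i + 1) = ω i + step p) : IsLazyPath (stopAt D ω) := fun t =>
  (stopAt_succ D ω t).imp_right fun ⟨ht, ht'⟩ => by
    obtain ⟨p, hp⟩ := hω t
    rw [ht, ht', hp]
    exact adj_add_step _ p

namespace IsLazyPath

variable {σ : ℕ → V d} {B : Set (V d)}

lemma apply_leTime_succ_mem (hσ : IsLazyPath σ) {k : ℕ} (hk : infLoopErase σ k ∈ B)
    (hbdry : infLoopErase σ k ∉ innerBdry B) : σ (leTime σ k + 1) ∈ B := by
  obtain h | h := hσ (leTime σ k)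
  · rwa [h]
  · by_contra hout
    exact hbdry ⟨hk, _, h, hout⟩

lemma infLoopErase_mem (hσ : IsLazyPath σ) (h₀ : σ 0 ∈ B) {k : ℕ}
    (hk : ∀ j < k, infLoopErase σ j ∉ innerBdry B) : infLoopErase σ k ∈ B := by
  induction k with
  | zero =>
    have : infLoopErase σ 0 = σ 0 := (apply_lastVisit_eq_or σ 0).elim id id
    rwa [this]
  | succ k ih =>
    have hnext := hσ.apply_leTime_succ_mem (ih fun j hj => hk j (by omega)) (hk k (by omega))
    obtain h | h := apply_lastVisit_eq_or σ (leTime σ k + 1)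
    · exact Set.mem_of_eq_of_mem h hnext
    · exact Set.mem_of_eq_of_mem h h₀

lemma exists_infLoopErase_mem_innerBdry (hσ : IsLazyPath σ) (h₀ : σ 0 ∈ B)
    (hfin : {t | σ t ∈ B}.Finite) : ∃ k, infLoopErase σ k ∈ innerBdry B := by
  by_contra! hno
  have hmem : ∀ k, infLoopErase σ k ∈ B := fun k => hσ.infLoopErase_mem h₀ fun j _ => hno j
  have hmono : StrictMono (leTime σ) := strictMono_nat_of_lt_succ fun k =>
    le_lastVisit (hfin.subset fun j (hj : σ j = σ (leTime σ k + 1)) =>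
      show σ j ∈ B from hj ▸ hσ.apply_leTime_succ_mem (hmem k) (hno k))
  exact Set.infinite_range_of_injective hmono.injective
    (hfin.subset (Set.range_subset_iff.2 hmem))

end IsLazyPath

lemma hitIdx_eq_find {A : Set (V d)} {γ : ℕ → V d} (h : ∃ j, γ j ∈ A) :
    hitIdx A γ = Nat.find h := by
  rw [hitIdx, hitTimeE, dif_pos h, ENat.toNat_natCast]

lemma endPt_alphaList (D : Set (V d)) (n : ℕ) (ω : ℕ → V d) :
    endPt (alphaList D n ω) = lerw D ω (hitIdx (innerBdry (cube 0 n)) (lerw D ω)) := by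
  simp [endPt, alphaList, List.range_succ]

lemma mem_alphaList {D : Set (V d)} {n : ℕ} {ω : ℕ → V d} {v : V d} : v ∈ alphaList D n ω ↔
    ∃ j ≤ hitIdx (innerBdry (cube 0 n)) (lerw D ω), lerw D ω j = v := by
  simp [alphaList]

lemma alphaList_spec {D : Set (V d)} {n : ℕ} (hD : cube 0 n ⊆ D) {ω : ℕ → V d} (h₀ : ω 0 = 0)
    (hω : ∀ i, ∃ p, ω (i + 1) = ω i + step p) (hfin : ∀ v, {t | ω t = v}.Finite) :
    endPt (alphaList D n ω) ∈ innerBdry (cube 0 n) ∧ endPt (alphaList D n ω) ∈ alphaList D n ω ∧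
      {v | v ∈ alphaList D n ω} ⊆ cube 0 n := by
  have hlazy := isLazyPath_stopAt D hω
  have hstart : stopAt D ω 0 ∈ cube 0 n := by
    rw [stopAt_of_le (by simp), h₀]
    exact self_mem_cube 0 n
  have hfinite : {t | stopAt D ω t ∈ cube 0 n}.Finite :=
    ((cube_finite 0 n).preimage' fun v _ => hfin v).subset
      fun t (ht : stopAt D ω t ∈ cube 0 n) => show ω t ∈ cube 0 n from
        (stopAt_eq_or_notMem D ω t).resolve_right (fun h => h (hD ht)) ▸ ht
  have hhit := hlazy.exists_infLoopErase_mem_innerBdry hstart hfinite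
  have hidx : hitIdx (innerBdry (cube 0 n)) (lerw D ω) = Nat.find hhit := hitIdx_eq_find hhit
  refine ⟨?_, mem_alphaList.2 ⟨_, le_rfl, (endPt_alphaList D n ω).symm⟩, fun v hv => ?_⟩
  · rw [endPt_alphaList, hidx]
    exact Nat.find_spec hhit
  · obtain ⟨j, hj, rfl⟩ := mem_alphaList.1 hv
    exact hlazy.infLoopErase_mem hstart fun i hi =>
      Nat.find_min hhit (hi.trans_le (hj.trans hidx.le))

lemma exists_abs_eq_of_mem_innerBdry_cube {n : ℕ} {x : V d} (h : x ∈ innerBdry (cube 0 n)) :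
    ∃ i, |x i| = (n : ℤ) := by
  obtain ⟨hx, y, hxy, hy⟩ := h
  obtain ⟨i, hi⟩ := not_forall.1 (mt mem_cube_zero_iff.2 hy)
  have hle : |x i - y i| ≤ 1 :=
    hxy ▸ Finset.single_le_sum (f := fun i => |x i - y i|) (fun _ _ => abs_nonneg _)
      (Finset.mem_univ i)
  have hxi := mem_cube_zero_iff.1 hx i
  have hyi := abs_sub_abs_le_abs_sub (y i) (x i)
  rw [abs_sub_comm] at hyi
  exact ⟨i, by omega⟩

lemma exists_faceDir_eq_step {n : ℕ} {x : V d} (h : ∃ i, |x i| = (n : ℤ)) :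
    ∃ p, height p x = n ∧ faceDir x n = step p := by
  have hi := h.choose_spec
  set i := h.choose
  refine ⟨(i, if 0 ≤ x i then 1 else -1), ?_, ?_⟩
  · rw [← hi, height]
    split_ifs with hsign
    · rw [abs_of_nonneg hsign, Units.val_one, one_mul]
    · rw [abs_of_neg (not_le.1 hsign), Units.val_neg, Units.val_one, neg_one_mul]
  · rw [faceDir, dif_pos h]
    funext j
    rw [step, Pi.single_apply]
    split_ifs <;> rfl

/-- For `m = 1` the box is `{x₀}`, which is not in front of the face. -/
lemma mem_frontRegion_of_mem_boxA {n m : ℕ} {x₀ z : V d} {p : Fin d × ℤˣ} (hm : 2 ≤ m)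
    (hface : faceDir x₀ n = step p) (hz : z ∈ boxA x₀ n m) : z ∈ frontRegion p x₀ m := by
  rw [boxA, x1pt, hface] at hz
  refine ⟨mem_cube_trans (add_zsmul_step_mem_cube x₀ (m / 2) p) hz (by omega), ?_⟩
  have hheight := (abs_le.1 ((abs_height_sub p _ _).trans_le (hz p.1))).1
  rw [height_add, height_zsmul_step] at hheight
  omega

lemma boxA_one (x₀ : V d) (n : ℕ) : boxA x₀ n 1 = {x₀} := by
  ext z
  simp [boxA, x1pt, cube, sub_eq_zero, funext_iff]

/-- Any value taken by `α` with positive probability is a shell configuration. -/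
lemma exists_shellSetup [Fact (3 ≤ d)] {N n m : ℕ} {D : Set (V d)} (hm : 1 ≤ m) (hmn : 8 * m ≤ n)
    (hn : 16 ≤ n) (hN : n + m ≤ N) (hD : cube 0 (4 * N) ⊆ D) {μ : Measure (ℕ → V d)}
    (hμ : IsSRWLaw μ 0) {a : List (V d)} (ha : μ {ω | alphaList D n ω = a} ≠ 0) :
    ∃ p, ShellSetup N n m D {v | v ∈ a} p (endPt a) ∧ faceDir (endPt a) n = step p := by
  obtain ⟨ω, rfl, ⟨h₀, hω⟩, hfin⟩ := ((frequently_ae_mem_iff.2 ha).and_eventually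
    (hμ.ae_nearest_neighbour.and hμ.ae_finite_visits)).exists
  obtain ⟨hbdry, hmem, hsub⟩ :=
    alphaList_spec ((cube_mono (by omega : n ≤ 4 * N)).trans hD) h₀ hω hfin
  obtain ⟨p, hheight, hface⟩ :=
    exists_faceDir_eq_step (exists_abs_eq_of_mem_innerBdry_cube hbdry)
  exact ⟨p, ⟨hm, hmn, hn, hN, hD, hsub, hmem, hheight⟩, hface⟩

lemma ShellSetup.mem_domain {N n m : ℕ} {D K : Set (V d)} {p : Fin d × ℤˣ} {x₀ : V d}
    (h : ShellSetup N n m D K p x₀) : x₀ ∈ D :=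
  h.cube_subset (cube_mono (by linarith [h.add_le]) (h.subset_cube h.mem))

/-- Lemma 3.7.  Let `d ≥ 3`, and adopt the shell setup (`Q_{4N} ⊆ D`,
`16 ≤ n < n+m ≤ N`, `m ≤ n/8`, `α` the initial segment of the LERW up to the first
hit of `∂ᵢ Q_n`, with endpoint `x₀`, and `A` the box `Q(x₀ + (m/2)e₁, m/4)` suitably
rotated).  Let `X̃` be SRW from `x₀` conditioned on `{τ_D < T⁺_α}` and `G̃_D` its Green
function in `D`.  Then there is `c = c(d) > 0` with `G̃_D(x₀,z) ≥ c m^{2-d}` for all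
`z ∈ A`. -/
theorem conditioned_green_lower_bound :
    ∀ d : ℕ, 3 ≤ d → ∃ c : ℝ, 0 < c ∧
      ∀ (N n m : ℕ) (D : Set (V d)),
        1 ≤ N → cube 0 (4 * N) ⊆ D → 16 ≤ n → n < n + m → n + m ≤ N → m ≤ n / 8 →
        ∀ μ : Measure (ℕ → V d), IsSRWLaw μ 0 →
        ∀ a : List (V d), μ { ω | alphaList D n ω = a } ≠ 0 →
        ∀ ν : Measure (ℕ → V d), IsSRWLaw ν (endPt a) →
        ∀ z ∈ boxA (endPt a) n m,
          ENNReal.ofReal (c * (m : ℝ) ^ ((2 : ℤ) - (d : ℤ))) ≤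
            ∫⁻ ω, visitsBeforeExit D z ω
              ∂(ProbabilityTheory.cond ν { ω | avoidBeforeExitPos D { v | v ∈ a } ω }) := by
  intro d hd
  have : Fact (3 ≤ d) := ⟨hd⟩
  obtain ⟨C, hC, hbound⟩ := ShellSetup.exists_zpow_mul_avg_escapeProb_le d
  have hC₀ : 0 < C := zero_lt_one.trans_le hC
  refine ⟨C⁻¹, inv_pos.2 hC₀, ?_⟩
  intro N n m D _ hD hn hm hN hmn μ hμ a ha ν hν z hz
  obtain ⟨p, hshell, hface⟩ := exists_shellSetup (by omega) (by omega) hn hN hD hμ ha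
  have hpos := hshell.avg_escapeProb_pos
  obtain rfl | hm₂ : m = 1 ∨ 2 ≤ m := by omega
  · rw [boxA_one, Set.mem_singleton_iff] at hz
    rw [hz, Nat.cast_one, one_zpow, mul_one]
    exact (ENNReal.ofReal_le_one.2 (inv_le_one_of_one_le₀ hC)).trans
      (hν.one_le_lintegral_visitsBeforeExit hshell.mem_domain
        (hν.measure_avoidBeforeExitPos_ne_zero hshell.mem_domain hpos))
  · refine le_trans (ENNReal.ofReal_le_ofReal ?_)
      (hν.ofReal_green_mul_escapeProb_div_le hshell.mem_domain hpos z)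
    rw [le_div_iff₀ hpos, mul_assoc, inv_mul_le_iff₀ hC₀]
    exact hbound hshell z (mem_frontRegion_of_mem_boxA hm₂ hface hz)

end USFPaper
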